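/- arXiv:2511.21571 — 2 statements merged into one kernel-verified Lean document; each statement's English description precedes it below -/
import Mathlib

section
/- Let d ↦ (R(m,d))_{m} be any family of graphs, where R(m,d) has vertex set {0,1}^d × [m], such that for every d ∈ ℕ and every ε > 0 there exists m₀ with: for all m ≥ m₀, R(m,d) satisfies property (i) and property (ii) with accuracy ε. Then for every ordered graph F and every ε > 0 there exists d₀ such that for every d ≥ d₀ there exists m₁ such that for every m ≥ m₁ one has ρ_<(F) ≤ ρ_<(F, R(m,d)) ≤ ρ_<(F) + ε; that is, lim_{d→∞} lim_{m→∞} ρ_<(F, R(m,d)) = ρ_<(F). -/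
/-!
The lower bound holds for every finite ordered host: by `UHost.relTuranDensity_le` each such host is
isomorphic to one on `Fin N`, and property (i) provides an edge.

For the upper bound, fix an ordered graph `G` on `Fin n` with `ρ_<(F, G) < ρ_<(F) + ε / 2` and let
`S` be a subgraph of `R(m, d)` with more than `(ρ_<(F) + ε) e(R)` edges. It suffices to find an
ordered map from `G` to the vertices of `S` under which more than a proportion `ρ_<(F, G)` of the
edges of `G` become edges of `S`: these edges cannot form an `F`-free subgraph of `G`, so `S`
contains `F` (`UHost.preserved_le`). The map is found in two steps.

*Choosing blocks.* Give a pair of blocks branching at level `ℓ` the weight `2 ^ (d - ℓ)` times the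
density of `S` between them. By property (i) all levels have about equally many edges, so a random
branching pair at a random level has average weight at least about `ρ_<(F) + ε`
(`UHost.expect_bw_ge`). A random comb consists of `n` leaves branching off a random spine, in
increasing order, at levels spread over `n` short consecutive windows following a random base. Each
pair of leaves is distributed almost like a random branching pair; the only
difference is that boundedly many bits are forced, and forcing a bit at a random position changes
the average of a bounded function very little, because the relevant signs are uncorrelated
(`UHost.expect_random_update`). Hence some comb has weight at least about `(ρ_<(F) + ε) e(G)` on
the edges of `G` (`UHost.exists_comb`).

*Choosing vertices in the blocks.* By an energy increment there are large subsets of the chosen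
blocks, without significant loss of total weight, such that all pairs of non-negligible weight are
lower regular (`UHost.exists_regular_box`). By property (ii) every pair has weight at most about
`1`, so the number of non-negligible pairs is at least about the total weight, and all of them can
be realised at once by a greedy embedding (`UHost.exists_weighted_embedding`).
-/

open scoped Classical

/-- `G` contains an ordered copy of `F`: a strictly order-preserving map
sending edges to edges. -/
def ContainsOrderedCopy {α β : Type*} [Preorder α] [Preorder β]
    (F : SimpleGraph α) (G : SimpleGraph β) : Prop :=
  ∃ φ : α → β, StrictMono φ ∧ ∀ u v, F.Adj u v → G.Adj (φ u) (φ v)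

/-- The number of edges of a simple graph. -/
noncomputable def edgeCount {α : Type*} (G : SimpleGraph α) : ℕ := G.edgeSet.ncard

/-- `ρ_<(F, G)`: the largest edge-density of an `F`-free (ordered) subgraph of `G`. -/
noncomputable def relTuranDensityIn {α β : Type*} [Preorder α] [Preorder β]
    (F : SimpleGraph α) (G : SimpleGraph β) : ℝ :=
  sSup {r : ℝ | ∃ G' : G.Subgraph, ¬ ContainsOrderedCopy F G'.coe ∧
    r = (edgeCount G'.coe : ℝ) / (edgeCount G : ℝ)}

/-- `ρ_<(F)`: the relative Turán density of an ordered graph `F`, the infimum of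
`ρ_<(F, G)` over all finite ordered graphs `G` with at least one edge. -/
noncomputable def relTuranDensity {α : Type*} [Preorder α] (F : SimpleGraph α) : ℝ :=
  sInf {r : ℝ | ∃ (n : ℕ) (G : SimpleGraph (Fin n)),
    1 ≤ edgeCount G ∧ r = relTuranDensityIn F G}

/-- The cube `{0,1}^d`, ordered lexicographically (index `0` most significant). -/
abbrev Cube (d : ℕ) := Lex (Fin d → Bool)

noncomputable instance (priority := 2000) (d : ℕ) : LinearOrder (Cube d) :=
  haveI : WellFoundedLT (Fin d) := inferInstance
  inferInstance

instance instFintypeLexSelf {α : Type*} [Fintype α] : Fintype (Lex α) := ‹Fintype α›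

/-- `δ(x, y) = ℓ`, with positions `1`-indexed: the least (1-indexed) coordinate at which
`x` and `y` differ is `ℓ`. -/
def atLevel {d : ℕ} (ℓ : ℕ) (x y : Cube d) : Prop :=
  ∃ i : Fin d, (i : ℕ) + 1 = ℓ ∧ ofLex x i ≠ ofLex y i ∧ ∀ j < i, ofLex x j = ofLex y j

/-- `e_ℓ(G)`: the number of level-`ℓ` edges of a graph `G` on `{0,1}^d`. -/
noncomputable def levelCount {d : ℕ} (G : SimpleGraph (Cube d)) (ℓ : ℕ) : ℕ :=
  {p : Cube d × Cube d | p.1 < p.2 ∧ G.Adj p.1 p.2 ∧ atLevel ℓ p.1 p.2}.ncard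

/-- `τ_{ℓ,d} = 2 ^ (2d - ℓ - 1)`. -/
def tau (d ℓ : ℕ) : ℕ := 2 ^ (2 * d - ℓ - 1)

/-- The level `ℓ` is `α`-rich with respect to `G`, i.e. `e_ℓ(G) ≥ α · τ_{ℓ,d}`. -/
def IsRichLevel {d : ℕ} (G : SimpleGraph (Cube d)) (α : ℝ) (ℓ : ℕ) : Prop :=
  α * (tau d ℓ : ℝ) ≤ (levelCount G ℓ : ℝ)

/-- `G` is `(α, C)`-rich: at least `C` levels `ℓ ∈ [d]` are `α`-rich. -/
def IsRichGraph {d : ℕ} (G : SimpleGraph (Cube d)) (α C : ℝ) : Prop :=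
  C ≤ ({ℓ : ℕ | ℓ ∈ Finset.Icc 1 d ∧ IsRichLevel G α ℓ}.ncard : ℝ)

/-- The vertex set `{0,1}^d × [m]`, ordered lexicographically. -/
abbrev BlockVert (d m : ℕ) := Lex (Cube d × Fin m)

/-- `e_ℓ(R)` for a graph `R` on `{0,1}^d × [m]`: the number of edges whose endpoints lie in
blocks `B_x`, `B_y` with `δ(x,y) = ℓ`. -/
noncomputable def levelCountB {d m : ℕ} (R : SimpleGraph (BlockVert d m)) (ℓ : ℕ) : ℕ :=
  {p : BlockVert d m × BlockVert d m |
    p.1 < p.2 ∧ R.Adj p.1 p.2 ∧ atLevel ℓ (ofLex p.1).1 (ofLex p.2).1}.ncard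

/-- Property (i) with accuracy `ε`: every level `ℓ ∈ [d]` has
`(1−ε)·2^(d−1)·m² ≤ e_ℓ(R) ≤ (1+ε)·2^(d−1)·m²`. -/
def PropI {d m : ℕ} (R : SimpleGraph (BlockVert d m)) (ε : ℝ) : Prop :=
  ∀ ℓ ∈ Finset.Icc 1 d,
    (1 - ε) * 2 ^ (d - 1) * (m : ℝ) ^ 2 ≤ (levelCountB R ℓ : ℝ) ∧
    (levelCountB R ℓ : ℝ) ≤ (1 + ε) * 2 ^ (d - 1) * (m : ℝ) ^ 2

/-- Property (ii) with accuracy `ε`: for all distinct `x, y ∈ {0,1}^d` (say `δ(x,y) = ℓ`) and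
all `P ⊆ B_x`, `Q ⊆ B_y` of size at least `m^(2/3)`, the number of edges of `R` between `P`
and `Q` is at most `(1+ε)·2^(−d+ℓ)·|P|·|Q|`. -/
def PropII {d m : ℕ} (R : SimpleGraph (BlockVert d m)) (ε : ℝ) : Prop :=
  ∀ (x y : Cube d) (ℓ : ℕ), atLevel ℓ x y →
    ∀ P Q : Finset (Fin m),
      (m : ℝ) ^ ((2 : ℝ)/3) ≤ (P.card : ℝ) → (m : ℝ) ^ ((2 : ℝ)/3) ≤ (Q.card : ℝ) →
      ({pq : Fin m × Fin m | pq.1 ∈ P ∧ pq.2 ∈ Q ∧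
          R.Adj (toLex (x, pq.1)) (toLex (y, pq.2))}.ncard : ℝ) ≤
        (1 + ε) * 2 ^ ((ℓ : ℤ) - (d : ℤ)) * (P.card : ℝ) * (Q.card : ℝ)

/-- `F` contains a monotone path of length two: vertices `u < v < w` with
`uv, vw ∈ E(F)`. -/
def HasMonotonePathTwo {α : Type*} [Preorder α] (F : SimpleGraph α) : Prop :=
  ∃ u v w, u < v ∧ v < w ∧ F.Adj u v ∧ F.Adj v w

/-- The ordered graph `H_k` on `[k] × {0,1}` (ordered lexicographically), with edges
`(x,0)(y,1)` for `x ≤ y`. -/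
def Hgraph (k : ℕ) : SimpleGraph (Lex (Fin k × Bool)) :=
  SimpleGraph.fromRel (fun a b =>
    (ofLex a).2 = false ∧ (ofLex b).2 = true ∧ (ofLex a).1 ≤ (ofLex b).1)

namespace UHost

open scoped BigOperators

/-! ### Densities and the energy of a box -/

/-- The number of adjacent pairs in `A × B`, as a real number. -/
noncomputable def cnt {W : Type*} (S : SimpleGraph W) (A B : Finset W) : ℝ :=
  ∑ a ∈ A, ∑ b ∈ B, if S.Adj a b then (1 : ℝ) else 0

/-- The density of adjacent pairs in `A × B`; it is `0` if `A` or `B` is empty. -/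
noncomputable def dens {W : Type*} (S : SimpleGraph W) (A B : Finset W) : ℝ :=
  cnt S A B / ((A.card : ℝ) * B.card)

section box
variable {W : Type*} (S : SimpleGraph W)

lemma cnt_comm (A B : Finset W) : cnt S A B = cnt S B A := by
  unfold cnt
  rw [Finset.sum_comm]
  simp only [S.adj_comm]

lemma cnt_nonneg (A B : Finset W) : 0 ≤ cnt S A B :=
  Finset.sum_nonneg fun _ _ => Finset.sum_nonneg fun _ _ => by split_ifs <;> norm_num

lemma cnt_le (A B : Finset W) : cnt S A B ≤ (A.card : ℝ) * B.card := by
  calc cnt S A B ≤ ∑ a ∈ A, ∑ b ∈ B, (1 : ℝ) :=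
        Finset.sum_le_sum fun _ _ => Finset.sum_le_sum fun _ _ => by split_ifs <;> norm_num
    _ = _ := by simp

lemma dens_comm (A B : Finset W) : dens S A B = dens S B A := by
  unfold dens; rw [cnt_comm, mul_comm]

lemma dens_nonneg (A B : Finset W) : 0 ≤ dens S A B :=
  div_nonneg (cnt_nonneg S A B) (by positivity)

lemma dens_le_one (A B : Finset W) : dens S A B ≤ 1 :=
  div_le_one_of_le₀ (cnt_le S A B) (by positivity)

lemma card_mul_dens (A B : Finset W) : (A.card : ℝ) * dens S A B = cnt S A B / B.card := by
  unfold dens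
  rcases A.eq_empty_or_nonempty with rfl | hA
  · simp [cnt]
  · have : (A.card : ℝ) ≠ 0 := by exact_mod_cast hA.card_pos.ne'
    field_simp

lemma cnt_add {A X : Finset W} (B : Finset W) (hX : X ⊆ A) :
    cnt S X B + cnt S (A \ X) B = cnt S A B := by
  unfold cnt
  rw [add_comm, Finset.sum_sdiff hX]

/-- The density over `A` is the average of the densities over the two parts of `A`. -/
lemma dens_split {A X : Finset W} (B : Finset W) (hX : X ⊆ A) (hA : A.Nonempty) :
    (X.card : ℝ) / A.card * dens S X B + ((A \ X).card : ℝ) / A.card * dens S (A \ X) B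
      = dens S A B := by
  have hA' : (A.card : ℝ) ≠ 0 := by exact_mod_cast hA.card_pos.ne'
  have h1 := card_mul_dens S X B
  have h2 := card_mul_dens S (A \ X) B
  have h3 := card_mul_dens S A B
  have h4 := cnt_add S B hX
  rw [div_mul_eq_mul_div, div_mul_eq_mul_div, ← add_div, h1, h2, ← add_div, h4, ← h3]
  field_simp

variable {n : ℕ}

/-- The normalised density of the pair `(P i, P j)`, `e = (i, j)`: the density of `S` divided by a
reference density `1 / a e`. -/
noncomputable def wt (a : Fin n × Fin n → ℝ) (P : Fin n → Finset W) (e : Fin n × Fin n) : ℝ :=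
  a e * dens S (P e.1) (P e.2)

/-- The energy of a box `P`: the normalised densities plus `τ` times their squares, summed over
`D`. The linear term makes sure that passing to a box of larger energy loses little total density. -/
noncomputable def energy (a : Fin n × Fin n → ℝ) (D : Finset (Fin n × Fin n)) (τ : ℝ)
    (P : Fin n → Finset W) : ℝ :=
  ∑ e ∈ D, (wt S a P e + τ * wt S a P e ^ 2)

/-- Normalised densities average correctly when one part of the box is split in two. -/
lemma wt_split (a : Fin n × Fin n → ℝ) (P : Fin n → Finset W) (e : Fin n × Fin n)
    (he : e.1 ≠ e.2) (i : Fin n) {X : Finset W} (hX : X ⊆ P i) (hP : (P i).Nonempty) :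
    (X.card : ℝ) / (P i).card * wt S a (Function.update P i X) e
      + ((P i \ X).card : ℝ) / (P i).card * wt S a (Function.update P i (P i \ X)) e
      = wt S a P e := by
  have hs := fun B => dens_split S B hX hP
  have hone : (X.card : ℝ) / (P i).card + ((P i \ X).card : ℝ) / (P i).card = 1 := by
    have hA' : ((P i).card : ℝ) ≠ 0 := by exact_mod_cast hP.card_pos.ne'
    rw [← add_div, div_eq_one_iff_eq hA']
    have := Finset.card_sdiff_add_card_eq_card hX
    rw [← this]; push_cast; ring
  unfold wt
  by_cases h1 : e.1 = i
  · have h2 : e.2 ≠ i := fun h => he (h1.trans h.symm)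
    subst h1
    rw [Function.update_self, Function.update_self, Function.update_of_ne h2,
      Function.update_of_ne h2, ← hs (P e.2)]
    ring
  · by_cases h2 : e.2 = i
    · subst h2
      rw [Function.update_self, Function.update_self, Function.update_of_ne h1,
        Function.update_of_ne h1, dens_comm S (P e.1) X, dens_comm S (P e.1) (P e.2 \ X),
        dens_comm S (P e.1) (P e.2), ← hs (P e.1)]
      ring
    · simp only [Function.update_of_ne h1, Function.update_of_ne h2]
      rw [← add_mul, hone, one_mul]

lemma wt_nonneg {a : Fin n × Fin n → ℝ} (ha : ∀ e, 0 ≤ a e) (P : Fin n → Finset W)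
    (e : Fin n × Fin n) : 0 ≤ wt S a P e :=
  mul_nonneg (ha e) (dens_nonneg S _ _)

lemma wt_le {a : Fin n × Fin n → ℝ} {M : ℝ} (ha : ∀ e, 0 ≤ a e) (haM : ∀ e, a e ≤ M)
    (P : Fin n → Finset W) (e : Fin n × Fin n) : wt S a P e ≤ M :=
  (mul_le_of_le_one_right (ha e) (dens_le_one S _ _)).trans (haM e)

lemma energy_nonneg {a : Fin n × Fin n → ℝ} (ha : ∀ e, 0 ≤ a e) (D : Finset (Fin n × Fin n))
    {τ : ℝ} (hτ : 0 ≤ τ) (P : Fin n → Finset W) : 0 ≤ energy S a D τ P :=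
  Finset.sum_nonneg fun e _ => by have := wt_nonneg S ha P e; positivity

lemma energy_le {a : Fin n × Fin n → ℝ} {M : ℝ} (ha : ∀ e, 0 ≤ a e) (haM : ∀ e, a e ≤ M)
    (D : Finset (Fin n × Fin n)) {τ : ℝ} (hτ : 0 ≤ τ) (P : Fin n → Finset W) :
    energy S a D τ P ≤ D.card * (M + τ * M ^ 2) := by
  unfold energy
  rw [← nsmul_eq_mul]
  refine Finset.sum_le_card_nsmul _ _ _ fun e _ => ?_
  have h0 := wt_nonneg S ha P e
  have h1 := wt_le S ha haM P e
  gcongr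

/-- Weighted Cauchy-Schwarz with a defect term. -/
lemma var_ineq {κ : Type*} (s : Finset κ) (μ f : κ → ℝ) (F : ℝ) (hμ : ∀ c ∈ s, 0 ≤ μ c)
    (h1 : ∑ c ∈ s, μ c = 1) (hF : ∑ c ∈ s, μ c * f c = F) (c₀ : κ) (hc : c₀ ∈ s) :
    F ^ 2 + μ c₀ * (f c₀ - F) ^ 2 ≤ ∑ c ∈ s, μ c * f c ^ 2 := by
  have h : ∑ c ∈ s, μ c * (f c - F) ^ 2 = ∑ c ∈ s, μ c * f c ^ 2 - F ^ 2 := by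
    have : ∀ c ∈ s, μ c * (f c - F) ^ 2 = μ c * f c ^ 2 - 2 * F * (μ c * f c) + F ^ 2 * μ c :=
      fun c _ => by ring
    rw [Finset.sum_congr rfl this, Finset.sum_add_distrib, Finset.sum_sub_distrib,
      ← Finset.mul_sum, ← Finset.mul_sum, h1, hF]
    ring
  have h2 := Finset.single_le_sum (f := fun c => μ c * (f c - F) ^ 2)
    (fun c hc => mul_nonneg (hμ c hc) (sq_nonneg _)) hc
  linarith

set_option maxHeartbeats 800000 in
/-- Energy increment: if a dense pair of the box `P` contains two large subsets with small density
between them, then splitting both sides produces four boxes, on average of larger energy, and the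
gain survives on one whose parts keep a proportion `γ` of the vertices. -/
lemma energy_step {a : Fin n × Fin n → ℝ} {M : ℝ} (ha : ∀ e, 0 ≤ a e) (haM : ∀ e, a e ≤ M)
    (hM : 1 ≤ M)
    (D : Finset (Fin n × Fin n)) (hD : ∀ e ∈ D, e.1 ≠ e.2) {τ η : ℝ} (hτ : 0 < τ) (hτ1 : τ ≤ 1)
    (hη : 0 < η) (hη1 : η ≤ 1)
    (P : Fin n → Finset W) (hP : ∀ k, (P k).Nonempty) (e : Fin n × Fin n) (he : e ∈ D)
    {X Y : Finset W} (hX : X ⊆ P e.1) (hY : Y ⊆ P e.2)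
    (hXc : η * (P e.1).card ≤ X.card) (hYc : η * (P e.2).card ≤ Y.card)
    (hw : 2 * τ ≤ wt S a P e) (hlow : a e * dens S X Y < τ)
    {γ : ℝ} (hγ : γ = τ ^ 3 * η ^ 2 / (16 * (D.card * (M + τ * M ^ 2) + 1))) :
    ∃ P' : Fin n → Finset W, (∀ k, P' k ⊆ P k) ∧ (∀ k, γ * (P k).card ≤ (P' k).card) ∧
      energy S a D τ P + τ ^ 3 * η ^ 2 / 4 ≤ energy S a D τ P' := by
  set i := e.1 with hi
  set j := e.2 with hj
  have hij : i ≠ j := hD e he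
  set C : ℝ := D.card * (M + τ * M ^ 2) with hC
  have hC0 : 0 ≤ C := by positivity
  have hg0 : 0 < τ ^ 3 * η ^ 2 := by positivity
  have hg1 : τ ^ 3 * η ^ 2 ≤ 1 := by
    have : τ ^ 3 ≤ 1 := pow_le_one₀ hτ.le hτ1
    have : η ^ 2 ≤ 1 := pow_le_one₀ hη.le hη1
    nlinarith [pow_pos hτ 3, pow_pos hη 2]
  have hγ0 : 0 < γ := by rw [hγ]; positivity
  have hγC : γ * C ≤ τ ^ 3 * η ^ 2 / 16 := by
    rw [hγ, div_mul_eq_mul_div, div_le_div_iff₀ (by positivity) (by norm_num)]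
    nlinarith
  have hγ1 : γ ≤ 1 := by
    rw [hγ, div_le_one (by positivity)]; linarith
  have hi0 : (0 : ℝ) < (P i).card := by exact_mod_cast (hP i).card_pos
  have hj0 : (0 : ℝ) < (P j).card := by exact_mod_cast (hP j).card_pos
  -- the four cells are indexed by pairs of Booleans
  let XX : Bool → Finset W := fun s => cond s X (P i \ X)
  let YY : Bool → Finset W := fun s => cond s Y (P j \ Y)
  let q : Bool → ℝ := fun s => ((XX s).card : ℝ) / (P i).card
  let r : Bool → ℝ := fun s => ((YY s).card : ℝ) / (P j).card
  have hXX : ∀ s, XX s ⊆ P i := by rintro (_ | _); exacts [Finset.sdiff_subset, hX]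
  have hYY : ∀ s, YY s ⊆ P j := by rintro (_ | _); exacts [Finset.sdiff_subset, hY]
  have hq0 : ∀ s, 0 ≤ q s := fun s => by positivity
  have hr0 : ∀ s, 0 ≤ r s := fun s => by positivity
  have hq1 : ∀ s, q s ≤ 1 := fun s => by
    refine div_le_one_of_le₀ ?_ (by positivity)
    exact_mod_cast Finset.card_le_card (hXX s)
  have hr1 : ∀ s, r s ≤ 1 := fun s => by
    refine div_le_one_of_le₀ ?_ (by positivity)
    exact_mod_cast Finset.card_le_card (hYY s)
  have hqs : q true + q false = 1 := by
    show ((X.card : ℝ)) / (P i).card + ((P i \ X).card : ℝ) / (P i).card = 1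
    rw [← add_div, div_eq_one_iff_eq hi0.ne', ← Finset.card_sdiff_add_card_eq_card hX]
    push_cast; ring
  have hrs : r true + r false = 1 := by
    show ((Y.card : ℝ)) / (P j).card + ((P j \ Y).card : ℝ) / (P j).card = 1
    rw [← add_div, div_eq_one_iff_eq hj0.ne', ← Finset.card_sdiff_add_card_eq_card hY]
    push_cast; ring
  let cell : Bool × Bool → Fin n → Finset W := fun c =>
    Function.update (Function.update P i (XX c.1)) j (YY c.2)
  have hcj : ∀ c, cell c j = YY c.2 := fun c => Function.update_self ..
  have hci : ∀ c, cell c i = XX c.1 := fun c => by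
    show Function.update _ _ _ _ = _
    rw [Function.update_of_ne hij, Function.update_self]
  have hco : ∀ c k, k ≠ j → k ≠ i → cell c k = P k := fun c k h1 h2 => by
    show Function.update _ _ _ _ = _
    rw [Function.update_of_ne h1, Function.update_of_ne h2]
  let μ : Bool × Bool → ℝ := fun c => q c.1 * r c.2
  have hμ0 : ∀ c, 0 ≤ μ c := fun c => mul_nonneg (hq0 _) (hr0 _)
  have hμ1 : ∑ c, μ c = 1 := by
    simp only [Fintype.sum_prod_type, Fintype.sum_bool, μ]
    rw [← mul_add, ← mul_add, hrs, mul_one, mul_one, hqs]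
  have havg : ∀ e' ∈ D, ∑ c, μ c * wt S a (cell c) e' = wt S a P e' := by
    intro e' he'
    have hrow : ∀ s, r true * wt S a (cell (s, true)) e' + r false * wt S a (cell (s, false)) e'
        = wt S a (Function.update P i (XX s)) e' := by
      intro s
      have := wt_split S a (Function.update P i (XX s)) e' (hD e' he') j (X := Y)
        (by rw [Function.update_of_ne hij.symm]; exact hY)
        (by rw [Function.update_of_ne hij.symm]; exact hP j)
      rw [Function.update_of_ne hij.symm] at this
      exact this
    have hcol := wt_split S a P e' (hD e' he') i hX (hP i)
    simp only [Fintype.sum_prod_type, Fintype.sum_bool, μ]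
    have h1 := hrow true
    have h2 := hrow false
    have h3 : q true * wt S a (Function.update P i (XX true)) e'
      + q false * wt S a (Function.update P i (XX false)) e' = wt S a P e' := hcol
    rw [← h3, ← h1, ← h2]; ring
  have htt : ∀ c ∈ (Finset.univ : Finset (Bool × Bool)), 0 ≤ μ c := fun c _ => hμ0 c
  have hgain : energy S a D τ P + τ ^ 3 * η ^ 2 ≤ ∑ c, μ c * energy S a D τ (cell c) := by
    have hsw : ∑ c, μ c * energy S a D τ (cell c)
        = ∑ e' ∈ D, (∑ c, μ c * wt S a (cell c) e' + τ * ∑ c, μ c * wt S a (cell c) e' ^ 2) := by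
      simp only [energy, Finset.mul_sum]
      rw [Finset.sum_comm]
      refine Finset.sum_congr rfl fun e' _ => ?_
      rw [← Finset.sum_add_distrib]
      exact Finset.sum_congr rfl fun c _ => by ring
    rw [hsw]
    unfold energy
    rw [← Finset.add_sum_erase D _ he, ← Finset.add_sum_erase D
      (fun e' => (∑ c, μ c * wt S a (cell c) e' + τ * ∑ c, μ c * wt S a (cell c) e' ^ 2)) he]
    have hrest : ∑ e' ∈ D.erase e, (wt S a P e' + τ * wt S a P e' ^ 2) ≤ ∑ e' ∈ D.erase e,
        (∑ c, μ c * wt S a (cell c) e' + τ * ∑ c, μ c * wt S a (cell c) e' ^ 2) := by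
      refine Finset.sum_le_sum fun e' he' => ?_
      have he'' := Finset.mem_of_mem_erase he'
      have hv := var_ineq Finset.univ μ (fun c => wt S a (cell c) e') _ htt hμ1 (havg e' he'')
        (true, true) (Finset.mem_univ _)
      rw [havg e' he'']
      have : 0 ≤ μ (true, true) * (wt S a (cell (true, true)) e' - wt S a P e') ^ 2 :=
        mul_nonneg (hμ0 _) (sq_nonneg _)
      have : wt S a P e' ^ 2 ≤ ∑ c, μ c * wt S a (cell c) e' ^ 2 := by linarith
      nlinarith
    have hv := var_ineq Finset.univ μ (fun c => wt S a (cell c) e) _ htt hμ1 (havg e he)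
        (true, true) (Finset.mem_univ _)
    have hcell : wt S a (cell (true, true)) e = a e * dens S X Y := by
      show a e * dens S (Function.update (Function.update P i X) j Y i)
        (Function.update (Function.update P i X) j Y j) = _
      rw [Function.update_self, Function.update_of_ne hij, Function.update_self]
    have hμt : η ^ 2 ≤ μ (true, true) := by
      have h1 : η ≤ q true := by
        show η ≤ (X.card : ℝ) / (P i).card
        rwa [le_div_iff₀ hi0]
      have h2 : η ≤ r true := by
        show η ≤ (Y.card : ℝ) / (P j).card
        rwa [le_div_iff₀ hj0]
      show η ^ 2 ≤ q true * r true
      nlinarith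
    have hsq : τ ^ 2 ≤ (wt S a (cell (true, true)) e - wt S a P e) ^ 2 := by
      rw [hcell]; nlinarith
    have hprod : η ^ 2 * τ ^ 2 ≤
        μ (true, true) * (wt S a (cell (true, true)) e - wt S a P e) ^ 2 := by
      gcongr
    have hfin : wt S a P e ^ 2 + η ^ 2 * τ ^ 2 ≤ ∑ c, μ c * wt S a (cell c) e ^ 2 := by linarith
    have := mul_le_mul_of_nonneg_left hfin hτ.le
    rw [havg e he]
    nlinarith
  -- cells of small measure contribute little, so the gain is realised on a large one
  by_contra hcon
  push Not at hcon
  have hcell : ∀ c, μ c * energy S a D τ (cell c)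
      ≤ μ c * (energy S a D τ P + τ ^ 3 * η ^ 2 / 4) + γ * C := by
    intro c
    have hE := energy_nonneg S ha D hτ.le P
    by_cases hc : γ ≤ μ c
    · have hγq : γ ≤ q c.1 := hc.trans (mul_le_of_le_one_right (hq0 _) (hr1 _))
      have hγr : γ ≤ r c.2 := hc.trans (mul_le_of_le_one_left (hr0 _) (hq1 _))
      have := hcon (cell c) ?_ ?_
      · have := mul_le_mul_of_nonneg_left this.le (hμ0 c)
        nlinarith
      · intro k
        by_cases hkj : k = j
        · rw [hkj, hcj]; exact hYY _
        · by_cases hki : k = i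
          · rw [hki, hci]; exact hXX _
          · rw [hco c k hkj hki]
      · intro k
        by_cases hkj : k = j
        · rw [hkj, hcj]; exact (le_div_iff₀ hj0).1 hγr
        · by_cases hki : k = i
          · rw [hki, hci]; exact (le_div_iff₀ hi0).1 hγq
          · rw [hco c k hkj hki]
            exact mul_le_of_le_one_left (by positivity) hγ1
    · push Not at hc
      have h1 := energy_le S ha haM D hτ.le (cell c)
      have h2 := energy_nonneg S ha D hτ.le (cell c)
      have h3 : μ c * energy S a D τ (cell c) ≤ γ * C := by
        gcongr
      have : 0 ≤ μ c * (energy S a D τ P + τ ^ 3 * η ^ 2 / 4) := mul_nonneg (hμ0 c) (by positivity)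
      linarith
  have hsum := Finset.sum_le_sum fun c (_ : c ∈ (Finset.univ : Finset (Bool × Bool))) => hcell c
  rw [Finset.sum_add_distrib, ← Finset.sum_mul, hμ1] at hsum
  simp only [Finset.sum_const, Finset.card_univ, Fintype.card_prod, Fintype.card_bool,
    nsmul_eq_mul] at hsum
  push_cast at hsum
  linarith

end box

/-! ### Regular boxes and embeddings -/

section box2
variable {W : Type*} (S : SimpleGraph W) {n : ℕ}

/-- Iterating the energy increment, which is possible boundedly often, gives a sub-box of at least
the same energy in which every pair of normalised density at least `2τ` is lower regular: large
subsets of its two sides have normalised density at least `τ` between them. -/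
lemma exists_regular_box (D : Finset (Fin n × Fin n)) (hD : ∀ e ∈ D, e.1 ≠ e.2)
    {M τ η : ℝ} (hM : 1 ≤ M) (hτ : 0 < τ) (hτ1 : τ ≤ 1) (hη : 0 < η) (hη1 : η ≤ 1) :
    ∃ γ : ℝ, 0 < γ ∧ ∀ {W : Type} (S : SimpleGraph W) (a : Fin n × Fin n → ℝ)
      (_ : ∀ e, 0 ≤ a e) (_ : ∀ e, a e ≤ M) (P₀ : Fin n → Finset W) (_ : ∀ k, (P₀ k).Nonempty),
      ∃ P : Fin n → Finset W, (∀ k, P k ⊆ P₀ k) ∧ (∀ k, γ * (P₀ k).card ≤ (P k).card) ∧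
        energy S a D τ P₀ ≤ energy S a D τ P ∧
        ∀ e ∈ D, 2 * τ ≤ wt S a P e → ∀ X ⊆ P e.1, ∀ Y ⊆ P e.2,
          η * (P e.1).card ≤ X.card → η * (P e.2).card ≤ Y.card → τ ≤ a e * dens S X Y := by
  set C : ℝ := D.card * (M + τ * M ^ 2) with hC
  set γ : ℝ := τ ^ 3 * η ^ 2 / (16 * (C + 1)) with hγ
  have hC0 : 0 ≤ C := by positivity
  have hγ0 : 0 < γ := by positivity
  have hγ1 : γ ≤ 1 := by
    have h1 : τ ^ 3 ≤ 1 := pow_le_one₀ hτ.le hτ1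
    have h2 : η ^ 2 ≤ 1 := pow_le_one₀ hη.le hη1
    rw [hγ, div_le_one (by positivity)]
    nlinarith [pow_pos hτ 3, pow_pos hη 2]
  set g : ℝ := τ ^ 3 * η ^ 2 / 4 with hg
  have hg0 : 0 < g := by positivity
  obtain ⟨K, hK⟩ := exists_nat_gt (C / g)
  refine ⟨γ ^ K, by positivity, ?_⟩
  intro W S a ha haM P₀ hP₀
  by_contra hcon
  push Not at hcon
  have key : ∀ k ≤ K, ∃ P : Fin n → Finset W, (∀ k, P k ⊆ P₀ k) ∧
      (∀ i, γ ^ k * (P₀ i).card ≤ (P i).card) ∧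
      energy S a D τ P₀ + k * g ≤ energy S a D τ P := by
    intro k
    induction k with
    | zero => intro _; exact ⟨P₀, fun _ => subset_rfl, by simp, by simp⟩
    | succ k ih =>
      intro hk
      obtain ⟨P, h1, h2, h3⟩ := ih (by omega)
      have hpow : γ ^ K ≤ γ ^ k := pow_le_pow_of_le_one hγ0.le hγ1 (by omega)
      obtain ⟨e, he, hw, X, hX, Y, hY, hXc, hYc, hlow⟩ := hcon P h1
        (fun i => (mul_le_mul_of_nonneg_right hpow (by positivity)).trans (h2 i))
        (by have : 0 ≤ k * g := by positivity
            linarith)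
      have hP : ∀ i, (P i).Nonempty := fun i => by
        rw [← Finset.card_pos]
        have := h2 i
        have h4 : (0 : ℝ) < (P₀ i).card := by exact_mod_cast (hP₀ i).card_pos
        have : (0 : ℝ) < (P i).card := lt_of_lt_of_le (by positivity) this
        exact_mod_cast this
      obtain ⟨P', g1, g2, g3⟩ := energy_step S ha haM hM D hD hτ hτ1 hη hη1 P hP e he hX hY
        hXc hYc hw hlow hγ
      refine ⟨P', fun i => (g1 i).trans (h1 i), fun i => ?_, ?_⟩
      · rw [pow_succ', mul_assoc]
        exact (mul_le_mul_of_nonneg_left (h2 i) hγ0.le).trans (g2 i)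
      · push_cast; linarith
  obtain ⟨P, -, -, h3⟩ := key K le_rfl
  have h4 := energy_le S ha haM D hτ.le P
  have h5 := energy_nonneg S ha D hτ.le P₀
  rw [div_lt_iff₀ hg0] at hK
  linarith

/-- Greedy embedding into lower regular pairs: vertices are chosen one by one, each having many
neighbours in the current candidate sets of the later vertices. -/
lemma greedy_embedding {b η : ℝ} (hb : 0 < b) (hb1 : b ≤ 1) (hη : η = b ^ n / (n + 1))
    (P : Fin n → Finset W) (hP : ∀ k, (P k).Nonempty) (H : Fin n → Fin n → Prop)
    (hH : ∀ k l, H k l → H l k)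
    (hreg : ∀ k l, H k l → ∀ X ⊆ P k, ∀ Y ⊆ P l, η * (P k).card ≤ X.card →
      η * (P l).card ≤ Y.card → b * (X.card * Y.card) ≤ cnt S X Y) :
    ∃ v : Fin n → W, (∀ k, v k ∈ P k) ∧ ∀ k l, k ≠ l → H k l → S.Adj (v k) (v l) := by
  have hη0 : 0 < η := by rw [hη]; positivity
  have hηb : η ≤ b ^ n := by
    rw [hη]; exact div_le_self (by positivity) (by linarith [n.cast_nonneg (α := ℝ)])
  have main : ∀ T : Finset (Fin n), ∀ Cd : Fin n → Finset W, (∀ k, Cd k ⊆ P k) →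
      (∀ k, b ^ (n - T.card) * (P k).card ≤ (Cd k).card) →
      ∃ v : Fin n → W, (∀ k, v k ∈ Cd k) ∧ ∀ k ∈ T, ∀ l ∈ T, k ≠ l → H k l →
        S.Adj (v k) (v l) := by
    -- `T` is the set of vertices still to be chosen, `Cd` are the current candidate sets
    intro T
    induction T using Finset.induction_on with
    | empty =>
      intro Cd h1 h2
      have : ∀ k, ∃ v, v ∈ Cd k := fun k => by
        show (Cd k).Nonempty
        rw [← Finset.card_pos]
        have h4 : (0 : ℝ) < (P k).card := by exact_mod_cast (hP k).card_pos
        have : (0 : ℝ) < (Cd k).card := lt_of_lt_of_le (by positivity) (h2 k)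
        exact_mod_cast this
      choose v hv using this
      exact ⟨v, hv, by simp⟩
    | insert i T hi ih =>
      intro Cd h1 h2
      have hcard : T.card + 1 ≤ n := by
        rw [← Finset.card_insert_of_notMem hi]
        simpa using Finset.card_le_univ (insert i T)
      rw [Finset.card_insert_of_notMem hi] at h2
      have hpos : ∀ k, (0 : ℝ) < (P k).card := fun k => by exact_mod_cast (hP k).card_pos
      have hbn : b ^ n ≤ b ^ (n - (T.card + 1)) := pow_le_pow_of_le_one hb.le hb1 (by omega)
      have hbig : ∀ k, b ^ n * (P k).card ≤ (Cd k).card := fun k =>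
        (mul_le_mul_of_nonneg_right hbn (hpos k).le).trans (h2 k)
      -- vertices with too few neighbours among the candidates for `j`
      let bad : Fin n → Finset W := fun j =>
        {x ∈ Cd i | H i j ∧ (({y ∈ Cd j | S.Adj x y}.card : ℝ) < b * (Cd j).card)}
      have hbad : ∀ j, ((bad j).card : ℝ) ≤ η * (P i).card := by
        intro j
        by_contra hlt
        push Not at hlt
        have hne : (bad j).Nonempty := by
          rw [← Finset.card_pos]
          have : (0 : ℝ) < (bad j).card := lt_of_le_of_lt (by positivity) hlt
          exact_mod_cast this
        have hHij : H i j := by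
          obtain ⟨x, hx⟩ := hne
          exact (Finset.mem_filter.1 hx).2.1
        have hr := hreg i j hHij (bad j) ((Finset.filter_subset _ _).trans (h1 i)) (Cd j) (h1 j)
          hlt.le ((mul_le_mul_of_nonneg_right hηb (hpos j).le).trans (hbig j))
        have : cnt S (bad j) (Cd j) < ∑ x ∈ bad j, b * (Cd j).card := by
          refine Finset.sum_lt_sum_of_nonempty hne fun x hx => ?_
          have := (Finset.mem_filter.1 hx).2.2
          rwa [Finset.sum_boole]
        rw [Finset.sum_const, nsmul_eq_mul] at this
        linarith
      have hex : ∃ x ∈ Cd i, ∀ j, x ∉ bad j := by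
        by_contra hall
        push Not at hall
        have hsub : Cd i ⊆ Finset.univ.biUnion bad := fun x hx => by
          obtain ⟨j, hj⟩ := hall x hx
          exact Finset.mem_biUnion.2 ⟨j, Finset.mem_univ _, hj⟩
        have hc1 := (Finset.card_le_card hsub).trans Finset.card_biUnion_le
        have hc2 : ((Cd i).card : ℝ) ≤ ∑ j, ((bad j).card : ℝ) := by exact_mod_cast hc1
        have hc3 : ∑ j, ((bad j).card : ℝ) ≤ n * (η * (P i).card) := by
          have := Finset.sum_le_sum fun j (_ : j ∈ (Finset.univ : Finset (Fin n))) => hbad j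
          simpa using this
        have hc4 : (n : ℝ) * η < b ^ n := by
          rw [hη, mul_div_assoc', div_lt_iff₀ (by positivity)]
          nlinarith [pow_pos hb n]
        have := hbig i
        nlinarith [hpos i]
      obtain ⟨x, hx, hxb⟩ := hex
      let Cd' : Fin n → Finset W := fun j =>
        if j = i then {x} else if H i j then {y ∈ Cd j | S.Adj x y} else Cd j
      -- only the candidate sets of vertices other than `i` have to stay large
      let Cd'' : Fin n → Finset W := fun j =>
        if j = i then Cd i else Cd' j
      have hsub'' : ∀ j, Cd'' j ⊆ Cd j := by
        intro j
        by_cases hji : j = i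
        · simp [Cd'', hji]
        · by_cases hHj : H i j
          · simp only [Cd'', Cd', hji, hHj, if_true, if_false]; exact Finset.filter_subset _ _
          · simp [Cd'', Cd', hji, hHj]
      obtain ⟨v, hv1, hv2⟩ := ih Cd'' (fun j => (hsub'' j).trans (h1 j)) (by
        have he : n - T.card = (n - (T.card + 1)) + 1 := by omega
        intro j
        have hle : b ^ (n - T.card) * (P j).card ≤ b * (Cd j).card := by
          rw [he, pow_succ', mul_assoc]
          exact mul_le_mul_of_nonneg_left (h2 j) hb.le
        have hle2 : b * (Cd j).card ≤ (Cd j).card := mul_le_of_le_one_left (by positivity) hb1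
        by_cases hji : j = i
        · subst hji
          simp only [Cd'', if_true]; linarith
        · by_cases hHj : H i j
          · simp only [Cd'', Cd', hji, hHj, if_true, if_false]
            have := hxb j
            simp only [bad, Finset.mem_filter, not_and, not_lt] at this
            exact hle.trans (this hx hHj)
          · simp only [Cd'', Cd', hji, hHj, if_false]; linarith)
      refine ⟨Function.update v i x, ?_, ?_⟩
      · intro k
        by_cases hki : k = i
        · subst hki; rw [Function.update_self]; exact hx
        · rw [Function.update_of_ne hki]; exact hsub'' k (hv1 k)
      · have hnew : ∀ l ∈ T, H i l → S.Adj x (v l) := by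
          intro l hl hHl
          have hli : l ≠ i := fun h => hi (h ▸ hl)
          have := hv1 l
          simp only [Cd'', Cd', hli, hHl, if_true, if_false, Finset.mem_filter] at this
          exact this.2
        intro k hk l hl hkl hHkl
        rw [Finset.mem_insert] at hk hl
        rcases hk with rfl | hk
        · rcases hl with rfl | hl
          · exact absurd rfl hkl
          · rw [Function.update_self, Function.update_of_ne hkl.symm]; exact hnew l hl hHkl
        · have hki : k ≠ i := fun h => hi (h ▸ hk)
          rcases hl with rfl | hl
          · rw [Function.update_self, Function.update_of_ne hkl]
            exact (hnew k hk (hH _ _ hHkl)).symm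
          · have hli : l ≠ i := fun h => hi (h ▸ hl)
            rw [Function.update_of_ne hki, Function.update_of_ne hli]
            exact hv2 k hk l hl hkl hHkl
  obtain ⟨v, h1, h2⟩ := main Finset.univ P (fun _ => subset_rfl) (by simp)
  exact ⟨v, h1, fun k l => h2 k (Finset.mem_univ _) l (Finset.mem_univ _)⟩

/-- If the normalised densities of `S` never exceed `1 + τ` on large sub-boxes of `P₀`, then some
choice of one vertex in each part of `P₀` has, up to a small error, at least as many adjacent pairs
in `D` as the sum of the normalised densities of `P₀`: in a regular sub-box the pairs that are not
negligible contribute at most about `1` each and can all be embedded simultaneously. The bound `γ`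
depends only on `D`, `M` and `τ`. -/
lemma exists_weighted_embedding (D : Finset (Fin n × Fin n)) (hD : ∀ e ∈ D, e.1 < e.2)
    {M τ : ℝ} (hM : 1 ≤ M) (hτ : 0 < τ) (hτ1 : τ ≤ 1) :
    ∃ γ : ℝ, 0 < γ ∧ ∀ {W : Type} (S : SimpleGraph W) (a : Fin n × Fin n → ℝ)
      (_ : ∀ e, 0 < a e) (_ : ∀ e, a e ≤ M) (P₀ : Fin n → Finset W) (_ : ∀ k, (P₀ k).Nonempty)
      (_ : ∀ P : Fin n → Finset W, (∀ k, P k ⊆ P₀ k) → (∀ k, γ * (P₀ k).card ≤ (P k).card) →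
        ∀ e ∈ D, wt S a P e ≤ 1 + τ),
      ∃ v : Fin n → W, (∀ k, v k ∈ P₀ k) ∧
        ∑ e ∈ D, wt S a P₀ e - 7 * τ * D.card ≤
          ({e ∈ D | S.Adj (v e.1) (v e.2)}.card : ℝ) := by
  have hM0 : 0 < M := by linarith
  set b : ℝ := τ / M with hb
  have hb0 : 0 < b := by positivity
  have hb1 : b ≤ 1 := by rw [hb, div_le_one hM0]; linarith
  set η : ℝ := b ^ n / (n + 1) with hη
  have hη0 : 0 < η := by positivity
  have hη1 : η ≤ 1 := by
    rw [hη, div_le_one (by positivity)]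
    have : b ^ n ≤ 1 := pow_le_one₀ hb0.le hb1
    linarith [n.cast_nonneg (α := ℝ)]
  obtain ⟨γ, hγ, hbox⟩ := exists_regular_box D (fun e he => (hD e he).ne) hM hτ hτ1 hη0 hη1
  refine ⟨γ, hγ, ?_⟩
  intro W S a ha haM P₀ hP₀ hupper
  obtain ⟨P, h1, h2, h3, h4⟩ := hbox S a (fun e => (ha e).le) haM P₀ hP₀
  have hP : ∀ i, (P i).Nonempty := fun i => by
    rw [← Finset.card_pos]
    have h4 : (0 : ℝ) < (P₀ i).card := by exact_mod_cast (hP₀ i).card_pos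
    have : (0 : ℝ) < (P i).card := lt_of_lt_of_le (by positivity) (h2 i)
    exact_mod_cast this
  have hup := hupper P h1 h2
  let H0 : Fin n × Fin n → Prop := fun e => e ∈ D ∧ 2 * τ ≤ wt S a P e
  have hreg0 : ∀ e, H0 e → ∀ X ⊆ P e.1, ∀ Y ⊆ P e.2, η * (P e.1).card ≤ X.card →
      η * (P e.2).card ≤ Y.card → b * (X.card * Y.card) ≤ cnt S X Y := by
    intro e he X hX Y hY hXc hYc
    have h5 := h4 e he.1 he.2 X hX Y hY hXc hYc
    have hXpos : (0 : ℝ) < X.card := lt_of_lt_of_le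
      (mul_pos hη0 (by exact_mod_cast (hP e.1).card_pos)) hXc
    have hYpos : (0 : ℝ) < Y.card := lt_of_lt_of_le
      (mul_pos hη0 (by exact_mod_cast (hP e.2).card_pos)) hYc
    have h6 : τ ≤ M * dens S X Y :=
      h5.trans (mul_le_mul_of_nonneg_right (haM e) (dens_nonneg S _ _))
    have h7 : b ≤ dens S X Y := by rw [hb, div_le_iff₀' hM0]; exact h6
    unfold dens at h7
    rwa [le_div_iff₀ (by positivity)] at h7
  obtain ⟨v, hv1, hv2⟩ := greedy_embedding S hb0 hb1 hη P hP (fun k l => H0 (k, l) ∨ H0 (l, k))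
    (fun k l => Or.symm) (by
      rintro k l (h | h) X hX Y hY hXc hYc
      · exact hreg0 _ h X hX Y hY hXc hYc
      · rw [cnt_comm, mul_comm (X.card : ℝ)]
        exact hreg0 _ h Y hY X hX hYc hXc)
  refine ⟨v, fun k => h1 k (hv1 k), ?_⟩
  have hcount : ∑ e ∈ D, wt S a P₀ e ≤
      ∑ e ∈ D, ((if S.Adj (v e.1) (v e.2) then 1 else 0) + 7 * τ) := by
    calc ∑ e ∈ D, wt S a P₀ e ≤ energy S a D τ P₀ := by
          refine Finset.sum_le_sum fun e _ => ?_
          have := sq_nonneg (wt S a P₀ e)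
          nlinarith
      _ ≤ energy S a D τ P := h3
      _ ≤ _ := by
          refine Finset.sum_le_sum fun e he => ?_
          have hu := hup e he
          have h0 := wt_nonneg S (fun e => (ha e).le) P e
          have hsq : wt S a P e ^ 2 ≤ 4 := by nlinarith
          have hsq' := mul_le_mul_of_nonneg_left hsq hτ.le
          -- an embedded pair contributes at most `1 + τ + 4τ`, any other one less than `6τ`
          by_cases hadj : S.Adj (v e.1) (v e.2)
          · rw [if_pos hadj]; linarith
          · rw [if_neg hadj]
            have : ¬ (2 * τ ≤ wt S a P e) := fun h =>
              hadj (hv2 e.1 e.2 (hD e he).ne (Or.inl ⟨he, h⟩))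
            push Not at this
            linarith
  rw [Finset.sum_add_distrib, Finset.sum_boole, Finset.sum_const, nsmul_eq_mul] at hcount
  linarith

end box2

/-! ### Averages over the cube -/

section expect

/-- Resampling one coordinate of a uniform function does not change its distribution. -/
lemma expect_resample {ι X : Type*} [Fintype ι] [DecidableEq ι] [Fintype X] [Nonempty X]
    (H : (ι → X) → ℝ) (i : ι) :
    𝔼 u : ι → X, 𝔼 x : X, H (Function.update u i x) = 𝔼 u : ι → X, H u := by
  let e : (ι → X) × X ≃ (ι → X) × X :=
    Function.Involutive.toPerm (fun p => (Function.update p.1 i p.2, p.1 i)) (fun p => by simp)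
  have h1 : 𝔼 p : (ι → X) × X, H (Function.update p.1 i p.2) = 𝔼 p : (ι → X) × X, H p.1 :=
    Fintype.expect_equiv e _ _ (fun p => rfl)
  rw [← Finset.univ_product_univ, Finset.expect_product, Finset.expect_product] at h1
  simpa using h1

/-- The sign recording whether the bit at position `p` equals `b`. -/
def sgn {d : ℕ} (b : Bool) (p : Fin d) (a : Fin d → Bool) : ℝ := if a p = b then 1 else -1

lemma expect_bool (f : Bool → ℝ) : 𝔼 x : Bool, f x = (f true + f false) / 2 := by
  rw [Fintype.expect_eq_sum_div_card]; simp

lemma expect_update {d : ℕ} (H : (Fin d → Bool) → ℝ) (p : Fin d) (b : Bool) :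
    𝔼 a : Fin d → Bool, H (Function.update a p b)
      = 𝔼 a : Fin d → Bool, (H a + H a * sgn b p a) := by
  rw [← expect_resample (fun a => H a + H a * sgn b p a) p]
  refine Finset.expect_congr rfl fun a _ => ?_
  rw [expect_bool]
  cases b <;> simp [sgn]

lemma expect_sgn_mul {d : ℕ} (b : Bool) {p p' : Fin d} (h : p ≠ p') :
    𝔼 a : Fin d → Bool, sgn b p a * sgn b p' a = 0 := by
  rw [← expect_resample (fun a => sgn b p a * sgn b p' a) p]
  rw [← Finset.expect_const_zero (s := (Finset.univ : Finset (Fin d → Bool)))]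
  refine Finset.expect_congr rfl fun a _ => ?_
  rw [expect_bool]
  cases b <;> simp [sgn, Function.update_of_ne h.symm] <;> split_ifs <;> norm_num

lemma sgn_sq {d : ℕ} (b : Bool) (p : Fin d) (a : Fin d → Bool) : sgn b p a * sgn b p a = 1 := by
  unfold sgn; split_ifs <;> norm_num

/-- Forcing the bit at a random position hardly changes an average: `H` is averaged against
`1 + X`, where `X` is a mean of `M` pairwise uncorrelated signs and so has second moment `1 / M`. -/
lemma expect_random_update {d M : ℕ} {θ : ℝ} (hθ : 0 < θ) (hM : 1 / θ ^ 2 ≤ M)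
    (H : (Fin d → Bool) → ℝ) (H0 : ∀ a, 0 ≤ H a) (H2 : ∀ a, H a ≤ 2) (p : Fin M → Fin d)
    (hp : Function.Injective p) (b : Bool) :
    𝔼 a, H a - 2 * θ ≤ 𝔼 c : Fin M, 𝔼 a, H (Function.update a (p c) b) := by
  have hMpos : (0 : ℝ) < M := lt_of_lt_of_le (by positivity) hM
  have hM0 : 0 < M := by exact_mod_cast hMpos
  have : Nonempty (Fin M) := ⟨⟨0, hM0⟩⟩
  let X : (Fin d → Bool) → ℝ := fun a => 𝔼 c : Fin M, sgn b (p c) a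
  have hX2 : 𝔼 a, X a ^ 2 = 1 / M := by
    have h1 : ∀ a, X a ^ 2 = 𝔼 c : Fin M, 𝔼 c' : Fin M, sgn b (p c) a * sgn b (p c') a := by
      intro a
      rw [sq, Finset.expect_mul_expect]
    simp_rw [h1]
    rw [Finset.expect_comm]
    simp_rw [Finset.expect_comm (s := (Finset.univ : Finset (Fin d → Bool)))]
    have h2 : ∀ c c' : Fin M, 𝔼 a, sgn b (p c) a * sgn b (p c') a = if c' = c then 1 else 0 := by
      intro c c'
      split_ifs with h
      · subst h; simp [sgn_sq]
      · exact expect_sgn_mul b (fun h' => h (hp h').symm)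
    simp_rw [h2]
    rw [Fintype.expect_eq_sum_div_card, Fintype.sum_congr (g := fun _ => 1 / (M : ℝ))]
    · simp; field_simp
    · intro c
      rw [Fintype.expect_eq_sum_div_card]; simp
  have hmain : 𝔼 c : Fin M, 𝔼 a, H (Function.update a (p c) b) = 𝔼 a, (H a + H a * X a) := by
    simp_rw [expect_update]
    rw [Finset.expect_comm]
    refine Finset.expect_congr rfl fun a _ => ?_
    rw [Finset.expect_add_distrib, Fintype.expect_const, Finset.mul_expect]
  have hpt : ∀ a, H a - θ - X a ^ 2 / θ ≤ H a + H a * X a := by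
    intro a
    have : -(θ + X a ^ 2 / θ) ≤ H a * X a := by
      have hx : X a ^ 2 / θ * θ = X a ^ 2 := by field_simp
      have h4 : -(2 * |X a|) ≤ H a * X a := by
        have : |H a * X a| ≤ 2 * |X a| := by
          rw [abs_mul, abs_of_nonneg (H0 a)]
          exact mul_le_mul_of_nonneg_right (H2 a) (abs_nonneg _)
        linarith [neg_abs_le (H a * X a)]
      have h5 : 2 * |X a| ≤ θ + X a ^ 2 / θ := by
        rw [← sub_nonneg]
        have : θ + X a ^ 2 / θ - 2 * |X a| = (θ - |X a|) ^ 2 / θ := by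
          rw [← sq_abs (X a)]; field_simp; ring
        rw [this]; positivity
      linarith
    linarith
  rw [hmain]
  have hle := Finset.expect_le_expect (s := Finset.univ) fun a _ => hpt a
  rw [Finset.expect_sub_distrib, Finset.expect_sub_distrib, Fintype.expect_const,
    ← Finset.expect_div, hX2] at hle
  have : 1 / (M : ℝ) / θ ≤ θ := by
    rw [div_div, div_le_iff₀ (by positivity)]
    rw [div_le_iff₀ (by positivity)] at hM
    nlinarith
  linarith

end expect

/-! ### Random combs -/

section comb

/-- `x` and `y` first differ at position `ℓ` (indexed from `0`), where `x` has bit `0` and `y` has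
bit `1`. -/
def LevPair {d : ℕ} (ℓ : Fin d) (x y : Fin d → Bool) : Prop :=
  (∀ c < ℓ, x c = y c) ∧ x ℓ = false ∧ y ℓ = true

/-- The string with the bits of `a` before `ℓ`, bit `0` at `ℓ` and the bits of `v` after `ℓ`. -/
def join {d : ℕ} (ℓ : Fin d) (a v : Fin d → Bool) : Fin d → Bool := fun c =>
  if c < ℓ then a c else if c = ℓ then false else v c

/-- The string with the bits of `s` before `ℓ` and those of `v` from `ℓ` on. -/
def splice {d : ℕ} (ℓ : Fin d) (s v : Fin d → Bool) : Fin d → Bool := fun c =>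
  if c < ℓ then s c else v c

/-- The string `a` with the bits at the positions `p t`, `t ∈ T`, set to `1`. -/
def force {d n : ℕ} (p : Fin n → Fin d) (T : Finset (Fin n)) (a : Fin d → Bool) : Fin d → Bool :=
  fun c => if ∃ t ∈ T, p t = c then true else a c

lemma levPair_join {d : ℕ} (ℓ : Fin d) (a v : Fin d → Bool) :
    LevPair ℓ (join ℓ a v) (Function.update a ℓ true) := by
  refine ⟨fun c hc => ?_, ?_, ?_⟩
  · simp [join, hc, Function.update_of_ne hc.ne]
  · simp [join]
  · simp

/-- Splicing two independent uniform strings gives a uniform string. -/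
lemma expect_splice {d : ℕ} (ℓ : Fin d) (Z : (Fin d → Bool) → ℝ) :
    𝔼 s : Fin d → Bool, 𝔼 v : Fin d → Bool, Z (splice ℓ s v) = 𝔼 a, Z a := by
  let e : (Fin d → Bool) × (Fin d → Bool) ≃ (Fin d → Bool) × (Fin d → Bool) :=
    Function.Involutive.toPerm (fun p => (splice ℓ p.1 p.2, splice ℓ p.2 p.1)) (fun p => by
      ext c <;> simp only [splice] <;> split_ifs <;> rfl)
  have h1 : 𝔼 p : (Fin d → Bool) × (Fin d → Bool), Z (splice ℓ p.1 p.2)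
      = 𝔼 p : (Fin d → Bool) × (Fin d → Bool), Z p.1 :=
    Fintype.expect_equiv e _ _ (fun p => rfl)
  rw [← Finset.univ_product_univ, Finset.expect_product, Finset.expect_product] at h1
  simpa using h1

/-- The branching positions of a random comb: a base point `b` followed by one point `r t` in each
of `n` consecutive windows of length `M`. -/
def pos {n N M : ℕ} (b : Fin N) (r : Fin n → Fin M) (t : Fin n) : Fin (N + n * M) :=
  ⟨b + t * M + r t, by
    have h1 : (t : ℕ) * M + M ≤ n * M := by
      rw [← Nat.succ_mul]; exact Nat.mul_le_mul_right _ t.2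
    have := b.2; have := (r t).2; omega⟩

lemma pos_strictMono {n N M : ℕ} (b : Fin N) (r : Fin n → Fin M) : StrictMono (pos b r) := by
  intro s t h
  have h1 : (s : ℕ) * M + M ≤ t * M := by
    rw [← Nat.succ_mul]; exact Nat.mul_le_mul_right _ h
  have := (r s).2
  show (b : ℕ) + s * M + r s < b + t * M + r t
  omega

lemma pos_update_ne {n N M : ℕ} (b : Fin N) (r : Fin n → Fin M) {s t : Fin n} (h : t ≠ s)
    (c : Fin M) : pos b (Function.update r s c) t = pos b r t := by
  simp [pos, Function.update_of_ne h]

lemma pos_update_injective {n N M : ℕ} (b : Fin N) (r : Fin n → Fin M) (t : Fin n) :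
    Function.Injective fun c => pos b (Function.update r t c) t := by
  intro c c' h
  simpa [pos, Fin.ext_iff] using h

lemma force_empty {d n : ℕ} (p : Fin n → Fin d) (a : Fin d → Bool) : force p ∅ a = a := by
  ext c; simp [force]

/-- The bits at the branching positions of a random comb can be forced at a small cost on
average, one position at a time. -/
lemma expect_force {n N M : ℕ} [NeZero M] {θ : ℝ} (hθ : 0 < θ) (hM : 1 / θ ^ 2 ≤ M) (b : Fin N)
    (F : Fin (N + n * M) → (Fin (N + n * M) → Bool) → ℝ) (F0 : ∀ ℓ a, 0 ≤ F ℓ a)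
    (F2 : ∀ ℓ a, F ℓ a ≤ 2) {i j : Fin n} (hij : i ≠ j) (T : Finset (Fin n))
    (hi : i ∉ T) (hj : j ∉ T) :
    𝔼 r : Fin n → Fin M, 𝔼 a, F (pos b r i) a - 2 * θ * (T.card + 1) ≤
      𝔼 r : Fin n → Fin M, 𝔼 a,
        F (pos b r i) (Function.update (force (pos b r) T a) (pos b r j) false) := by
  induction T using Finset.induction_on with
  | empty =>
    have hstep : ∀ r : Fin n → Fin M, 𝔼 a, F (pos b r i) a - 2 * θ ≤
        𝔼 c : Fin M, 𝔼 a, F (pos b (Function.update r j c) i)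
          (Function.update (force (pos b (Function.update r j c)) ∅ a)
            (pos b (Function.update r j c) j) false) := by
      intro r
      have := expect_random_update hθ hM (F (pos b r i)) (F0 _) (F2 _) _
        (pos_update_injective b r j) false
      simpa [force_empty, pos_update_ne b r hij] using this
    have hle := Finset.expect_le_expect (s := Finset.univ) fun r _ => hstep r
    rw [expect_resample (fun r : Fin n → Fin M => 𝔼 a,
      F (pos b r i) (Function.update (force (pos b r) ∅ a) (pos b r j) false)) j,
      Finset.expect_sub_distrib, Fintype.expect_const] at hle
    simpa using hle
  | insert t T ht ih =>
    rw [Finset.mem_insert, not_or] at hi hj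
    have ih' := ih hi.2 hj.2
    have hstep : ∀ r : Fin n → Fin M,
        𝔼 a, F (pos b r i) (Function.update (force (pos b r) T a) (pos b r j) false) - 2 * θ ≤
        𝔼 c : Fin M, 𝔼 a, F (pos b (Function.update r t c) i)
          (Function.update (force (pos b (Function.update r t c)) (insert t T) a)
            (pos b (Function.update r t c) j) false) := by
      intro r
      have := expect_random_update hθ hM
        (fun a => F (pos b r i) (Function.update (force (pos b r) T a) (pos b r j) false))
        (fun a => F0 _ _) (fun a => F2 _ _) _
        (pos_update_injective b r t) true
      refine this.trans (le_of_eq ?_)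
      refine Finset.expect_congr rfl fun c _ => Finset.expect_congr rfl fun a _ => ?_
      rw [pos_update_ne b r hi.1, pos_update_ne b r hj.1]
      congr 2
      ext x
      have hT : (∃ s ∈ T, pos b (Function.update r t c) s = x) ↔ ∃ s ∈ T, pos b r s = x := by
        refine exists_congr fun s => and_congr_right fun hs => ?_
        rw [pos_update_ne b r (show s ≠ t from fun h => ht (h ▸ hs))]
      simp only [force, Finset.exists_mem_insert, hT]
      by_cases hx : pos b (Function.update r t c) t = x
      · subst hx; simp
      · simp [hx, Function.update_of_ne (Ne.symm hx)]
    have hle := Finset.expect_le_expect (s := Finset.univ) fun r _ => hstep r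
    rw [expect_resample (fun r : Fin n → Fin M => 𝔼 a,
      F (pos b r i) (Function.update (force (pos b r) (insert t T) a) (pos b r j) false)) t,
      Finset.expect_sub_distrib, Fintype.expect_const] at hle
    rw [Finset.card_insert_of_notMem ht]
    push_cast
    linarith

/-- The leaf of the comb that branches off its spine at position `p t`. The spine has bit `1` at all
branching positions and the bits of `s` elsewhere; the leaf agrees with it before `p t`, has bit `0`
at `p t` and its own bits `u t` afterwards. -/
def leaf {n d : ℕ} (p : Fin n → Fin d) (s : Fin d → Bool) (u : Fin n → Fin d → Bool) (t : Fin n) :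
    Fin d → Bool := fun c =>
  if c < p t then (if ∃ t', p t' = c then true else s c) else if c = p t then false else u t c

lemma leaf_right {n d : ℕ} {p : Fin n → Fin d} (hp : StrictMono p) (s : Fin d → Bool)
    (u : Fin n → Fin d → Bool) {i j : Fin n} (hij : i < j) :
    leaf p s u j = Function.update (Function.update
      (force p {t | t < j ∧ t ≠ i} (splice (p j) s (u j))) (p j) false) (p i) true := by
  ext c
  rcases lt_trichotomy c (p j) with h | rfl | h
  · by_cases hc : c = p i
    · subst hc; simp [leaf, h]
    · rw [Function.update_of_ne hc, Function.update_of_ne h.ne]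
      have : (∃ t ∈ (Finset.univ.filter fun t => t < j ∧ t ≠ i), p t = c) ↔ ∃ t, p t = c := by
        constructor
        · rintro ⟨t, -, ht⟩; exact ⟨t, ht⟩
        · rintro ⟨t, rfl⟩
          exact ⟨t, by simpa using ⟨hp.lt_iff_lt.1 h, fun h' => hc (by rw [h'])⟩, rfl⟩
      simp only [leaf, h, if_true, force, this, splice]
  · have := (hp hij).ne'
    simp [leaf, Function.update_of_ne this]
  · have h1 : c ≠ p i := ((hp hij).trans h).ne'
    have h2 : ¬ ∃ t ∈ (Finset.univ.filter fun t => t < j ∧ t ≠ i), p t = c := by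
      rintro ⟨t, ht, rfl⟩
      have := hp.lt_iff_lt.1 h
      simp at ht
      exact absurd ht.1 (not_lt.2 this.le)
    rw [Function.update_of_ne h1, Function.update_of_ne h.ne']
    simp only [leaf, h.not_gt, h.ne', if_false, force, h2, splice]

lemma leaf_left {n d : ℕ} {p : Fin n → Fin d} (hp : StrictMono p) (s : Fin d → Bool)
    (u : Fin n → Fin d → Bool) {i j : Fin n} (hij : i < j) :
    leaf p s u i = join (p i) (Function.update
      (force p {t | t < j ∧ t ≠ i} (splice (p j) s (u j))) (p j) false) (u i) := by
  ext c
  by_cases h : c < p i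
  · have hj : c < p j := h.trans (hp hij)
    have : (∃ t ∈ (Finset.univ.filter fun t => t < j ∧ t ≠ i), p t = c) ↔ ∃ t, p t = c := by
      constructor
      · rintro ⟨t, -, ht⟩; exact ⟨t, ht⟩
      · rintro ⟨t, rfl⟩
        exact ⟨t, by simpa using ⟨hp.lt_iff_lt.1 hj, (hp.lt_iff_lt.1 h).ne⟩, rfl⟩
    simp only [leaf, join, h, if_true, Function.update_of_ne hj.ne, force, this, splice, hj]
  · simp only [leaf, join, h, if_false]

/-- Every weight with values in `[0, 2]` on the branching pairs of the cube has a comb whose pairs in `D` have on average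
almost the weight of a uniformly random branching pair: for a random comb, each pair of leaves is
almost distributed like such a pair, since only few bits are forced and at random positions. -/
lemma exists_comb {n N M : ℕ} (hN : 0 < N) {θ : ℝ} (hθ : 0 < θ) (hM : 1 / θ ^ 2 ≤ M)
    (w : Fin (N + n * M) → (Fin (N + n * M) → Bool) → (Fin (N + n * M) → Bool) → ℝ)
    (w0 : ∀ ℓ x y, LevPair ℓ x y → 0 ≤ w ℓ x y) (w2 : ∀ ℓ x y, LevPair ℓ x y → w ℓ x y ≤ 2)
    (D : Finset (Fin n × Fin n)) (hD : ∀ e ∈ D, e.1 < e.2) :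
    ∃ (lev : Fin n → Fin (N + n * M)) (x : Fin n → Fin (N + n * M) → Bool),
      (∀ i j, i < j → LevPair (lev i) (x i) (x j)) ∧
      D.card * (𝔼 ℓ, 𝔼 a, 𝔼 v, w ℓ (join ℓ a v) (Function.update a ℓ true)
        - 2 * (n * M : ℕ) / (N + n * M : ℕ) - 2 * θ * n) ≤
      ∑ e ∈ D, w (lev e.1) (x e.1) (x e.2) := by
  have hMpos : (0 : ℝ) < M := lt_of_lt_of_le (by positivity) hM
  have hM0 : M ≠ 0 := by rintro rfl; simp at hMpos
  have : NeZero M := ⟨hM0⟩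
  have : NeZero N := ⟨hN.ne'⟩
  set F : Fin (N + n * M) → (Fin (N + n * M) → Bool) → ℝ :=
    fun ℓ a => 𝔼 v, w ℓ (join ℓ a v) (Function.update a ℓ true) with hF
  have F0 : ∀ ℓ a, 0 ≤ F ℓ a := fun ℓ a =>
    Finset.expect_nonneg fun v _ => w0 _ _ _ (levPair_join ℓ a v)
  have F2 : ∀ ℓ a, F ℓ a ≤ 2 := fun ℓ a =>
    Finset.expect_le Finset.univ_nonempty fun v _ => w2 _ _ _ (levPair_join ℓ a v)
  let G : Fin (N + n * M) → ℝ := fun ℓ => 𝔼 a, F ℓ a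
  have G0 : ∀ ℓ, 0 ≤ G ℓ := fun ℓ => Finset.expect_nonneg fun a _ => F0 ℓ a
  have G2 : ∀ ℓ, G ℓ ≤ 2 := fun ℓ => Finset.expect_le Finset.univ_nonempty fun a _ => F2 ℓ a
  -- the expectation of a single pair, for fixed levels
  have hpair : ∀ (b : Fin N) (r : Fin n → Fin M) (i j : Fin n), i < j →
      𝔼 s, 𝔼 u : Fin n → Fin (N + n * M) → Bool,
        w (pos b r i) (leaf (pos b r) s u i) (leaf (pos b r) s u j) =
      𝔼 a, F (pos b r i)
        (Function.update (force (pos b r) {t | t < j ∧ t ≠ i} a) (pos b r j) false) := by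
    intro b r i j hij
    have hmono := pos_strictMono b r
    set p := pos b r
    let Z : (Fin (N + n * M) → Bool) → (Fin (N + n * M) → Bool) → ℝ := fun a v =>
      w (p i) (join (p i) (Function.update (force p {t | t < j ∧ t ≠ i} a) (p j) false) v)
        (Function.update (Function.update (force p {t | t < j ∧ t ≠ i} a) (p j) false) (p i) true)
    have h1 : ∀ s, 𝔼 u : Fin n → Fin (N + n * M) → Bool,
        w (p i) (leaf p s u i) (leaf p s u j) = 𝔼 v', 𝔼 v, Z (splice (p j) s v') v := by
      intro s
      have h2 : ∀ u : Fin n → Fin (N + n * M) → Bool,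
          w (p i) (leaf p s u i) (leaf p s u j) = Z (splice (p j) s (u j)) (u i) := by
        intro u
        rw [leaf_left hmono s u hij, leaf_right hmono s u hij]
      simp_rw [h2]
      rw [← expect_resample (fun u : Fin n → Fin (N + n * M) → Bool =>
        Z (splice (p j) s (u j)) (u i)) i]
      simp_rw [Function.update_self, Function.update_of_ne hij.ne']
      rw [← expect_resample (fun u : Fin n → Fin (N + n * M) → Bool =>
        𝔼 v, Z (splice (p j) s (u j)) v) j]
      simp_rw [Function.update_self]
      rw [Fintype.expect_const]
    simp_rw [h1]
    rw [expect_splice (p j) (fun a => 𝔼 v, Z a v)]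
  -- the average over the base of the comb
  have hbase : ∀ (r : Fin n → Fin M) (i : Fin n),
      𝔼 ℓ, G ℓ - 2 * (n * M : ℕ) / (N + n * M : ℕ) ≤ 𝔼 b : Fin N, G (pos b r i) := by
    intro r i
    have hinj : Function.Injective fun b : Fin N => pos b r i := by
      intro b b' h
      simpa [pos, Fin.ext_iff] using h
    rw [Fintype.expect_eq_sum_div_card, Fintype.expect_eq_sum_div_card, Fintype.card_fin,
      Fintype.card_fin, ← sub_div]
    have hNpos : (0 : ℝ) < N := by exact_mod_cast hN
    have hdpos : (0 : ℝ) < (N + n * M : ℕ) := by push_cast; positivity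
    have hs0 : 0 ≤ ∑ b : Fin N, G (pos b r i) := Finset.sum_nonneg fun b _ => G0 _
    have hs : ∑ ℓ, G ℓ - 2 * (n * M : ℕ) ≤ ∑ b : Fin N, G (pos b r i) := by
      have h1 := Finset.sum_add_sum_compl (Finset.univ.image fun b : Fin N => pos b r i) G
      rw [Finset.sum_image (fun _ _ _ _ h => hinj h)] at h1
      have h2 := Finset.sum_le_card_nsmul
        (Finset.univ.image fun b : Fin N => pos b r i)ᶜ G 2 (fun ℓ _ => G2 ℓ)
      rw [Finset.card_compl, Finset.card_image_of_injective _ hinj, Fintype.card_fin,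
        Finset.card_univ, Fintype.card_fin, Nat.add_sub_cancel_left, nsmul_eq_mul] at h2
      linarith
    by_cases hsg : 0 ≤ ∑ ℓ, G ℓ - 2 * (n * M : ℕ)
    · calc _ ≤ (∑ ℓ, G ℓ - 2 * (n * M : ℕ)) / N := by
            apply div_le_div_of_nonneg_left hsg hNpos
            push_cast; nlinarith [n.cast_nonneg (α := ℝ)]
        _ ≤ _ := by gcongr
    · push Not at hsg
      exact (div_nonpos_of_nonpos_of_nonneg hsg.le hdpos.le).trans (by positivity)
  have hexp : D.card * (𝔼 ℓ, G ℓ - 2 * (n * M : ℕ) / (N + n * M : ℕ) - 2 * θ * n) ≤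
      𝔼 b : Fin N, 𝔼 r : Fin n → Fin M, 𝔼 s, 𝔼 u : Fin n → Fin (N + n * M) → Bool,
        ∑ e ∈ D, w (pos b r e.1) (leaf (pos b r) s u e.1) (leaf (pos b r) s u e.2) := by
    simp_rw [Finset.expect_sum_comm]
    rw [← nsmul_eq_mul]
    refine Finset.card_nsmul_le_sum _ _ _ fun e he => ?_
    have hij := hD e he
    simp_rw [fun b r => hpair b r e.1 e.2 hij]
    have h1 : ∀ b : Fin N, 𝔼 r : Fin n → Fin M, G (pos b r e.1) - 2 * θ * n ≤
        𝔼 r : Fin n → Fin M, 𝔼 a, F (pos b r e.1)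
        (Function.update (force (pos b r) {t | t < e.2 ∧ t ≠ e.1} a) (pos b r e.2) false) := by
      intro b
      refine le_trans ?_ (expect_force hθ hM b F F0 F2 hij.ne _ (by simp) (by simp))
      have hc : ((Finset.univ.filter fun t : Fin n => t < e.2 ∧ t ≠ e.1).card : ℝ) + 1 ≤ n := by
        have : (Finset.univ.filter fun t : Fin n => t < e.2 ∧ t ≠ e.1).card < n := by
          have := Finset.card_lt_univ_of_notMem
            (s := Finset.univ.filter fun t : Fin n => t < e.2 ∧ t ≠ e.1) (x := e.1) (by simp)
          simpa using this
        exact_mod_cast this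
      have := mul_le_mul_of_nonneg_left hc (by positivity : 0 ≤ 2 * θ)
      linarith
    have h2 := Finset.expect_le_expect (s := Finset.univ) fun b _ => h1 b
    refine le_trans ?_ h2
    have hc : 𝔼 b : Fin N, 𝔼 r : Fin n → Fin M, G (pos b r e.1) =
        𝔼 r : Fin n → Fin M, 𝔼 b : Fin N, G (pos b r e.1) := Finset.expect_comm _ _ _
    rw [Finset.expect_sub_distrib, Fintype.expect_const, hc]
    have h3 := Finset.expect_le_expect (s := Finset.univ) fun r (_ : r ∈ Finset.univ) => hbase r e.1
    rw [Fintype.expect_const] at h3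
    linarith
  obtain ⟨b, -, h⟩ := Finset.exists_le_of_le_expect Finset.univ_nonempty hexp
  obtain ⟨r, -, h⟩ := Finset.exists_le_of_le_expect Finset.univ_nonempty h
  obtain ⟨s, -, h⟩ := Finset.exists_le_of_le_expect Finset.univ_nonempty h
  obtain ⟨u, -, h⟩ := Finset.exists_le_of_le_expect Finset.univ_nonempty h
  refine ⟨pos b r, leaf (pos b r) s u, fun i j hij => ?_, h⟩
  rw [leaf_left (pos_strictMono b r) s u hij, leaf_right (pos_strictMono b r) s u hij]
  exact levPair_join _ _ _

end comb

/-! ### Counting edges by blocks -/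

section counting

lemma card_agree {d : ℕ} (x : Fin d → Bool) (p : Fin d → Prop) [DecidablePred p]
    [DecidablePred fun a : Fin d → Bool => ∀ c, p c → a c = x c] :
    (Finset.univ.filter fun a : Fin d → Bool => ∀ c, p c → a c = x c).card =
      ∏ c, if p c then 1 else 2 := by
  have : (Finset.univ.filter fun a : Fin d → Bool => ∀ c, p c → a c = x c) =
      Fintype.piFinset fun c => if p c then {x c} else Finset.univ := by
    ext a
    simp only [Finset.mem_filter, Finset.mem_univ, true_and, Fintype.mem_piFinset]
    refine forall_congr' fun c => ?_
    by_cases h : p c <;> simp [h]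
  rw [this, Fintype.card_piFinset]
  refine Finset.prod_congr rfl fun c _ => ?_
  by_cases h : p c <;> simp [h]

/-- A pair branching at `ℓ` arises from `2` strings `a` (the bit at `ℓ` is free) and `2 ^ (ℓ + 1)`
strings `v` (the bits up to `ℓ` are free). -/
lemma card_fiber {d : ℕ} (ℓ : Fin d) {x y : Fin d → Bool} (h : LevPair ℓ x y) :
    (Finset.univ.filter fun q : (Fin d → Bool) × (Fin d → Bool) =>
      join ℓ q.1 q.2 = x ∧ Function.update q.1 ℓ true = y).card = 2 ^ ((ℓ : ℕ) + 2) := by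
  have : (Finset.univ.filter fun q : (Fin d → Bool) × (Fin d → Bool) =>
      join ℓ q.1 q.2 = x ∧ Function.update q.1 ℓ true = y) =
      (Finset.univ.filter fun a : Fin d → Bool => ∀ c, c ≠ ℓ → a c = y c) ×ˢ
      (Finset.univ.filter fun v : Fin d → Bool => ∀ c, ℓ < c → v c = x c) := by
    ext ⟨a, v⟩
    simp only [Finset.mem_filter, Finset.mem_univ, true_and, Finset.mem_product]
    constructor
    · rintro ⟨rfl, rfl⟩
      refine ⟨fun c hc => (Function.update_of_ne hc ..).symm, fun c hc => ?_⟩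
      simp [join, hc.not_gt, hc.ne']
    · rintro ⟨ha, hv⟩
      constructor
      · ext c
        rcases lt_trichotomy c ℓ with hc | rfl | hc
        · simp [join, hc, ha c hc.ne, h.1 c hc]
        · simp [join, h.2.1]
        · simp [join, hc.not_gt, hc.ne', hv c hc]
      · ext c
        by_cases hc : c = ℓ
        · subst hc; simp [h.2.2]
        · simp [Function.update_of_ne hc, ha c hc]
  have e1 := card_agree y (fun c => c ≠ ℓ)
  rw [Finset.prod_eq_single ℓ (by simp +contextual) (by simp), if_neg (by simp)] at e1
  have e2 := card_agree x (fun c => ℓ < c)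
  rw [Finset.prod_ite, Finset.prod_const_one, one_mul, Finset.prod_const] at e2
  have e3 : (Finset.univ.filter fun c : Fin d => ¬ ℓ < c).card = (ℓ : ℕ) + 1 := by
    rw [← Fin.card_Iic ℓ]
    congr 1; ext; simp
  rw [e3] at e2
  rw [this, Finset.card_product, e1, e2, ← pow_succ']

/-- Averaging over the random pair is the normalised sum over all pairs branching at `ℓ`. -/
lemma expect_join {d : ℕ} (ℓ : Fin d) (g : (Fin d → Bool) → (Fin d → Bool) → ℝ) :
    𝔼 a, 𝔼 v, 2 ^ (d - 1 - (ℓ : ℕ)) * g (join ℓ a v) (Function.update a ℓ true) =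
      2 / 2 ^ d * ∑ x, ∑ y, if LevPair ℓ x y then g x y else 0 := by
  have h1 : ∑ q : (Fin d → Bool) × (Fin d → Bool),
      g (join ℓ q.1 q.2) (Function.update q.1 ℓ true) =
      2 ^ ((ℓ : ℕ) + 2) * ∑ q : (Fin d → Bool) × (Fin d → Bool),
        if LevPair ℓ q.1 q.2 then g q.1 q.2 else 0 := by
    rw [← Finset.sum_filter, Finset.mul_sum]
    rw [← Finset.sum_fiberwise_of_maps_to (s := Finset.univ)
      (t := Finset.univ.filter fun q : (Fin d → Bool) × (Fin d → Bool) => LevPair ℓ q.1 q.2)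
      (g := fun q => (join ℓ q.1 q.2, Function.update q.1 ℓ true))
      (fun q _ => by simpa using levPair_join ℓ q.1 q.2)]
    refine Finset.sum_congr rfl fun q hq => ?_
    rw [Finset.mem_filter] at hq
    have h2 := card_fiber ℓ hq.2
    rw [Finset.sum_congr rfl (g := fun _ => g q.1 q.2), Finset.sum_const, nsmul_eq_mul]
    · congr 1
      have h3 : (2 : ℝ) ^ ((ℓ : ℕ) + 2) = (2 ^ ((ℓ : ℕ) + 2) : ℕ) := by push_cast; rfl
      rw [h3, ← h2]
      simp only [Prod.ext_iff]
    · intro q' hq'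
      rw [Finset.mem_filter, Prod.ext_iff] at hq'
      rw [← hq'.2.1, ← hq'.2.2]
  simp_rw [Fintype.expect_eq_sum_div_card, ← Finset.mul_sum, ← Finset.sum_div, ← Finset.mul_sum]
  rw [Fintype.sum_prod_type, Fintype.sum_prod_type] at h1
  rw [h1]
  have hd : (2 : ℝ) ^ d = 2 ^ (d - 1 - (ℓ : ℕ)) * 2 ^ ((ℓ : ℕ) + 1) := by
    rw [← pow_add]; congr 1; have := ℓ.2; omega
  simp only [Fintype.card_pi, Fintype.card_bool, Finset.prod_const, Finset.card_univ,
    Fintype.card_fin]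
  push_cast
  rw [hd, pow_succ (2 : ℝ) ((ℓ : ℕ) + 1)]
  field_simp

lemma edgeCount_eq {V : Type*} [Fintype V] [LinearOrder V] (S : SimpleGraph V) :
    edgeCount S = (Finset.univ.filter fun q : V × V => q.1 < q.2 ∧ S.Adj q.1 q.2).card := by
  unfold edgeCount
  rw [← Set.ncard_coe_finset]
  symm
  refine Set.ncard_congr (fun q _ => s(q.1, q.2)) ?_ ?_ ?_
  · rintro ⟨a, b⟩ h; simpa using (by simpa using h : a < b ∧ S.Adj a b).2
  · rintro ⟨a, b⟩ ⟨a', b'⟩ h h' heq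
    simp only [Finset.coe_filter, Finset.mem_univ, true_and, Set.mem_ofPred_eq] at h h'
    rcases Sym2.eq_iff.1 heq with ⟨rfl, rfl⟩ | ⟨rfl, rfl⟩
    · rfl
    · exact absurd h.1 h'.1.not_gt
  · intro z
    induction z using Sym2.ind with
    | _ a b =>
      intro h
      have hab : S.Adj a b := h
      rcases lt_or_gt_of_ne hab.ne with hlt | hlt
      · exact ⟨(a, b), by simpa using ⟨hlt, hab⟩, rfl⟩
      · exact ⟨(b, a), by simpa using ⟨hlt, hab.symm⟩, Sym2.eq_swap⟩

/-- The inclusion of `[m]` as the block `B_x`. -/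
def blkEmb {d : ℕ} (m : ℕ) (x : Fin d → Bool) : Fin m ↪ BlockVert d m :=
  ⟨fun a => toLex (toLex x, a), fun _ _ h => congrArg (fun p : BlockVert d m => (ofLex p).2) h⟩

/-- The block `B_x`. -/
def blk {d : ℕ} (m : ℕ) (x : Fin d → Bool) : Finset (BlockVert d m) :=
  Finset.univ.map (blkEmb m x)

lemma cnt_blk {d m : ℕ} (S : SimpleGraph (BlockVert d m)) (x y : Fin d → Bool) :
    cnt S (blk m x) (blk m y) = ∑ a : Fin m, ∑ b : Fin m,
      if S.Adj (toLex (toLex x, a)) (toLex (toLex y, b)) then (1 : ℝ) else 0 := by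
  unfold cnt blk
  rw [Finset.sum_map]
  refine Finset.sum_congr rfl fun a _ => ?_
  rw [Finset.sum_map]
  rfl

lemma card_blk {d m : ℕ} (x : Fin d → Bool) : (blk m x).card = m := by
  simp [blk]

lemma cube_lt_iff {d : ℕ} (x y : Fin d → Bool) :
    (toLex x : Cube d) < toLex y ↔ ∃ ℓ, LevPair ℓ x y := by
  constructor
  · rintro ⟨ℓ, h1, h2⟩
    refine ⟨ℓ, h1, ?_⟩
    have h2 : x ℓ < y ℓ := h2
    revert h2; cases x ℓ <;> cases y ℓ <;> simp
  · rintro ⟨ℓ, h1, h2, h3⟩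
    refine ⟨ℓ, h1, ?_⟩
    show x ℓ < y ℓ
    rw [h2, h3]; simp

lemma block_lt_iff {d m : ℕ} (x y : Fin d → Bool) (a b : Fin m) :
    (toLex (toLex x, a) : BlockVert d m) < toLex (toLex y, b) ↔
      (toLex x : Cube d) < toLex y ∨ x = y ∧ a < b := by
  rw [Prod.Lex.toLex_lt_toLex]
  rfl

lemma sum_block {d m : ℕ} (f : BlockVert d m → ℝ) :
    ∑ p, f p = ∑ x : Fin d → Bool, ∑ a : Fin m, f (toLex (toLex x, a)) := by
  rw [← Fintype.sum_prod_type (f := fun q : (Fin d → Bool) × Fin m => f (toLex (toLex q.1, q.2)))]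
  exact (Fintype.sum_equiv (Equiv.prodCongr toLex (Equiv.refl _) |>.trans toLex) _ _
    (fun q => rfl)).symm

/-- All edges but those inside blocks are counted by the pairs of blocks. -/
lemma edgeCount_le {d m : ℕ} (S : SimpleGraph (BlockVert d m)) :
    (edgeCount S : ℝ) ≤ (∑ ℓ : Fin d, ∑ x, ∑ y, if LevPair ℓ x y then
      cnt S (blk m x) (blk m y) else 0) + 2 ^ d * (m : ℝ) ^ 2 := by
  have h1 : (edgeCount S : ℝ) = ∑ x : Fin d → Bool, ∑ y : Fin d → Bool, ∑ a : Fin m, ∑ b : Fin m,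
      if (toLex (toLex x, a) : BlockVert d m) < toLex (toLex y, b) ∧
        S.Adj (toLex (toLex x, a)) (toLex (toLex y, b)) then (1 : ℝ) else 0 := by
    rw [edgeCount_eq, Finset.card_filter]
    push_cast
    rw [Fintype.sum_prod_type, sum_block]
    refine Finset.sum_congr rfl fun x _ => ?_
    refine Eq.trans ?_ Finset.sum_comm
    refine Finset.sum_congr rfl fun a _ => ?_
    rw [sum_block]
  have h2 : (2 : ℝ) ^ d * (m : ℝ) ^ 2 = ∑ x : Fin d → Bool, ∑ y : Fin d → Bool,
      if x = y then (m : ℝ) ^ 2 else 0 := by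
    simp
  have hcomm : ∀ f : Fin d → (Fin d → Bool) → ℝ, ∑ ℓ, ∑ x, f ℓ x = ∑ x, ∑ ℓ, f ℓ x :=
    fun f => Finset.sum_comm
  rw [h1, h2, hcomm]
  rw [← Finset.sum_add_distrib]
  refine Finset.sum_le_sum fun x _ => ?_
  rw [hcomm, ← Finset.sum_add_distrib]
  refine Finset.sum_le_sum fun y _ => ?_
  have hnn : ∀ ℓ : Fin d, (0 : ℝ) ≤ if LevPair ℓ x y then cnt S (blk m x) (blk m y) else 0 :=
    fun ℓ => by split_ifs; exacts [cnt_nonneg _ _ _, le_rfl]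
  by_cases hxy : x = y
  · rw [if_pos hxy]
    have : ∑ a : Fin m, ∑ b : Fin m,
      (if (toLex (toLex x, a) : BlockVert d m) < toLex (toLex y, b) ∧
        S.Adj (toLex (toLex x, a)) (toLex (toLex y, b)) then (1 : ℝ) else 0) ≤
        ∑ a : Fin m, ∑ b : Fin m, (1 : ℝ) :=
      Finset.sum_le_sum fun a _ => Finset.sum_le_sum fun b _ => by split_ifs <;> norm_num
    have h3 := Finset.sum_nonneg fun ℓ (_ : ℓ ∈ Finset.univ) => hnn ℓ
    simp only [Finset.sum_const, Finset.card_univ, Fintype.card_fin, nsmul_eq_mul, mul_one] at this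
    nlinarith
  · rw [if_neg hxy, add_zero]
    by_cases hlt : (toLex x : Cube d) < toLex y
    · obtain ⟨ℓ, hℓ⟩ := (cube_lt_iff x y).1 hlt
      refine le_trans ?_ (Finset.single_le_sum (fun ℓ _ => hnn ℓ) (Finset.mem_univ ℓ))
      rw [if_pos hℓ, cnt_blk]
      refine Finset.sum_le_sum fun a _ => Finset.sum_le_sum fun b _ => ?_
      split_ifs with h h' <;> first | exact absurd h.2 h' | norm_num
    · refine le_trans (le_of_eq ?_) (Finset.sum_nonneg fun ℓ _ => hnn ℓ)
      refine Finset.sum_eq_zero fun a _ => Finset.sum_eq_zero fun b _ => ?_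
      rw [if_neg]
      rw [block_lt_iff]
      tauto

lemma atLevel_unique {d : ℕ} {ℓ ℓ' : ℕ} {x y : Cube d} (h : atLevel ℓ x y) (h' : atLevel ℓ' x y) :
    ℓ = ℓ' := by
  obtain ⟨i, rfl, h1, h2⟩ := h
  obtain ⟨j, rfl, h3, h4⟩ := h'
  rcases lt_trichotomy i j with hij | rfl | hij
  · exact absurd (h4 i hij) h1
  · rfl
  · exact absurd (h2 j hij) h3

lemma sum_levelCountB_le {d m : ℕ} (R : SimpleGraph (BlockVert d m)) :
    ∑ ℓ ∈ Finset.Icc 1 d, levelCountB R ℓ ≤ edgeCount R := by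
  rw [edgeCount_eq]
  have : ∀ ℓ, levelCountB R ℓ = (Finset.univ.filter fun p : BlockVert d m × BlockVert d m =>
    p.1 < p.2 ∧ R.Adj p.1 p.2 ∧ atLevel ℓ (ofLex p.1).1 (ofLex p.2).1).card := fun ℓ => by
    unfold levelCountB
    rw [← Set.ncard_coe_finset]; simp
  simp_rw [this]
  rw [← Finset.card_biUnion]
  · refine Finset.card_le_card fun p hp => ?_
    simp only [Finset.mem_biUnion, Finset.mem_filter, Finset.mem_univ, true_and] at hp ⊢
    obtain ⟨ℓ, -, h1, h2, -⟩ := hp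
    exact ⟨h1, h2⟩
  · intro ℓ _ ℓ' _ hne
    show Disjoint (Finset.univ.filter _) (Finset.univ.filter _)
    rw [Finset.disjoint_filter]
    rintro p - ⟨-, -, h⟩ ⟨-, -, h'⟩
    exact hne (atLevel_unique h h')

lemma le_edgeCount {d m : ℕ} (R : SimpleGraph (BlockVert d m)) {ε : ℝ} (h : PropI R ε) :
    d * ((1 - ε) * 2 ^ (d - 1) * (m : ℝ) ^ 2) ≤ edgeCount R := by
  have h1 : (∑ ℓ ∈ Finset.Icc 1 d, (levelCountB R ℓ : ℝ)) ≤ edgeCount R := by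
    exact_mod_cast sum_levelCountB_le R
  refine le_trans ?_ h1
  have h2 := Finset.card_nsmul_le_sum (Finset.Icc 1 d) (fun ℓ => (levelCountB R ℓ : ℝ)) _
    (fun ℓ hℓ => (h ℓ hℓ).1)
  simpa using h2

/-- The normalised density of `S` between two blocks branching at `ℓ`. As `ℓ` is indexed from `0`,
the factor is the inverse of the reference density `2 ^ (-d + δ(x, y))` of property (ii). -/
noncomputable def bw {d m : ℕ} (S : SimpleGraph (BlockVert d m)) (ℓ : Fin d)
    (x y : Fin d → Bool) : ℝ := 2 ^ (d - 1 - (ℓ : ℕ)) * dens S (blk m x) (blk m y)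

/-- A subgraph with at least a `c` proportion of the edges has average normalised block
density almost `c`. -/
lemma expect_bw_ge {d m : ℕ} (hd : 1 ≤ d) (hm : 1 ≤ m) (R S : SimpleGraph (BlockVert d m)) {ε c : ℝ}
    (hc : 0 ≤ c) (h : PropI R ε) (hS : c * edgeCount R ≤ edgeCount S) :
    c * (1 - ε) - 2 / d ≤
      𝔼 ℓ, 𝔼 a, 𝔼 v, bw S ℓ (join ℓ a v) (Function.update a ℓ true) := by
  have h1 := le_edgeCount R h
  have h2 := edgeCount_le S
  unfold bw
  simp_rw [fun ℓ => expect_join ℓ (fun x y => dens S (blk m x) (blk m y))]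
  rw [Fintype.expect_eq_sum_div_card, ← Finset.mul_sum, Fintype.card_fin]
  set T : ℝ := ∑ ℓ : Fin d, ∑ x, ∑ y, if LevPair ℓ x y then cnt S (blk m x) (blk m y) else 0
    with hT
  have h3 : (∑ ℓ : Fin d, ∑ x, ∑ y, if LevPair ℓ x y then dens S (blk m x) (blk m y) else 0)
      = T / m ^ 2 := by
    rw [hT, Finset.sum_div]
    refine Finset.sum_congr rfl fun ℓ _ => ?_
    rw [Finset.sum_div]
    refine Finset.sum_congr rfl fun x _ => ?_
    rw [Finset.sum_div]
    refine Finset.sum_congr rfl fun y _ => ?_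
    split_ifs
    · rw [dens, card_blk, card_blk, sq]
    · simp
  rw [h3]
  have hd0 : (0 : ℝ) < d := by exact_mod_cast hd
  have hm0 : (0 : ℝ) < m := by exact_mod_cast hm
  have hp : (2 : ℝ) ^ d = 2 * 2 ^ (d - 1) := by
    rw [← pow_succ']; congr 1; omega
  rw [hp] at h2 ⊢
  have hq : (0 : ℝ) < 2 ^ (d - 1) := by positivity
  set q : ℝ := 2 ^ (d - 1)
  have h4 := mul_le_mul_of_nonneg_left h1 hc
  have h5 : c * (d * ((1 - ε) * q * (m : ℝ) ^ 2)) - 2 * q * m ^ 2 ≤ T := by linarith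
  have h6 : 2 / (2 * q) * (T / m ^ 2) / d = T / (d * q * m ^ 2) := by field_simp
  rw [h6, le_div_iff₀ (by positivity)]
  refine le_trans (le_of_eq ?_) h5
  field_simp

end counting

/-! ### Relative Turán densities of hosts -/

section turan

lemma edgeCount_iso {V W : Type*} {G : SimpleGraph V} {H : SimpleGraph W} (f : G ≃g H) :
    edgeCount G = edgeCount H := by
  unfold edgeCount
  exact Nat.card_congr f.mapEdgeSet

lemma edgeCount_coe {V : Type*} {G : SimpleGraph V} (S : G.Subgraph) :
    edgeCount S.coe = edgeCount S.spanningCoe := by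
  unfold edgeCount
  rw [SimpleGraph.Subgraph.edgeSet_spanningCoe, ← SimpleGraph.Subgraph.image_coe_edgeSet_coe,
    Set.ncard_image_of_injective _ (Sym2.map.injective Subtype.val_injective)]

lemma edgeCount_mono {V : Type*} [Finite V] {G H : SimpleGraph V} (h : G ≤ H) :
    edgeCount G ≤ edgeCount H :=
  Set.ncard_le_ncard (SimpleGraph.edgeSet_mono h) (Set.toFinite _)

lemma ratio_le_one {V : Type*} [Finite V] {G : SimpleGraph V} (S : G.Subgraph) :
    (edgeCount S.coe : ℝ) / edgeCount G ≤ 1 := by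
  refine div_le_one_of_le₀ ?_ (by positivity)
  rw [edgeCount_coe]
  exact_mod_cast edgeCount_mono S.spanningCoe_le

lemma relTuranDensityIn_nonneg {α V : Type*} [Preorder α] [Preorder V] (F : SimpleGraph α)
    (G : SimpleGraph V) : 0 ≤ relTuranDensityIn F G := by
  refine Real.sSup_nonneg ?_
  rintro r ⟨S, -, rfl⟩
  positivity

lemma ratio_le_relTuranDensityIn {α V : Type*} [Preorder α] [Preorder V] [Finite V]
    (F : SimpleGraph α) {G : SimpleGraph V} (S : G.Subgraph)
    (hS : ¬ ContainsOrderedCopy F S.coe) :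
    (edgeCount S.coe : ℝ) / edgeCount G ≤ relTuranDensityIn F G := by
  refine le_csSup ⟨1, ?_⟩ ⟨S, hS, rfl⟩
  rintro r ⟨S, -, rfl⟩
  exact ratio_le_one S

/-- Relative Turán densities are invariant under isomorphism of ordered graphs; one inequality
suffices here. -/
lemma relTuranDensityIn_comap_le {α V W : Type*} [Preorder α] [Preorder V] [Preorder W] [Finite W]
    (F : SimpleGraph α) (G : SimpleGraph W) (e : V ≃o W) :
    relTuranDensityIn F (G.comap e) ≤ relTuranDensityIn F G := by
  refine Real.sSup_le ?_ (relTuranDensityIn_nonneg F G)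
  rintro r ⟨S, hS, rfl⟩
  let S' : G.Subgraph :=
    { verts := e.symm ⁻¹' S.verts
      Adj := fun a b => S.Adj (e.symm a) (e.symm b)
      adj_sub := fun {a b} h => by simpa using S.adj_sub h
      edge_vert := fun {a b} h => S.edge_vert h
      symm := ⟨fun a b h => S.symm.symm _ _ h⟩ }
  let f : S'.coe ≃g S.coe :=
    { toEquiv := e.symm.toEquiv.subtypeEquiv fun a => Iff.rfl
      map_rel_iff' := Iff.rfl }
  have h1 : edgeCount (G.comap e) = edgeCount G :=
    edgeCount_iso (SimpleGraph.Iso.comap e.toEquiv G)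
  rw [← edgeCount_iso f, h1]
  refine ratio_le_relTuranDensityIn F S' ?_
  rintro ⟨φ, hφ, h⟩
  exact hS ⟨fun a => f (φ a), fun a b hab => e.symm.strictMono (hφ hab), fun u v huv => h u v huv⟩

/-- Every finite ordered host bounds `ρ_<(F)` from above, since it is isomorphic to one on
`Fin N`. -/
lemma relTuranDensity_le {α V : Type*} [Preorder α] [Fintype V] [LinearOrder V] (F : SimpleGraph α)
    (G : SimpleGraph V) (hG : 1 ≤ edgeCount G) : relTuranDensity F ≤ relTuranDensityIn F G := by
  let e : Fin (Fintype.card V) ≃o V := Fintype.orderIsoFinOfCardEq V rfl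
  unfold relTuranDensity
  refine le_trans (csInf_le (a := relTuranDensityIn F (G.comap e)) ⟨0, ?_⟩
    ⟨_, G.comap e, ?_, rfl⟩) (relTuranDensityIn_comap_le F G e)
  · rintro r ⟨n, G, -, rfl⟩
    exact relTuranDensityIn_nonneg F G
  · exact hG.trans_eq (edgeCount_iso (SimpleGraph.Iso.comap e.toEquiv G)).symm

lemma relTuranDensity_nonneg {α : Type*} [Preorder α] (F : SimpleGraph α) :
    0 ≤ relTuranDensity F := by
  refine Real.sInf_nonneg ?_
  rintro r ⟨n, G, -, rfl⟩
  exact relTuranDensityIn_nonneg F G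

/-- The complete graph on two vertices shows that the infimum is over a non-empty set. -/
lemma exists_near_optimal {α : Type*} [Preorder α] (F : SimpleGraph α) {δ : ℝ} (hδ : 0 < δ) :
    ∃ (n : ℕ) (G : SimpleGraph (Fin n)), 1 ≤ edgeCount G ∧
      relTuranDensityIn F G < relTuranDensity F + δ := by
  have hne : {r : ℝ | ∃ (n : ℕ) (G : SimpleGraph (Fin n)),
      1 ≤ edgeCount G ∧ r = relTuranDensityIn F G}.Nonempty := by
    refine ⟨_, 2, ⊤, ?_, rfl⟩
    rw [edgeCount_eq, Nat.one_le_iff_ne_zero, ← Nat.pos_iff_ne_zero, Finset.card_pos]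
    exact ⟨(0, 1), by simp⟩
  obtain ⟨r, ⟨n, G, h, rfl⟩, hr⟩ := Real.lt_sInf_add_pos hne hδ
  exact ⟨n, G, h, hr⟩

/-- In an `F`-free graph, an ordered map from `G` preserves at most a proportion `ρ_<(F, G)` of
the edges: the preserved edges form an `F`-free subgraph of `G`. -/
lemma preserved_le {α W : Type*} [LinearOrder α] [LinearOrder W] {n : ℕ}
    (F : SimpleGraph α) (G : SimpleGraph (Fin n)) (hG : 1 ≤ edgeCount G) {R : SimpleGraph W}
    (S : R.Subgraph) (hS : ¬ ContainsOrderedCopy F S.coe) (v : Fin n → W) (hv : StrictMono v) :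
    (((Finset.univ.filter fun e : Fin n × Fin n => e.1 < e.2 ∧ G.Adj e.1 e.2).filter
      fun e => S.spanningCoe.Adj (v e.1) (v e.2)).card : ℝ) ≤
      relTuranDensityIn F G * edgeCount G := by
  let G' : G.Subgraph :=
    { verts := {k | ∃ l, G.Adj k l ∧ S.Adj (v k) (v l)}
      Adj := fun k l => G.Adj k l ∧ S.Adj (v k) (v l)
      adj_sub := fun {k l} h => h.1
      edge_vert := fun {k l} h => ⟨l, h⟩
      symm := ⟨fun k l h => ⟨h.1.symm, h.2.symm⟩⟩ }
  have hfree : ¬ ContainsOrderedCopy F G'.coe := by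
    rintro ⟨φ, hφ, h⟩
    refine hS ⟨fun a => ⟨v (φ a), ?_⟩, fun a b hab => hv (hφ hab), fun a b hab => (h a b hab).2⟩
    obtain ⟨l, -, hl⟩ := (φ a).2
    exact S.edge_vert hl
  have h1 := ratio_le_relTuranDensityIn F G' hfree
  have h2 : (0 : ℝ) < edgeCount G := by exact_mod_cast hG
  rw [div_le_iff₀ h2, edgeCount_coe, edgeCount_eq] at h1
  refine le_trans (le_of_eq ?_) h1
  rw [Finset.filter_filter]
  congr 2
  ext e
  simp [G', and_assoc]

end turan

section upper

/-- Property (ii) bounds the normalised densities of subgraphs between large parts of blocks. -/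
lemma wt_le_of_propII {d m : ℕ} {R S : SimpleGraph (BlockVert d m)} (hSR : S ≤ R) {τ : ℝ}
    (hτ : 0 ≤ τ) (h : PropII R τ) {ℓ : Fin d} {x y : Fin d → Bool} (hxy : LevPair ℓ x y)
    {P Q : Finset (BlockVert d m)} (hP : P ⊆ blk m x) (hQ : Q ⊆ blk m y)
    (hPc : (m : ℝ) ^ ((2 : ℝ) / 3) ≤ P.card) (hQc : (m : ℝ) ^ ((2 : ℝ) / 3) ≤ Q.card) :
    2 ^ (d - 1 - (ℓ : ℕ)) * dens S P Q ≤ 1 + τ := by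
  obtain ⟨P, -, rfl⟩ := Finset.subset_map_iff.1 hP
  obtain ⟨Q, -, rfl⟩ := Finset.subset_map_iff.1 hQ
  rw [Finset.card_map] at hPc hQc
  have h1 := h (toLex x) (toLex y) ((ℓ : ℕ) + 1)
    ⟨ℓ, rfl, by show x ℓ ≠ y ℓ; rw [hxy.2.1, hxy.2.2]; simp, fun j hj => hxy.1 j hj⟩ P Q hPc hQc
  set f : Fin m × Fin m → Prop := fun pq => pq.1 ∈ P ∧ pq.2 ∈ Q ∧
    R.Adj (toLex (toLex x, pq.1)) (toLex (toLex y, pq.2)) with hf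
  have h3 : cnt S (P.map (blkEmb m x)) (Q.map (blkEmb m y)) ≤
      ({pq : Fin m × Fin m | f pq}.ncard : ℝ) := by
    have h4 : ({pq : Fin m × Fin m | f pq}.ncard : ℝ) = ∑ a ∈ P, ∑ b ∈ Q,
        if R.Adj (toLex (toLex x, a)) (toLex (toLex y, b)) then (1 : ℝ) else 0 := by
      rw [← Finset.sum_product', ← Finset.sum_filter, Finset.sum_const, nsmul_eq_mul, mul_one,
        ← Set.ncard_coe_finset]
      congr 2
      ext pq
      simp [hf, and_assoc]
    rw [h4]
    unfold cnt
    rw [Finset.sum_map]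
    refine Finset.sum_le_sum fun a _ => ?_
    rw [Finset.sum_map]
    refine Finset.sum_le_sum fun b _ => ?_
    split_ifs with h5 h6 <;> first | exact absurd (hSR h5) h6 | norm_num
  unfold dens
  rw [Finset.card_map, Finset.card_map]
  rcases eq_or_lt_of_le (by positivity : (0 : ℝ) ≤ P.card * Q.card) with h0 | h0
  · rw [← h0, div_zero, mul_zero]; positivity
  rw [← mul_div_assoc, div_le_iff₀ h0]
  have hz : (2 : ℝ) ^ (d - 1 - (ℓ : ℕ)) * 2 ^ ((((ℓ : ℕ) + 1 : ℕ) : ℤ) - (d : ℤ)) = 1 := by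
    rw [← zpow_natCast, ← zpow_add₀ (by norm_num)]
    have := ℓ.2
    have : (((d - 1 - (ℓ : ℕ) : ℕ) : ℤ) + ((((ℓ : ℕ) + 1 : ℕ) : ℤ) - (d : ℤ))) = 0 := by omega
    rw [this, zpow_zero]
  calc _ ≤ (2 : ℝ) ^ (d - 1 - (ℓ : ℕ)) *
        ((1 + τ) * 2 ^ ((((ℓ : ℕ) + 1 : ℕ) : ℤ) - (d : ℤ)) * P.card * Q.card) := by
        gcongr; exact h3.trans h1
    _ = ((2 : ℝ) ^ (d - 1 - (ℓ : ℕ)) * 2 ^ ((((ℓ : ℕ) + 1 : ℕ) : ℤ) - (d : ℤ))) *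
        ((1 + τ) * (P.card * Q.card)) := by ring
    _ = _ := by rw [hz, one_mul]

/-- A fixed proportion of a large block is large enough for property (ii). -/
lemma rpow_le_mul {γ : ℝ} (hγ : 0 < γ) {m : ℕ} (hm : 1 ≤ m) (h : 1 / γ ^ 3 ≤ m) :
    (m : ℝ) ^ ((2 : ℝ) / 3) ≤ γ * m := by
  have hm0 : (0 : ℝ) < m := by exact_mod_cast hm
  have h1 : 1 / γ ≤ (m : ℝ) ^ ((1 : ℝ) / 3) := by
    have : 1 / γ = ((1 / γ ^ 3 : ℝ)) ^ ((1 : ℝ) / 3) := by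
      rw [← one_div_pow, ← Real.rpow_natCast, ← Real.rpow_mul (by positivity)]
      norm_num
    rw [this]
    exact Real.rpow_le_rpow (by positivity) h (by norm_num)
  have h2 : (m : ℝ) = m ^ ((2 : ℝ) / 3) * (m : ℝ) ^ ((1 : ℝ) / 3) := by
    rw [← Real.rpow_add hm0]; norm_num
  rw [div_le_iff₀ hγ] at h1
  calc (m : ℝ) ^ ((2 : ℝ) / 3) = m ^ ((2 : ℝ) / 3) * 1 := (mul_one _).symm
    _ ≤ m ^ ((2 : ℝ) / 3) * ((m : ℝ) ^ ((1 : ℝ) / 3) * γ) := by gcongr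
    _ = γ * (m ^ ((2 : ℝ) / 3) * (m : ℝ) ^ ((1 : ℝ) / 3)) := by ring
    _ = γ * m := by rw [← h2]

/-- Hosts with properties (i) and (ii) are asymptotically as good as any fixed `G`: a dense subgraph
of such a host receives an ordered map from `G` preserving more than a proportion `ρ_<(F, G)` of
the edges. -/
lemma upper_bound {α : Type*} [LinearOrder α] (F : SimpleGraph α) {n : ℕ}
    (G : SimpleGraph (Fin n)) (hG : 1 ≤ edgeCount G) {ρ ε : ℝ} (hρ : 0 ≤ ρ) (hε : 0 < ε)
    (hGρ : relTuranDensityIn F G < ρ + ε / 2) :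
    ∃ τ : ℝ, 0 < τ ∧ ∃ d₀ : ℕ, ∀ d ≥ d₀, ∃ m₀ : ℕ, ∀ m ≥ m₀, ∀ R : SimpleGraph (BlockVert d m),
      PropI R τ → PropII R τ → relTuranDensityIn F R ≤ ρ + ε := by
  set D : Finset (Fin n × Fin n) :=
    Finset.univ.filter fun e : Fin n × Fin n => e.1 < e.2 ∧ G.Adj e.1 e.2 with hDdef
  have hD : ∀ e ∈ D, e.1 < e.2 := fun e he => (Finset.mem_filter.1 he).2.1
  have hDcard : (D.card : ℝ) = edgeCount G := by rw [edgeCount_eq]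
  have hD0 : (0 : ℝ) < D.card := by rw [hDcard]; exact_mod_cast hG
  set c : ℝ := ρ + ε with hc
  have hc0 : 0 < c := by positivity
  set τ : ℝ := min 1 (ε / (8 * (c + 7))) with hτdef
  -- each source of error below is at most `ε / 8`
  have hτ : 0 < τ := lt_min one_pos (by positivity)
  have hτ1 : τ ≤ 1 := min_le_left _ _
  have hτ2 : (c + 7) * τ ≤ ε / 8 := by
    have := min_le_right 1 (ε / (8 * (c + 7)))
    rw [← hτdef, le_div_iff₀ (by positivity)] at this
    linarith
  set θ : ℝ := ε / (16 * (n + 1)) with hθdef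
  have hθ : 0 < θ := by positivity
  have hθ2 : 2 * θ * n ≤ ε / 8 := by
    have h1 : θ * (16 * (n + 1)) = ε := by rw [hθdef]; field_simp
    nlinarith
  obtain ⟨M, hM⟩ := exists_nat_ge (1 / θ ^ 2)
  obtain ⟨d₁, hd₁⟩ := exists_nat_ge (16 * (1 + n * M) / ε)
  refine ⟨τ, hτ, max d₁ (n * M + 1), fun d hd => ?_⟩
  obtain ⟨N, rfl⟩ : ∃ N, d = N + n * M :=
    ⟨d - n * M, by have := (le_max_right d₁ (n * M + 1)).trans hd; omega⟩
  have hN : 0 < N := by have := (le_max_right d₁ (n * M + 1)).trans hd; omega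
  have hdpos : (0 : ℝ) < (N + n * M : ℕ) := by exact_mod_cast (by omega : 0 < N + n * M)
  have hd2 : 2 / (N + n * M : ℕ) + 2 * (n * M : ℕ) / (N + n * M : ℕ) ≤ ε / 8 := by
    have h1 : (d₁ : ℝ) ≤ (N + n * M : ℕ) := by exact_mod_cast (le_max_left _ _).trans hd
    have h2 := hd₁.trans h1
    rw [div_le_iff₀ hε] at h2
    rw [← add_div, div_le_iff₀ hdpos]
    push_cast at h2 ⊢
    linarith
  obtain ⟨γ, hγ, hemb⟩ := exists_weighted_embedding D hD (M := 2 ^ (N + n * M))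
    (one_le_pow₀ (by norm_num)) hτ hτ1
  obtain ⟨m₁, hm₁⟩ := exists_nat_ge (1 / γ ^ 3)
  refine ⟨max 1 m₁, fun m hm R hI hII => ?_⟩
  have hm1 : 1 ≤ m := (le_max_left _ _).trans hm
  have hm0 : (0 : ℝ) < m := by exact_mod_cast hm1
  have hγm : (m : ℝ) ^ ((2 : ℝ) / 3) ≤ γ * m :=
    rpow_le_mul hγ hm1 (hm₁.trans (by exact_mod_cast (le_max_right _ _).trans hm))
  have hmm : (m : ℝ) ^ ((2 : ℝ) / 3) ≤ m := by
    have := rpow_le_mul one_pos hm1 (by simpa using hm1)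
    simpa using this
  refine Real.sSup_le ?_ hc0.le
  rintro r ⟨S, hS, rfl⟩
  by_contra hcon
  push Not at hcon
  have hSR : S.spanningCoe ≤ R := S.spanningCoe_le
  have hdense : c * edgeCount R ≤ edgeCount S.spanningCoe := by
    rw [← edgeCount_coe]
    rcases eq_or_lt_of_le (Nat.cast_nonneg (α := ℝ) (edgeCount R)) with h0 | h0
    · rw [← h0]; simp
    · exact ((lt_div_iff₀ h0).1 hcon).le
  have havg := expect_bw_ge (by omega) hm1 R S.spanningCoe hc0.le hI hdense
  obtain ⟨lev, x, hlev, hx⟩ := exists_comb hN hθ hM (bw S.spanningCoe)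
    (fun ℓ x y _ => mul_nonneg (by positivity) (dens_nonneg _ _ _))
    (fun ℓ x y hxy => (wt_le_of_propII hSR hτ.le hII hxy subset_rfl subset_rfl
      (by rwa [card_blk]) (by rwa [card_blk])).trans (by linarith)) D hD
  obtain ⟨v, hv, hcount⟩ := hemb S.spanningCoe
    (fun e => 2 ^ (N + n * M - 1 - (lev e.1 : ℕ))) (fun e => by positivity)
    (fun e => pow_le_pow_right₀ (by norm_num) (by omega)) (fun k => blk m (x k))
    (fun k => by rw [← Finset.card_pos, card_blk]; exact hm1)
    (fun P hP hPc e he => wt_le_of_propII hSR hτ.le hII (hlev _ _ (hD e he)) (hP _) (hP _)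
      (by have := hPc e.1; rw [card_blk] at this; exact hγm.trans this)
      (by have := hPc e.2; rw [card_blk] at this; exact hγm.trans this))
  have hmono : StrictMono v := by
    intro i j hij
    obtain ⟨a, -, ha⟩ := Finset.mem_map.1 (hv i)
    obtain ⟨b, -, hb⟩ := Finset.mem_map.1 (hv j)
    rw [← ha, ← hb]
    exact (block_lt_iff _ _ a b).2 (Or.inl ((cube_lt_iff _ _).2 ⟨_, hlev i j hij⟩))
  have hpres := preserved_le F G hG S hS v hmono
  rw [← hDdef, ← hDcard] at hpres
  have hsum : ∑ e ∈ D, wt S.spanningCoe (fun e => 2 ^ (N + n * M - 1 - (lev e.1 : ℕ)))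
      (fun k => blk m (x k)) e = ∑ e ∈ D, bw S.spanningCoe (lev e.1) (x e.1) (x e.2) := rfl
  rw [hsum] at hcount
  set A := 𝔼 ℓ, 𝔼 a, 𝔼 v, bw S.spanningCoe ℓ (join ℓ a v) (Function.update a ℓ true)
  have hfin : (D.card : ℝ) * (ρ + ε / 2) < D.card * (A - 2 * (n * M : ℕ) / (N + n * M : ℕ)
      - 2 * θ * n - 7 * τ) := by
    refine mul_lt_mul_of_pos_left ?_ hD0
    nlinarith
  have hlt := mul_lt_mul_of_pos_right hGρ hD0
  nlinarith

end upper

end UHost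

/-- Any family `R(m,d)` of graphs on `{0,1}^d × [m]` satisfying properties
(i) and (ii) with any accuracy for all sufficiently large `m` is universally optimal:
`lim_{d→∞} lim_{m→∞} ρ_<(F, R(m,d)) = ρ_<(F)` for every ordered graph `F`. -/
theorem universal_host_family
    (R : ∀ d m : ℕ, SimpleGraph (BlockVert d m))
    (hR : ∀ (d : ℕ) (ε : ℝ), 0 < ε → ∃ m₀ : ℕ, ∀ m ≥ m₀, PropI (R d m) ε ∧ PropII (R d m) ε)
    {α : Type*} [Fintype α] [LinearOrder α] (F : SimpleGraph α)
    (ε : ℝ) (hε : 0 < ε) :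
    ∃ d₀ : ℕ, ∀ d ≥ d₀, ∃ m₁ : ℕ, ∀ m ≥ m₁,
      relTuranDensity F ≤ relTuranDensityIn F (R d m) ∧
      relTuranDensityIn F (R d m) ≤ relTuranDensity F + ε := by
  obtain ⟨n, G, hG, hGρ⟩ := UHost.exists_near_optimal F (half_pos hε)
  obtain ⟨τ, hτ, d₀, hd₀⟩ :=
    UHost.upper_bound F G hG (UHost.relTuranDensity_nonneg F) hε hGρ
  refine ⟨max 1 d₀, fun d hd => ?_⟩
  have hd1 : 1 ≤ d := (le_max_left _ _).trans hd
  obtain ⟨m₁, hm₁⟩ := hd₀ d ((le_max_right _ _).trans hd)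
  obtain ⟨m₂, hm₂⟩ := hR d τ hτ
  obtain ⟨m₃, hm₃⟩ := hR d (1 / 2) (by norm_num)
  refine ⟨max 1 (max m₁ (max m₂ m₃)), fun m hm => ?_⟩
  simp only [ge_iff_le, max_le_iff] at hm
  obtain ⟨hm0, h1, h2, h3⟩ := hm
  refine ⟨UHost.relTuranDensity_le F _ ?_, hm₁ m h1 _ (hm₂ m h2).1 (hm₂ m h2).2⟩
  -- property (i) forces at least one edge
  have h4 := UHost.le_edgeCount (R d m) (hm₃ m h3).1
  have hd0 : (0 : ℝ) < d := by exact_mod_cast hd1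
  have hm0' : (0 : ℝ) < m := by exact_mod_cast hm0
  have h5 : (0 : ℝ) < edgeCount (R d m) := lt_of_lt_of_le (by norm_num; positivity) h4
  exact_mod_cast h5
end

section
/- For every ordered graph F, ρ_<(F) = inf{α ∈ [0,1] : there exists C ∈ ℕ such that for every d ∈ ℕ, every (α,C)-rich graph G on {0,1}^d contains an ordered copy of F}. -/
/-!
Write `A` for the set of all `a ∈ [0, 1]` such that graphs on the cube with sufficiently many
`a`-rich levels contain `F`. Two averaging arguments relate `A` to the densities `ρ_<(F, G)`.

*`inf A ≤ ρ_<(F)`.* Let `G` be a graph on `n` vertices, let `ρ_<(F, G) < a`, and let `H` be a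
graph on the cube with many `a`-rich levels. A *comb* with teeth at levels `ℓ 0 < ℓ 1 < ⋯` is an
increasing sequence of `n` points of the cube whose `i`-th and `j`-th members (`i < j`) are at
level `ℓ i`. Choose the teeth at random from `n` consecutive groups of `m ^ 2` rich levels and all
free bits at random. A pair of the comb would be a uniformly random pair at its level, and so an
edge of `H` with probability at least `a`, were it not for the bits forced at the other teeth. By
a second moment computation (`one_step`), forcing a bit at a random one of `m ^ 2` places costs at
most `1 / m`, so every pair is an edge with probability at least `a - n / m` (`comb_prob`). Hence
some comb pulls `H` back to a subgraph of `G` of relative density at least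
`a - n / m > ρ_<(F, G)`; it contains `F`, and so does `H` (`rich_of_relTuranDensityIn`).

*`ρ_<(F) ≤ inf A`.* Let `a ∈ A`. The host graph is an explicit blow-up of the cube. Every point
`x` is replaced by a block of vertices `(x, b)`, where the label `b` is a word of bits indexed by
pairs (point, coordinate); `(x, b)` and `(y, c)` are adjacent if `b (y, i) = c (x, i)` for every
coordinate `i` after the first difference of `x` and `y`. The density between two blocks at level
`ℓ` is then `2 ^ (ℓ - d)`, so that all levels carry the same number of edges. The full
transversal cliques of this graph form a group that acts transitively enough for a uniformly
random clique to meet two given blocks in a uniformly random edge (`card_cliques_pair`). A clique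
is a copy of the cube, and for a subgraph `K` of the host graph, the sum over all levels of the
relative density of the graph that `K` induces on the clique has average proportional to the
number of edges of `K`. If none of these induced graphs contains `F`, then each has fewer than `C`
rich levels, its sum is at most `C + a * d` out of `d`, and `K` has relative density at most
`a + C / d` (`sum_labCount_le`).

An `F`-free subgraph `G'` in the definition of `ρ_<(F, G)` may lack vertices of `G`, so that
isolated vertices of `F` matter. This is handled by discarding the edges of `G'` at vertices that
are among the first or last few vertices of `G'` in their block, which costs `O(1 / d)` in
density; a copy of the non-isolated part of `F` in the remaining graph leaves room for the
isolated vertices (`copy_of_central`). If `F` has no edges at all, `ρ_<(F) ≤ 0` is checked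
directly.
-/

open scoped Classical

namespace RhoRich

open Finset

set_option linter.unusedSectionVars false

/-! ### Forcing random bits -/

section Forcing

variable {J : Type*} [Fintype J] [DecidableEq J]

/-- The sign `±1` recording whether the bit of `z` at `p` equals `b`. -/
noncomputable def sgn (b : Bool) (z : J → Bool) (p : J) : ℝ := if z p = b then 1 else -1

/-- Flipping the bit at `p`, as a permutation of the set of words. -/
def flipBit (p : J) : Equiv.Perm (J → Bool) :=
  Function.Involutive.toPerm (fun z => Function.update z p (!z p)) (by
    intro z; ext q; by_cases h : q = p <;> simp [h])

lemma flipBit_apply (p : J) (z : J → Bool) :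
    flipBit p z = Function.update z p (!z p) := rfl

/-- Forcing the bit at `p` to be `b` reweights the uniform measure by `1 + sgn`. -/
lemma sum_update (f : (J → Bool) → ℝ) (p : J) (b : Bool) :
    ∑ z, f (Function.update z p b) = ∑ z, f z * (1 + sgn b z p) := by
  have h1 : ∑ z, f z * (1 + sgn b z p)
      = ∑ z, f (flipBit p z) * (1 + sgn b (flipBit p z) p) :=
    (Equiv.sum_comp (flipBit p) (fun z => f z * (1 + sgn b z p))).symm
  have h2 : ∑ z, (f z * (1 + sgn b z p) + f (flipBit p z) * (1 + sgn b (flipBit p z) p))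
      = ∑ z, 2 * f (Function.update z p b) := by
    refine sum_congr rfl fun z _ => ?_
    have h3 : Function.update z p (z p) = z := Function.update_eq_self p z
    rcases hz : z p with _ | _ <;> rcases b with _ | _ <;>
      simp [flipBit_apply, sgn, hz] <;> rw [hz] at h3 <;> (try rw [h3]) <;> ring
  rw [sum_add_distrib, ← h1, ← mul_sum] at h2
  linarith

lemma sum_sgn_mul (b : Bool) {p q : J} (h : p ≠ q) :
    ∑ z : J → Bool, sgn b z p * sgn b z q = 0 := by
  have h1 : ∑ z : J → Bool, sgn b z p * sgn b z q
      = ∑ z, sgn b (flipBit p z) p * sgn b (flipBit p z) q :=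
    (Equiv.sum_comp (flipBit p) (fun z => sgn b z p * sgn b z q)).symm
  have h2 : ∑ z, sgn b (flipBit p z) p * sgn b (flipBit p z) q
      = - ∑ z : J → Bool, sgn b z p * sgn b z q := by
    rw [← sum_neg_distrib]
    refine sum_congr rfl fun z _ => ?_
    have : (flipBit p z) q = z q := by simp [flipBit_apply, h.symm]
    rw [← neg_mul]
    congr 1
    · rcases hz : z p with _ | _ <;> rcases b with _ | _ <;> simp [flipBit_apply, sgn, hz]
    · simp [sgn, this]
  linarith

/-- Second moment: distinct signs are orthogonal, so a sum of `m ^ 2` of them has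
mean square `m ^ 2`. -/
lemma sum_sgn_sq (b : Bool) (m : ℕ) (P : Fin (m ^ 2) → J) (hP : Function.Injective P) :
    ∑ z : J → Bool, (∑ c, sgn b z (P c)) ^ 2 = (m : ℝ) ^ 2 * Fintype.card (J → Bool) := by
  have h1 : ∀ z : J → Bool, (∑ c, sgn b z (P c)) ^ 2
      = ∑ c, ∑ c', sgn b z (P c) * sgn b z (P c') := by
    intro z; rw [sq, sum_mul_sum]
  simp_rw [h1]
  rw [sum_comm]
  have h2 : ∀ c : Fin (m ^ 2), ∑ z : J → Bool, ∑ c', sgn b z (P c) * sgn b z (P c')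
      = Fintype.card (J → Bool) := by
    intro c
    rw [sum_comm, sum_eq_single c]
    · have : ∀ z : J → Bool, sgn b z (P c) * sgn b z (P c) = 1 := by
        intro z; unfold sgn; split_ifs <;> norm_num
      simp [this]
    · intro c' _ hc
      exact sum_sgn_mul b (fun h => hc (hP h).symm)
    · simp
  simp_rw [h2]
  simp

/-- Forcing one bit, at a random place among `m ^ 2` places, changes the mean of a function
with values in `[0, 1]` by at most `1 / m`. -/
lemma one_step (b : Bool) (m : ℕ) (hm : 0 < m) (P : Fin (m ^ 2) → J)
    (hP : Function.Injective P) (f : (J → Bool) → ℝ) (h0 : ∀ z, 0 ≤ f z) (h1 : ∀ z, f z ≤ 1) :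
    (m : ℝ) ^ 2 * ∑ z, f z - m * Fintype.card (J → Bool)
      ≤ ∑ c, ∑ z, f (Function.update z (P c) b) := by
  have hm' : (0 : ℝ) < m := by exact_mod_cast hm
  have e1 : ∑ c, ∑ z, f (Function.update z (P c) b)
      = (m : ℝ) ^ 2 * ∑ z, f z + ∑ z, f z * ∑ c, sgn b z (P c) := by
    simp_rw [sum_update]
    rw [sum_comm, mul_sum, ← sum_add_distrib]
    refine sum_congr rfl fun z _ => ?_
    rw [← mul_sum, sum_add_distrib]
    simp
    ring
  have e2 : ∀ z, -(((∑ c, sgn b z (P c)) ^ 2 / m + m) / 2) ≤ f z * ∑ c, sgn b z (P c) := by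
    intro z
    set S := ∑ c, sgn b z (P c)
    have h3 : |S| ≤ (S ^ 2 / m + m) / 2 := by
      rw [le_div_iff₀ (by norm_num), div_add' _ _ _ hm'.ne', le_div_iff₀ hm', ← sq_abs S]
      nlinarith [sq_nonneg (|S| - m)]
    have h4 : |f z * S| ≤ |S| := by
      rw [abs_mul, abs_of_nonneg (h0 z)]
      exact mul_le_of_le_one_left (abs_nonneg _) (h1 z)
    linarith [neg_abs_le (f z * S)]
  have e3 := sum_le_sum (s := univ) fun z _ => e2 z
  rw [sum_neg_distrib, ← sum_div, sum_add_distrib, ← sum_div, sum_sgn_sq b m P hP] at e3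
  rw [e1]
  simp only [sum_const, card_univ, nsmul_eq_mul] at e3
  have e4 : ((m : ℝ) ^ 2 * (Fintype.card (J → Bool)) / m
      + (Fintype.card (J → Bool)) * m) / 2 = m * Fintype.card (J → Bool) := by
    field_simp; ring
  rw [e4] at e3
  linarith

/-- Resampling one coordinate of a uniformly random function. -/
lemma sum_resample {ι κ : Type*} [Fintype ι] [DecidableEq ι] [Fintype κ] (r : ι)
    (A : (ι → κ) → ℝ) :
    ∑ k : ι → κ, ∑ c : κ, A (Function.update k r c) = Fintype.card κ * ∑ k, A k := by
  have h : Function.Involutive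
      (fun x : (ι → κ) × κ => (Function.update x.1 r x.2, x.1 r)) := by
    rintro ⟨k, c⟩; simp
  have := Equiv.sum_comp h.toPerm (fun x : (ι → κ) × κ => A x.1)
  rw [Fintype.sum_prod_type, Fintype.sum_prod_type] at this
  simp only [Function.Involutive.coe_toPerm] at this
  rw [this, mul_sum]
  simp

variable {n K : ℕ}

/-- The word `z` with, for each `r` in the list, the bit at position `P r (k r)` forced to
be `b r`. -/
def force (P : Fin n → Fin K → J) (b : Fin n → Bool) (k : Fin n → Fin K) :
    List (Fin n) → (J → Bool) → (J → Bool)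
  | [], z => z
  | r :: l, z => force P b k l (Function.update z (P r (k r)) (b r))

lemma force_of_forall_ne (P : Fin n → Fin K → J) (b : Fin n → Bool) (k : Fin n → Fin K)
    (l : List (Fin n)) (z : J → Bool) (c : J) (h : ∀ r ∈ l, c ≠ P r (k r)) :
    force P b k l z c = z c := by
  induction l generalizing z with
  | nil => rfl
  | cons r l ih =>
    rw [force, ih _ fun r' hr' => h r' (by simp [hr'])]
    simp [h r (by simp)]

lemma force_of_mem (P : Fin n → Fin K → J) (b : Fin n → Bool) (k : Fin n → Fin K)
    (hP : ∀ r r', P r (k r) = P r' (k r') → r = r')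
    (l : List (Fin n)) (z : J → Bool) (r : Fin n) (h : r ∈ l) :
    force P b k l z (P r (k r)) = b r := by
  induction l generalizing z with
  | nil => simp at h
  | cons s l ih =>
    rw [force]
    by_cases hr : r ∈ l
    · exact ih _ hr
    · have hs : r = s := by simpa [hr] using h
      subst hs
      rw [force_of_forall_ne]
      · simp
      · intro r' hr' he
        exact hr (hP _ _ he ▸ hr')

lemma force_update (P : Fin n → Fin K → J) (b : Fin n → Bool) (k : Fin n → Fin K)
    (l : List (Fin n)) (z : J → Bool) (r : Fin n) (h : r ∉ l) (c : Fin K) :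
    force P b (Function.update k r c) l z = force P b k l z := by
  induction l generalizing z with
  | nil => rfl
  | cons s l ih =>
    have hs : s ≠ r := fun hh => h (by simp [hh])
    rw [force, force, ih _ (fun hh => h (by simp [hh])), Function.update_of_ne hs]

/-- Hybrid argument: forcing the bits of `l` one at a time costs `1 / m` each. -/
lemma multi_step (m : ℕ) (hm : 0 < m) (P : Fin n → Fin (m ^ 2) → J)
    (hP : ∀ r, Function.Injective (P r)) (b : Fin n → Bool)
    (Φ : (Fin n → Fin (m ^ 2)) → (J → Bool) → ℝ)
    (h0 : ∀ k z, 0 ≤ Φ k z) (h1 : ∀ k z, Φ k z ≤ 1)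
    (l : List (Fin n)) (hl : l.Nodup)
    (hΦ : ∀ r ∈ l, ∀ k c, Φ (Function.update k r c) = Φ k) :
    ∑ k, ∑ z, Φ k z
        - l.length * ((Fintype.card (Fin n → Fin (m ^ 2)) : ℝ) * Fintype.card (J → Bool) / m)
      ≤ ∑ k, ∑ z, Φ k (force P b k l z) := by
  have hm' : (0 : ℝ) < m := by exact_mod_cast hm
  induction l with
  | nil => simp [force]
  | cons r l ih =>
    have ih := ih (List.nodup_cons.1 hl).2 fun r' hr' => hΦ r' (by simp [hr'])
    have hr : r ∉ l := (List.nodup_cons.1 hl).1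
    set A : (Fin n → Fin (m ^ 2)) → ℝ := fun k => ∑ z, Φ k (force P b k (r :: l) z) with hA
    have e1 := sum_resample r A
    have e2 : ∀ k, (m : ℝ) ^ 2 * ∑ z, Φ k (force P b k l z) - m * Fintype.card (J → Bool)
        ≤ ∑ c, A (Function.update k r c) := by
      intro k
      refine (one_step (b r) m hm (P r) (hP r) (fun z => Φ k (force P b k l z))
        (fun z => h0 _ _) (fun z => h1 _ _)).trans (le_of_eq ?_)
      refine sum_congr rfl fun c _ => sum_congr rfl fun z _ => ?_
      rw [hΦ r (by simp), force, Function.update_self, force_update _ _ _ _ _ _ hr]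
    have e3 := sum_le_sum (s := univ) fun k _ => e2 k
    rw [e1, sum_sub_distrib, ← mul_sum] at e3
    simp only [sum_const, card_univ, nsmul_eq_mul, Fintype.card_fin, Nat.cast_pow] at e3
    set B := ∑ k, ∑ z, Φ k (force P b k l z)
    set A' := ∑ k, A k
    set X := (Fintype.card (Fin n → Fin (m ^ 2)) : ℝ)
    set N := (Fintype.card (J → Bool) : ℝ)
    have e4 : B - X * N / m ≤ A' := by
      have : (m : ℝ) ^ 2 * (B - X * N / m) ≤ m ^ 2 * A' := by
        refine le_trans (le_of_eq ?_) e3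
        field_simp
      exact le_of_mul_le_mul_left this (by positivity)
    simp only [List.length_cons, Nat.cast_add, Nat.cast_one]
    linarith

/-- The bits of a uniformly random word read along an injection are uniformly random. -/
lemma sum_comp_inj {I : Type*} [Fintype I] [DecidableEq I] (σ : J → I)
    (hσ : Function.Injective σ) (f : (J → Bool) → ℝ) :
    Fintype.card (J → Bool) * ∑ z : I → Bool, f (z ∘ σ)
      = Fintype.card (I → Bool) * ∑ z, f z := by
  let e : J ⊕ ↥(Set.range σ)ᶜ ≃ I :=
    ((Equiv.ofInjective σ hσ).sumCongr (Equiv.refl _)).trans (Equiv.Set.sumCompl (Set.range σ))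
  have he : ∀ j, e (Sum.inl j) = σ j := fun j => by simp [e]
  let E : (I → Bool) ≃ (J → Bool) × (↥(Set.range σ)ᶜ → Bool) :=
    (e.symm.arrowCongr (Equiv.refl Bool)).trans (Equiv.sumArrowEquivProdArrow _ _ _)
  have hE : ∀ z, (E z).1 = z ∘ σ := by
    intro z; ext j; simp [E, he, Equiv.sumArrowEquivProdArrow]
  have key : ∀ g : (J → Bool) → ℝ, ∑ z : I → Bool, g (z ∘ σ)
      = Fintype.card (↥(Set.range σ)ᶜ → Bool) * ∑ z, g z := by
    intro g
    have := Equiv.sum_comp E (fun x => g x.1)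
    simp only [hE] at this
    rw [this, Fintype.sum_prod_type, mul_sum]
    simp
  have h1 := key (fun _ => 1)
  simp only [sum_const, card_univ, nsmul_eq_mul, mul_one] at h1
  rw [key f, h1]
  ring

end Forcing

/-! ### Counting pairs at a given level -/

lemma cube_lt_iff {d : ℕ} {x y : Cube d} :
    x < y ↔ ∃ i : Fin d, (∀ j < i, ofLex x j = ofLex y j) ∧ ofLex x i < ofLex y i := Iff.rfl

lemma lt_of_bits {d : ℕ} {x y : Cube d} (q : Fin d) (h : ∀ j < q, ofLex x j = ofLex y j)
    (hx : ofLex x q = false) (hy : ofLex y q = true) : x < y :=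
  cube_lt_iff.2 ⟨q, h, by rw [hx, hy]; decide⟩

lemma atLevel_succ_iff {d : ℕ} {x y : Cube d} (q : Fin d) :
    atLevel ((q : ℕ) + 1) x y ↔ ofLex x q ≠ ofLex y q ∧ ∀ j < q, ofLex x j = ofLex y j := by
  constructor
  · rintro ⟨i, hi, h⟩
    have : i = q := Fin.ext (by omega)
    exact this ▸ h
  · intro h
    exact ⟨q, rfl, h⟩

lemma lt_and_atLevel_iff {d : ℕ} {x y : Cube d} (q : Fin d) :
    (x < y ∧ atLevel ((q : ℕ) + 1) x y) ↔
      (∀ j < q, ofLex x j = ofLex y j) ∧ ofLex x q = false ∧ ofLex y q = true := by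
  rw [atLevel_succ_iff]
  constructor
  · rintro ⟨h, hne, hq⟩
    obtain ⟨i, hi, hlt⟩ := cube_lt_iff.1 h
    have : i = q := by
      rcases lt_trichotomy i q with h1 | h1 | h1
      · exact absurd (hq i h1) hlt.ne
      · exact h1
      · exact absurd (hi q h1) hne
    subst this
    refine ⟨hq, ?_⟩
    rcases h1 : ofLex x i <;> rcases h2 : ofLex y i <;> rw [h1, h2] at hlt <;>
      first | exact ⟨rfl, rfl⟩ | exact absurd hlt (by decide)
  · rintro ⟨h, hx, hy⟩
    exact ⟨lt_of_bits q h hx hy, by rw [hx, hy]; decide, h⟩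

/-- A pair of points at level `q + 1` read off from two words `z (false, ·)`, `z (true, ·)`:
the second point is the second word with bit `q` set to `1`; the first point copies it before
`q`, has a `0` at `q`, and follows the first word after `q`. -/
def pairAt {d : ℕ} (q : Fin d) (z : Bool × Fin d → Bool) : Cube d × Cube d :=
  (toLex fun p => if p < q then z (true, p) else if p = q then false else z (false, p),
   toLex fun p => if p = q then true else z (true, p))

lemma pairAt_mem {d : ℕ} (q : Fin d) (z : Bool × Fin d → Bool) :
    (pairAt q z).1 < (pairAt q z).2 ∧ atLevel ((q : ℕ) + 1) (pairAt q z).1 (pairAt q z).2 := by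
  rw [lt_and_atLevel_iff]
  refine ⟨fun j hj => ?_, ?_, ?_⟩
  · simp [pairAt, hj, hj.ne]
  · simp [pairAt]
  · simp [pairAt]

lemma card_words (d : ℕ) : Fintype.card (Bool × Fin d → Bool) = 2 ^ (2 * d) := by
  simp

/-- All fibres of `pairAt q` over the pairs at level `q + 1` have `2 ^ (q + 2)` elements: the
bits of the first word up to `q` and the bit `q` of the second word are ignored. -/
lemma card_pairAt_fiber {d : ℕ} (q : Fin d) (a : Cube d × Cube d)
    (ha : a.1 < a.2 ∧ atLevel ((q : ℕ) + 1) a.1 a.2) :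
    #{z : Bool × Fin d → Bool | pairAt q z = a} = 2 ^ ((q : ℕ) + 2) := by
  obtain ⟨h1, h2, h3⟩ := (lt_and_atLevel_iff q).1 ha
  have : ({z : Bool × Fin d → Bool | pairAt q z = a} : Finset _)
      = Fintype.piFinset fun c : Bool × Fin d =>
          if (c.1 = false ∧ c.2 ≤ q) ∨ (c.1 = true ∧ c.2 = q) then univ
          else {if c.1 then ofLex a.2 c.2 else ofLex a.1 c.2} := by
    ext z
    simp only [mem_filter, mem_univ, true_and, Fintype.mem_piFinset]
    constructor
    · rintro rfl ⟨c, p⟩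
      rcases c with _ | _
      · by_cases h : p ≤ q
        · simp [h]
        · simp [h, pairAt, lt_of_not_ge h |>.not_gt, (lt_of_not_ge h).ne']
      · by_cases h : p = q
        · simp [h]
        · simp [h, pairAt]
    · intro h
      have hf : ∀ p, q < p → z (false, p) = ofLex a.1 p := fun p hp => by
        simpa [hp.not_ge] using h (false, p)
      have ht : ∀ p, p ≠ q → z (true, p) = ofLex a.2 p := fun p hp => by
        simpa [hp] using h (true, p)
      refine Prod.ext ?_ ?_
      · refine ofLex.injective (funext fun p => ?_)
        simp only [pairAt, ofLex_toLex]
        rcases lt_trichotomy p q with hp | hp | hp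
        · simp [hp, ht p hp.ne, h1 p hp]
        · subst hp; simp [h2]
        · simp [hp.not_gt, hp.ne', hf p hp]
      · refine ofLex.injective (funext fun p => ?_)
        simp only [pairAt, ofLex_toLex]
        by_cases hp : p = q
        · subst hp; simp [h3]
        · simp [hp, ht p hp]
  rw [this, Fintype.card_piFinset, Fintype.prod_prod_type, Fintype.prod_bool]
  have e1 : ∀ p : Fin d, #(if ((true = false) ∧ p ≤ q) ∨ (true = true ∧ p = q) then
      (univ : Finset Bool) else {if true then ofLex a.2 p else ofLex a.1 p})
        = if p = q then 2 else 1 := by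
    intro p; by_cases h : p = q <;> simp [h]
  have e2 : ∀ p : Fin d, #(if ((false = false) ∧ p ≤ q) ∨ (false = true ∧ p = q) then
      (univ : Finset Bool) else {if false = true then ofLex a.2 p else ofLex a.1 p})
        = if p ≤ q then 2 else 1 := by
    intro p; by_cases h : p ≤ q <;> simp [h]
  have e3 : #{p : Fin d | p ≤ q} = (q : ℕ) + 1 := by
    rw [← Fin.card_Iic]; congr 1; ext; simp
  calc _ = (∏ p : Fin d, if p = q then 2 else 1) * ∏ p : Fin d, if p ≤ q then 2 else 1 := by
        congr 1
        · exact prod_congr rfl fun p _ => e1 p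
        · exact prod_congr rfl fun p _ => e2 p
    _ = 2 * 2 ^ ((q : ℕ) + 1) := by
        rw [prod_ite_eq' univ q, prod_ite, prod_const, e3]; simp
    _ = 2 ^ ((q : ℕ) + 2) := by ring

lemma levelCount_eq {d : ℕ} (H : SimpleGraph (Cube d)) (ℓ : ℕ) :
    levelCount H ℓ = #{p : Cube d × Cube d | p.1 < p.2 ∧ H.Adj p.1 p.2 ∧ atLevel ℓ p.1 p.2} := by
  rw [levelCount, Set.ncard_eq_toFinset_card']
  congr 1; ext; simp

/-- `pairAt q` turns uniformly random words into a uniformly random pair at level `q + 1`. -/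
lemma card_pairAt_adj {d : ℕ} (q : Fin d) (H : SimpleGraph (Cube d)) :
    #{z : Bool × Fin d → Bool | H.Adj (pairAt q z).1 (pairAt q z).2}
      = levelCount H ((q : ℕ) + 1) * 2 ^ ((q : ℕ) + 2) := by
  rw [levelCount_eq]
  rw [card_eq_sum_card_fiberwise (f := pairAt q) (t := {p : Cube d × Cube d |
      p.1 < p.2 ∧ H.Adj p.1 p.2 ∧ atLevel ((q : ℕ) + 1) p.1 p.2})]
  · rw [sum_const_nat (m := 2 ^ ((q : ℕ) + 2))]
    intro a ha
    simp only [mem_filter, mem_univ, true_and] at ha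
    rw [← card_pairAt_fiber q a ⟨ha.1, ha.2.2⟩]
    congr 1
    ext z
    simp only [mem_filter, mem_univ, true_and]
    constructor
    · exact fun h => h.2
    · rintro rfl; exact ⟨ha.2.1, rfl⟩
  · intro z hz
    have := pairAt_mem q z
    simp at hz ⊢
    exact ⟨this.1, hz, this.2⟩

lemma tau_mul {d : ℕ} (q : Fin d) : tau d ((q : ℕ) + 1) * 2 ^ ((q : ℕ) + 2) = 2 ^ (2 * d) := by
  rw [tau, ← pow_add]; congr 1; omega

lemma levelCount_top {d : ℕ} (q : Fin d) :
    levelCount (⊤ : SimpleGraph (Cube d)) ((q : ℕ) + 1) = tau d ((q : ℕ) + 1) := by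
  have h := card_pairAt_adj q (⊤ : SimpleGraph (Cube d))
  have h2 : 2 ^ (2 * d) = levelCount (⊤ : SimpleGraph (Cube d)) ((q : ℕ) + 1)
      * 2 ^ ((q : ℕ) + 2) := by
    rw [← h, ← card_words, ← card_univ]
    congr 1
    ext z
    simp [(pairAt_mem q z).1.ne]
  rw [← tau_mul q] at h2
  exact (Nat.eq_of_mul_eq_mul_right (by positivity) h2).symm

lemma levelCount_le_tau {d : ℕ} (H : SimpleGraph (Cube d)) (q : Fin d) :
    levelCount H ((q : ℕ) + 1) ≤ tau d ((q : ℕ) + 1) := by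
  rw [← levelCount_top, levelCount_eq, levelCount_eq]
  refine card_le_card fun p hp => ?_
  simp only [mem_filter, mem_univ, true_and] at hp ⊢
  exact ⟨hp.1, hp.2.1.ne, hp.2.2⟩

/-! ### Random combs in the cube -/

section Comb

variable {n d : ℕ}

/-- The comb with teeth at the positions `ℓ 0 < ℓ 1 < ⋯`: the points share the common word
`z (none, ·)`, except that the `j`-th point leaves it at position `ℓ j`, where it has a `0`
instead of a `1`, and then follows its own word `z (some j, ·)`. -/
noncomputable def comb (ℓ : Fin n → Fin d) (z : Option (Fin n) × Fin d → Bool) (j : Fin n) :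
    Cube d :=
  toLex fun p => if p = ℓ j then false else if ∃ r < j, p = ℓ r then true
    else z (if p < ℓ j then none else some j, p)

lemma comb_strictMono (ℓ : Fin n → Fin d) (hℓ : StrictMono ℓ)
    (z : Option (Fin n) × Fin d → Bool) : StrictMono (comb ℓ z) := by
  intro i j hij
  refine lt_of_bits (ℓ i) (fun p hp => ?_) ?_ ?_
  · have h1 : p < ℓ j := hp.trans (hℓ hij)
    have h2 : (∃ r < i, p = ℓ r) ↔ ∃ r < j, p = ℓ r := by
      constructor
      · rintro ⟨r, hr, h⟩; exact ⟨r, hr.trans hij, h⟩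
      · rintro ⟨r, hr, h⟩; exact ⟨r, hℓ.lt_iff_lt.1 (h ▸ hp), h⟩
    simp only [comb, ofLex_toLex, hp.ne, h1.ne, hp, h1, h2, if_true, if_false]
  · simp [comb]
  · have h2 : ∃ r < j, ℓ i = ℓ r := ⟨i, hij, rfl⟩
    simp only [comb, ofLex_toLex, (hℓ hij).ne, h2, if_true, if_false]

/-- A pair of points of a comb is a pair at level `ℓ i + 1` read off from two words, in which
the bits at the other relevant teeth are forced. -/
lemma comb_pair {K : ℕ} (L : Fin n → Fin K → Fin d) (k : Fin n → Fin K)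
    (hℓ : StrictMono fun r => L r (k r)) (z : Option (Fin n) × Fin d → Bool)
    {i j : Fin n} (hij : i < j) (l : List (Fin n)) (hl : ∀ r, r ∈ l ↔ r ≤ j ∧ r ≠ i) :
    (comb (fun r => L r (k r)) z i, comb (fun r => L r (k r)) z j)
      = pairAt (L i (k i)) (force (fun r c => (true, L r c)) (fun r => decide (r ≠ j)) k l
          (z ∘ fun x => if x.1 then (if x.2 < L j (k j) then none else some j, x.2)
            else (some i, x.2))) := by
  set ℓ : Fin n → Fin d := fun r => L r (k r) with hdef
  have hP : ∀ r r', ((true, L r (k r)) : Bool × Fin d) = (true, L r' (k r')) → r = r' :=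
    fun r r' h => hℓ.injective (Prod.ext_iff.1 h).2
  set w := force (fun r c => ((true, L r c) : Bool × Fin d)) (fun r => decide (r ≠ j)) k l
          (z ∘ fun x => if x.1 then (if x.2 < L j (k j) then none else some j, x.2)
            else (some i, x.2)) with hw
  have hwf : ∀ p, w (false, p) = z (some i, p) := by
    intro p
    rw [hw, force_of_forall_ne]
    · simp
    · intro r _ h; simp at h
  have hwm : ∀ r, r ≤ j → r ≠ i → w (true, ℓ r) = decide (r ≠ j) := by
    intro r h1 h2
    exact force_of_mem (fun r c => ((true, L r c) : Bool × Fin d)) _ k hP l _ r ((hl r).2 ⟨h1, h2⟩)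
  have hwn : ∀ p, (∀ r ≤ j, r ≠ i → p ≠ ℓ r) →
      w (true, p) = z (if p < ℓ j then none else some j, p) := by
    intro p h
    rw [hw, force_of_forall_ne]
    · simp [hdef]
    · intro r hr he
      exact h r ((hl r).1 hr).1 ((hl r).1 hr).2 (Prod.ext_iff.1 he).2
  have hji : ℓ i < ℓ j := hℓ hij
  refine Prod.ext ?_ ?_
  · refine ofLex.injective (funext fun p => ?_)
    change _ = if p < ℓ i then w (true, p) else if p = ℓ i then false else w (false, p)
    simp only [comb, ofLex_toLex]
    rcases lt_trichotomy p (ℓ i) with hp | hp | hp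
    · rw [if_neg hp.ne, if_pos hp, if_pos hp]
      by_cases h : ∃ r < i, p = ℓ r
      · rw [if_pos h]
        obtain ⟨r, hr, rfl⟩ := h
        rw [hwm r (hr.trans hij).le hr.ne]
        simp [(hr.trans hij).ne]
      · rw [if_neg h, hwn, if_pos (hp.trans hji)]
        rintro r - - rfl
        exact h ⟨r, hℓ.lt_iff_lt.1 hp, rfl⟩
    · simp [hp]
    · rw [if_neg hp.ne', if_neg hp.not_gt, if_neg hp.not_gt, if_neg hp.ne', if_neg, hwf]
      rintro ⟨r, hr, rfl⟩
      exact absurd (hℓ.lt_iff_lt.1 hp) hr.not_gt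
  · refine ofLex.injective (funext fun p => ?_)
    change _ = if p = ℓ i then true else w (true, p)
    simp only [comb, ofLex_toLex]
    by_cases hp : p = ℓ i
    · rw [if_pos hp, if_neg (by rw [hp]; exact hji.ne), if_pos ⟨i, hij, hp⟩]
    rw [if_neg hp]
    by_cases hpj : p = ℓ j
    · rw [if_pos hpj, hpj, hwm j le_rfl hij.ne']; simp
    rw [if_neg hpj]
    by_cases h : ∃ r < j, p = ℓ r
    · rw [if_pos h]
      obtain ⟨r, hr, rfl⟩ := h
      rw [hwm r hr.le (fun h => hp (by rw [h]))]
      simp [hr.ne]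
    · rw [if_neg h, hwn]
      intro r hr _ he
      rcases hr.eq_or_lt with h1 | h1
      · exact hpj (by rw [he, h1])
      · exact h ⟨r, h1, he⟩

/-- If the teeth are chosen at random from `n` consecutive groups of `m ^ 2` rich levels, then
each pair of the comb is an edge of `H` with probability at least `α - n / m`. -/
lemma comb_prob (m : ℕ) (hm : 0 < m) (L : Fin n → Fin (m ^ 2) → Fin d)
    (hL : ∀ r r' c c', r < r' → L r c < L r' c') (hinj : ∀ r, Function.Injective (L r))
    (H : SimpleGraph (Cube d)) (α : ℝ)
    (hrich : ∀ r c, IsRichLevel H α ((L r c : ℕ) + 1)) {i j : Fin n} (hij : i < j) :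
    (Fintype.card (Fin n → Fin (m ^ 2)) : ℝ) *
        Fintype.card (Option (Fin n) × Fin d → Bool) * (α - n / m)
      ≤ ∑ k : Fin n → Fin (m ^ 2), ∑ z : Option (Fin n) × Fin d → Bool,
        if H.Adj (comb (fun r => L r (k r)) z i) (comb (fun r => L r (k r)) z j)
          then (1 : ℝ) else 0 := by
  have hm' : (0 : ℝ) < m := by exact_mod_cast hm
  set l : List (Fin n) := (univ.filter fun r => r ≤ j ∧ r ≠ i).toList with hldef
  have hl : ∀ r, r ∈ l ↔ r ≤ j ∧ r ≠ i := by intro r; simp [hldef]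
  have hlen : (l.length : ℝ) ≤ n := by
    rw [hldef, length_toList]
    exact_mod_cast (card_le_univ _).trans (by simp)
  set Φ : (Fin n → Fin (m ^ 2)) → (Bool × Fin d → Bool) → ℝ := fun k z =>
    if H.Adj (pairAt (L i (k i)) z).1 (pairAt (L i (k i)) z).2 then 1 else 0 with hΦ
  set N : ℝ := (Fintype.card (Bool × Fin d → Bool) : ℝ) with hN
  set N₀ : ℝ := (Fintype.card (Option (Fin n) × Fin d → Bool) : ℝ) with hN₀
  set X : ℝ := (Fintype.card (Fin n → Fin (m ^ 2)) : ℝ) with hX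
  have hNpos : 0 < N := by rw [hN]; exact_mod_cast Fintype.card_pos
  have hms := multi_step m hm (fun r c => ((true, L r c) : Bool × Fin d))
    (fun r c c' h => hinj r (Prod.ext_iff.1 h).2) (fun r => decide (r ≠ j)) Φ
    (fun k z => by simp only [hΦ]; split_ifs <;> norm_num)
    (fun k z => by simp only [hΦ]; split_ifs <;> norm_num) l (nodup_toList _)
    (fun r hr k c => by
      simp only [hΦ]; rw [Function.update_of_ne ((hl r).1 hr).2.symm])
  have hunif : ∀ k, α * N ≤ ∑ z, Φ k z := by
    intro k
    have e : ∑ z, Φ k z = (levelCount H ((L i (k i) : ℕ) + 1) : ℝ) * 2 ^ ((L i (k i) : ℕ) + 2) := by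
      simp only [hΦ]
      rw [sum_boole, card_pairAt_adj]
      push_cast; rfl
    have e2 : N = (tau d ((L i (k i) : ℕ) + 1) : ℝ) * 2 ^ ((L i (k i) : ℕ) + 2) := by
      rw [hN, card_words, ← tau_mul (L i (k i))]
      push_cast; rfl
    rw [e, e2, ← mul_assoc]
    exact mul_le_mul_of_nonneg_right (hrich i (k i)) (by positivity)
  have hcomb : ∀ k : Fin n → Fin (m ^ 2),
      N * (∑ z : Option (Fin n) × Fin d → Bool,
        if H.Adj (comb (fun r => L r (k r)) z i) (comb (fun r => L r (k r)) z j)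
          then (1 : ℝ) else 0)
      = N₀ * ∑ z, Φ k (force (fun r c => (true, L r c)) (fun r => decide (r ≠ j)) k l z) := by
    intro k
    have hσ : Function.Injective (fun x : Bool × Fin d =>
        if x.1 then ((if x.2 < L j (k j) then none else some j, x.2) : Option (Fin n) × Fin d)
            else (some i, x.2)) := by
      rintro ⟨a, p⟩ ⟨b, q⟩ h
      have hne : j ≠ i := hij.ne'
      rcases a with _ | _ <;> rcases b with _ | _ <;> simp at h ⊢ <;>
        first
          | exact h
          | exact h.2
          | exact hne h.1.2
          | exact hne h.1.2.symm
    rw [← sum_comp_inj _ hσ]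
    congr 1
    refine sum_congr rfl fun z _ => ?_
    have hp := comb_pair L k (fun r r' h => hL _ _ _ _ h) z hij l hl
    have hp1 := congrArg Prod.fst hp
    have hp2 := congrArg Prod.snd hp
    simp only at hp1 hp2
    rw [hp1, hp2]
  have h1 : X * (α * N) ≤ ∑ k, ∑ z, Φ k z := by
    have := sum_le_sum (s := univ) fun k _ => hunif k
    simpa [hX] using this
  have h2 : (l.length : ℝ) * (X * N / m) ≤ n * (X * N / m) :=
    mul_le_mul_of_nonneg_right hlen (by positivity)
  have h3 : X * N * (α - n / m) ≤ ∑ k, ∑ z, Φ k (force (fun r c => (true, L r c))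
      (fun r => decide (r ≠ j)) k l z) := by
    refine le_trans ?_ hms
    have : X * N * (α - n / m) = X * (α * N) - n * (X * N / m) := by ring
    rw [this]
    linarith
  have h4 := mul_le_mul_of_nonneg_left h3 (show 0 ≤ N₀ by positivity)
  rw [mul_sum] at h4
  simp_rw [← hcomb] at h4
  rw [← mul_sum] at h4
  refine le_of_mul_le_mul_left (le_trans (le_of_eq ?_) h4) hNpos
  ring

/-- The number of edges of a relation on a linear order, counted as increasing pairs. -/
noncomputable def pairCount {β : Type*} [Fintype β] [LinearOrder β] (A : β → β → Prop) : ℕ :=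
  #{p : β × β | p.1 < p.2 ∧ A p.1 p.2}

/-- Some comb maps at least the average number of edges of `G` to edges of `H`. -/
lemma exists_comb (m : ℕ) (hm : 0 < m) (L : Fin n → Fin (m ^ 2) → Fin d)
    (hL : ∀ r r' c c', r < r' → L r c < L r' c') (hinj : ∀ r, Function.Injective (L r))
    (H : SimpleGraph (Cube d)) (α : ℝ)
    (hrich : ∀ r c, IsRichLevel H α ((L r c : ℕ) + 1)) (G : SimpleGraph (Fin n)) :
    ∃ θ : Fin n → Cube d, StrictMono θ ∧
      (pairCount G.Adj : ℝ) * (α - n / m)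
        ≤ pairCount (fun i j => G.Adj i j ∧ H.Adj (θ i) (θ j)) := by
  have hm2 : 0 < m ^ 2 := by positivity
  have : Nonempty (Fin (m ^ 2)) := ⟨⟨0, hm2⟩⟩
  set T : Finset (Fin n × Fin n) := {p : Fin n × Fin n | p.1 < p.2 ∧ G.Adj p.1 p.2} with hT
  have h1 : ∀ p ∈ T, _ := fun p hp => comb_prob m hm L hL hinj H α hrich
    (show p.1 < p.2 by simp [hT] at hp; exact hp.1)
  have h2 := sum_le_sum h1
  rw [sum_comm] at h2
  simp_rw [sum_comm (s := T)] at h2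
  rw [sum_const, nsmul_eq_mul] at h2
  have h3 : ∑ _k : Fin n → Fin (m ^ 2), ∑ _z : Option (Fin n) × Fin d → Bool,
      (#T : ℝ) * (α - n / m) ≤ ∑ k : Fin n → Fin (m ^ 2),
        ∑ z : Option (Fin n) × Fin d → Bool, ∑ p ∈ T,
        if H.Adj (comb (fun r => L r (k r)) z p.1) (comb (fun r => L r (k r)) z p.2)
          then (1 : ℝ) else 0 := by
    refine le_trans (le_of_eq ?_) h2
    simp only [sum_const, card_univ, nsmul_eq_mul]
    ring
  obtain ⟨k, -, h4⟩ := exists_le_of_sum_le univ_nonempty h3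
  obtain ⟨z, -, h5⟩ := exists_le_of_sum_le univ_nonempty h4
  refine ⟨comb (fun r => L r (k r)) z, comb_strictMono _ (fun r r' h => hL _ _ _ _ h) z, ?_⟩
  refine le_trans h5 (le_of_eq ?_)
  rw [sum_boole, pairCount, hT, filter_filter]
  congr 2
  ext p; simp [and_assoc]

end Comb

/-! ### From host graphs to rich graphs -/

lemma edgeCount_eq {β : Type*} [Fintype β] [LinearOrder β] (G : SimpleGraph β) :
    edgeCount G = pairCount G.Adj := by
  have h : G.edgeSet = (fun p : β × β => s(p.1, p.2)) ''
      (({p : β × β | p.1 < p.2 ∧ G.Adj p.1 p.2} : Finset (β × β)) : Set (β × β)) := by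
    ext e
    induction e using Sym2.ind with
    | _ x y =>
      simp only [SimpleGraph.mem_edgeSet, coe_filter, mem_univ, true_and, Set.mem_image,
        Set.mem_ofPred_eq, Prod.exists]
      constructor
      · intro hxy
        rcases hxy.ne.lt_or_gt with hlt | hlt
        · exact ⟨x, y, ⟨hlt, hxy⟩, rfl⟩
        · exact ⟨y, x, ⟨hlt, hxy.symm⟩, Sym2.eq_swap⟩
      · rintro ⟨a, b, ⟨-, hab⟩, he⟩
        rcases Sym2.eq_iff.1 he with ⟨rfl, rfl⟩ | ⟨rfl, rfl⟩
        · exact hab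
        · exact hab.symm
  rw [edgeCount, h, Set.InjOn.ncard_image, Set.ncard_coe_finset, pairCount]
  rintro ⟨a, b⟩ hab ⟨a', b'⟩ hab' he
  simp only [coe_filter, mem_univ, true_and, Set.mem_ofPred_eq] at hab hab'
  rcases Sym2.eq_iff.1 he with ⟨rfl, rfl⟩ | ⟨rfl, rfl⟩
  · rfl
  · exact absurd hab.1 hab'.1.not_gt

lemma edgeCount_coe {β : Type*} [Fintype β] [LinearOrder β] {G : SimpleGraph β}
    (G' : G.Subgraph) : edgeCount G'.coe = pairCount G'.Adj := by
  rw [edgeCount_eq, pairCount, pairCount]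
  refine card_bij (fun p _ => (p.1.1, p.2.1)) ?_ ?_ ?_
  · intro p hp
    simpa using hp
  · rintro ⟨a, b⟩ _ ⟨a', b'⟩ _ h
    simpa [Subtype.ext_iff] using h
  · rintro ⟨a, b⟩ h
    simp only [mem_filter, mem_univ, true_and] at h
    exact ⟨(⟨a, G'.edge_vert h.2⟩, ⟨b, G'.edge_vert h.2.symm⟩), by simpa using h, rfl⟩

lemma pairCount_mono {β : Type*} [Fintype β] [LinearOrder β] {A B : β → β → Prop}
    (h : ∀ x y, x < y → A x y → B x y) : pairCount A ≤ pairCount B := by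
  refine card_le_card fun p hp => ?_
  simp only [mem_filter, mem_univ, true_and] at hp ⊢
  exact ⟨hp.1, h _ _ hp.1 hp.2⟩

/-- Rich levels can be listed as `n` consecutive groups of `K` levels. -/
lemma exists_groups {d : ℕ} (n K : ℕ) (H : SimpleGraph (Cube d)) (α : ℝ)
    (h : IsRichGraph H α ((n * K : ℕ) : ℝ)) :
    ∃ L : Fin n → Fin K → Fin d, (∀ r r' c c', r < r' → L r c < L r' c') ∧
      (∀ r, Function.Injective (L r)) ∧ ∀ r c, IsRichLevel H α ((L r c : ℕ) + 1) := by
  set S : Finset (Fin d) := {q | IsRichLevel H α ((q : ℕ) + 1)} with hS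
  have h1 : {ℓ : ℕ | ℓ ∈ Finset.Icc 1 d ∧ IsRichLevel H α ℓ}
      = (fun q : Fin d => (q : ℕ) + 1) '' (S : Set (Fin d)) := by
    ext ℓ
    simp only [mem_Icc, Set.mem_ofPred_eq, hS, coe_filter, mem_univ, true_and, Set.mem_image]
    constructor
    · rintro ⟨⟨h1, h2⟩, h3⟩
      have h4 : ℓ - 1 + 1 = ℓ := by omega
      exact ⟨⟨ℓ - 1, by omega⟩, by simpa only [h4] using h3, h4⟩
    · rintro ⟨q, hq, rfl⟩
      exact ⟨⟨by omega, q.2⟩, hq⟩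
  rw [IsRichGraph, h1, Set.ncard_image_of_injective, Set.ncard_coe_finset] at h
  swap
  · intro a b hab; exact Fin.ext (by simpa using hab)
  have h2 : n * K ≤ #S := by exact_mod_cast h
  refine ⟨fun r c => S.orderEmbOfCardLe h2 (finProdFinEquiv (r, c)), ?_, ?_, ?_⟩
  · intro r r' c c' hr
    rw [OrderEmbedding.lt_iff_lt, Fin.lt_def]
    simp only [finProdFinEquiv_apply_val]
    have : (r : ℕ) + 1 ≤ r' := hr
    have := Nat.mul_le_mul_left K this
    have := c.2
    rw [mul_add] at *
    omega
  · intro r c c' hc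
    have := finProdFinEquiv.injective ((S.orderEmbOfCardLe h2).injective hc)
    exact (Prod.ext_iff.1 this).2
  · intro r c
    have := S.orderEmbOfCardLe_mem h2 (finProdFinEquiv (r, c))
    simpa [hS] using this

/-- If every spanning `F`-free subgraph of the finite ordered graph `G` has relative density at
most `ρ < a`, then graphs with sufficiently many `a`-rich levels contain `F`: pull such a graph back to `G` along
a random comb. -/
lemma rich_of_host {α : Type*} [LinearOrder α] (F : SimpleGraph α) {n : ℕ}
    (G : SimpleGraph (Fin n)) (ρ a : ℝ) (hpos : 0 < pairCount G.Adj)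
    (h : ∀ G' : SimpleGraph (Fin n), G' ≤ G → ¬ ContainsOrderedCopy F G' →
      (pairCount G'.Adj : ℝ) ≤ ρ * pairCount G.Adj) (ha : ρ < a) :
    ∃ C : ℕ, ∀ (d : ℕ) (H : SimpleGraph (Cube d)),
        IsRichGraph H a (C : ℝ) → ContainsOrderedCopy F H := by
  obtain ⟨m, hm⟩ := exists_nat_gt ((n : ℝ) / (a - ρ))
  have ha' : 0 < a - ρ := by linarith
  have hm0 : (0 : ℝ) < m := lt_of_le_of_lt (by positivity) hm
  have hm1 : (n : ℝ) / m < a - ρ := by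
    rw [div_lt_iff₀ ha'] at hm
    rw [div_lt_iff₀ hm0]
    linarith
  refine ⟨n * m ^ 2, fun d H hH => ?_⟩
  obtain ⟨L, hL1, hL2, hL3⟩ := exists_groups n (m ^ 2) H a hH
  obtain ⟨θ, hθ, hc⟩ := exists_comb m (by exact_mod_cast hm0) L hL1 hL2 H a hL3 G
  let G' : SimpleGraph (Fin n) :=
    { Adj := fun i j => G.Adj i j ∧ H.Adj (θ i) (θ j)
      symm := ⟨fun i j hij => ⟨hij.1.symm, hij.2.symm⟩⟩
      loopless := ⟨fun i hi => hi.1.ne rfl⟩ }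
  by_contra hF
  have hG' : ¬ ContainsOrderedCopy F G' := by
    rintro ⟨φ, hφ, hadj⟩
    exact hF ⟨θ ∘ φ, hθ.comp hφ, fun u v huv => (hadj u v huv).2⟩
  have h1 := h G' (fun i j hij => hij.1) hG'
  have h2 : (pairCount G.Adj : ℝ) * (a - n / m) ≤ ρ * pairCount G.Adj := hc.trans h1
  have h3 : (0 : ℝ) < pairCount G.Adj := by exact_mod_cast hpos
  nlinarith

/-- Every `a > ρ_<(F, G)` has the property that graphs with sufficiently many `a`-rich levels
contain `F`. -/
lemma rich_of_relTuranDensityIn {α : Type*} [LinearOrder α] (F : SimpleGraph α) {n : ℕ}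
    (G : SimpleGraph (Fin n)) (hG : 1 ≤ edgeCount G) (a : ℝ) (ha : relTuranDensityIn F G < a) :
    ∃ C : ℕ, ∀ (d : ℕ) (H : SimpleGraph (Cube d)),
        IsRichGraph H a (C : ℝ) → ContainsOrderedCopy F H := by
  have hpos : 0 < pairCount G.Adj := by rw [← edgeCount_eq]; exact hG
  have hpos' : (0 : ℝ) < pairCount G.Adj := by exact_mod_cast hpos
  refine rich_of_host F G _ a hpos (fun G' hle hF => ?_) ha
  rw [← div_le_iff₀ hpos']
  refine le_csSup ⟨1, ?_⟩ ⟨SimpleGraph.toSubgraph G' hle, ?_, ?_⟩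
  · rintro r ⟨G'', -, rfl⟩
    rw [edgeCount_coe, edgeCount_eq, div_le_one hpos']
    exact_mod_cast pairCount_mono fun x y _ h => G''.adj_sub h
  · rintro ⟨φ, hφ, hadj⟩
    exact hF ⟨fun u => (φ u).1, fun u v huv => hφ huv, fun u v huv => hadj u v huv⟩
  · rw [edgeCount_coe, edgeCount_eq]
    rfl

/-- Graphs with sufficiently many complete levels contain `F`: a graph isomorphic to `F` serves as
the host graph, since its proper spanning subgraphs are `F`-free. -/
lemma one_rich {α : Type*} [Fintype α] [LinearOrder α] (F : SimpleGraph α)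
    {u v : α} (huv : F.Adj u v) :
    ∃ C : ℕ, ∀ (d : ℕ) (H : SimpleGraph (Cube d)),
        IsRichGraph H 1 (C : ℝ) → ContainsOrderedCopy F H := by
  let o : Fin (Fintype.card α) ≃o α := Fintype.orderIsoFinOfCardEq α rfl
  let G : SimpleGraph (Fin (Fintype.card α)) := F.comap o
  have hpos : 0 < pairCount G.Adj := by
    refine card_pos.2 ?_
    rcases huv.ne.lt_or_gt with h | h
    · exact ⟨(o.symm u, o.symm v), by simpa [G] using ⟨h, huv⟩⟩
    · exact ⟨(o.symm v, o.symm u), by simpa [G] using ⟨h, huv.symm⟩⟩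
  have hpos' : (0 : ℝ) < pairCount G.Adj := by exact_mod_cast hpos
  refine rich_of_host F G ((pairCount G.Adj - 1) / pairCount G.Adj) 1 hpos
    (fun G' hle hF => ?_) (by rw [div_lt_one hpos']; linarith)
  rw [div_mul_cancel₀ _ hpos'.ne']
  suffices pairCount G'.Adj < pairCount G.Adj by
    have : pairCount G'.Adj + 1 ≤ pairCount G.Adj := this
    have : (pairCount G'.Adj : ℝ) + 1 ≤ pairCount G.Adj := by exact_mod_cast this
    linarith
  refine card_lt_card ⟨fun p hp => ?_, fun hsub => hF ?_⟩
  · simp only [mem_filter, mem_univ, true_and] at hp ⊢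
    exact ⟨hp.1, hle hp.2⟩
  · have key : ∀ i j, i < j → G.Adj i j → G'.Adj i j := fun i j hij hadj => by
      have : (i, j) ∈ ({p | p.1 < p.2 ∧ G'.Adj p.1 p.2} : Finset _) :=
        hsub (by simpa using ⟨hij, hadj⟩)
      simp at this
      exact this.2
    refine ⟨o.symm, o.symm.strictMono, fun x y hxy => ?_⟩
    have hxy' : G.Adj (o.symm x) (o.symm y) := by simpa [G] using hxy
    rcases hxy'.ne.lt_or_gt with h | h
    · exact key _ _ h hxy'
    · exact (key _ _ h hxy'.symm).symm

/-! ### The host graph with shared labels -/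

/-- Labels of the vertices in a block: one bit for every pair (vertex of the cube,
coordinate). -/
abbrev Lab (d : ℕ) := Cube d × Fin d → ZMod 2

/-- Two labelled points `(x, a)`, `(y, b)` of the cube are compatible if the labels agree on the
bits shared by `x` and `y`, one for each coordinate after the first difference of `x` and `y`.
Two points at level `ℓ` share `d - ℓ` bits, so that compatibility has density `2 ^ (ℓ - d)`
there. -/
def Compat {d : ℕ} (p q : Cube d × Lab d) : Prop :=
  ∀ i, (∃ j < i, ofLex p.1 j ≠ ofLex q.1 j) → p.2 (q.1, i) = q.2 (p.1, i)

lemma Compat.symm {d : ℕ} {p q : Cube d × Lab d} (h : Compat p q) : Compat q p :=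
  fun i ⟨j, hj, hne⟩ => (h i ⟨j, hj, hne.symm⟩).symm

/-- The transversals of the labelled cube (one label for every point) that form cliques of the
compatibility graph. -/
noncomputable def cliques (d : ℕ) : Finset (Cube d → Lab d) :=
  {t | ∀ x y, Compat (x, t x) (y, t y)}

lemma mem_cliques {d : ℕ} {t : Cube d → Lab d} :
    t ∈ cliques d ↔ ∀ x y, Compat (x, t x) (y, t y) := by simp [cliques]

lemma cliques_nonempty (d : ℕ) : (cliques d).Nonempty :=
  ⟨0, mem_cliques.2 fun _ _ _ _ => rfl⟩

/-- Every compatible pair extends to a clique. -/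
lemma exists_clique {d : ℕ} {x y : Cube d} (hxy : x ≠ y) {a b : Lab d}
    (h : Compat (x, a) (y, b)) : ∃ t ∈ cliques d, t x = a ∧ t y = b := by
  refine ⟨fun z w => if z = x then a w else if z = y then b w else
    if w.1 = x then a (z, w.2) else if w.1 = y then b (z, w.2) else 0, ?_, ?_, ?_⟩
  · rw [mem_cliques]
    intro z z' i hi
    have hzz : z ≠ z' := by
      rintro rfl
      obtain ⟨j, _, hj⟩ := hi
      exact hj rfl
    have h1 := h i
    have h2 := h.symm i
    simp only at hi h1 h2 ⊢
    by_cases e1 : z = x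
    · subst e1
      by_cases e2 : z' = y
      · subst e2
        simpa [hxy.symm] using h1 hi
      · simp [hzz.symm, e2]
    · by_cases e2 : z = y
      · subst e2
        by_cases e3 : z' = x
        · subst e3
          simpa [e1] using h2 hi
        · simp [hzz.symm, e3, e1]
      · by_cases e3 : z' = x
        · subst e3; simp [e1, e2]
        · by_cases e4 : z' = y
          · subst e4; simp [e1, e2, e3]
          · simp [e1, e2, e3, e4]
  · funext w; simp
  · funext w; simp [hxy.symm]

/-- The cliques through a compatible pair are as many as those through the zero labels in the same
blocks: cliques form a group, and translation by a clique through the pair is a bijection. -/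
lemma card_cliques_fiber {d : ℕ} {x y : Cube d} (hxy : x ≠ y) {a b : Lab d}
    (h : Compat (x, a) (y, b)) :
    #{t ∈ cliques d | (t x, t y) = (a, b)} = #{t ∈ cliques d | (t x, t y) = (0, 0)} := by
  obtain ⟨s, hs, rfl, rfl⟩ := exists_clique hxy h
  rw [mem_cliques] at hs
  refine card_bij' (fun t _ => t - s) (fun t _ => t + s) ?_ ?_ ?_ ?_
  · intro t ht
    simp only [mem_filter, mem_cliques, Prod.mk.injEq] at ht ⊢
    refine ⟨fun z w i hi => ?_, by simp [ht.2.1], by simp [ht.2.2]⟩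
    have := ht.1 z w i hi
    have h' := hs z w i hi
    simp only at this h'
    simp [this, h']
  · intro t ht
    simp only [mem_filter, mem_cliques, Prod.mk.injEq] at ht ⊢
    refine ⟨fun z w i hi => ?_, by simp [ht.2.1], by simp [ht.2.2]⟩
    have := ht.1 z w i hi
    have h' := hs z w i hi
    simp only at this h'
    simp [this, h']
  · intro t _; simp
  · intro t _; simp

lemma card_compat_right {d : ℕ} {x y : Cube d} (q : Fin d) (hq : atLevel ((q : ℕ) + 1) x y)
    (a : Lab d) :
    #{b : Lab d | Compat (x, a) (y, b)} * 2 ^ (d - 1 - (q : ℕ)) = Fintype.card (Lab d) := by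
  obtain ⟨hne, heq⟩ := (atLevel_succ_iff q).1 hq
  have hiff : ∀ i, (∃ j < i, ofLex x j ≠ ofLex y j) ↔ q < i := fun i =>
    ⟨fun ⟨j, hj, h⟩ => lt_of_le_of_lt (not_lt.1 fun h' => h (heq j h')) hj,
      fun h => ⟨q, h, hne⟩⟩
  have : ({b : Lab d | Compat (x, a) (y, b)} : Finset _)
      = Fintype.piFinset fun w : Cube d × Fin d =>
          if w.1 = x ∧ q < w.2 then {a (y, w.2)} else univ := by
    ext b
    simp only [mem_filter, mem_univ, true_and, Fintype.mem_piFinset, Compat, hiff]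
    constructor
    · rintro h ⟨z, i⟩
      by_cases hz : z = x ∧ q < i
      · obtain ⟨rfl, hi⟩ := hz
        simp [hi, h i hi]
      · simp [hz]
    · intro h i hi
      simpa [hi, eq_comm] using h (x, i)
  have e1 : ∀ w : Cube d × Fin d,
      #(if w.1 = x ∧ q < w.2 then {a (y, w.2)} else (univ : Finset (ZMod 2)))
        = if w.1 = x ∧ q < w.2 then 1 else 2 := by
    intro w; split_ifs <;> simp
  have e2 : (2 : ℕ) ^ (d - 1 - (q : ℕ))
      = ∏ w : Cube d × Fin d, if w.1 = x ∧ q < w.2 then 2 else 1 := by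
    rw [prod_ite, prod_const, prod_const_one, mul_one]
    congr 1
    have : ({w : Cube d × Fin d | w.1 = x ∧ q < w.2} : Finset _) = {x} ×ˢ Ioi q := by
      ext ⟨z, i⟩
      simp only [mem_filter, mem_univ, true_and, mem_product, mem_singleton, mem_Ioi]
    rw [this, card_product, card_singleton, one_mul, Fin.card_Ioi]
  rw [this, Fintype.card_piFinset, prod_congr rfl fun w _ => e1 w, e2, ← prod_mul_distrib,
    Fintype.card_fun, ZMod.card, ← card_univ, ← prod_const]
  exact prod_congr rfl fun w _ => by split_ifs <;> rfl

lemma card_compat {d : ℕ} {x y : Cube d} (q : Fin d) (hq : atLevel ((q : ℕ) + 1) x y) :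
    #{z : Lab d × Lab d | Compat (x, z.1) (y, z.2)} * 2 ^ (d - 1 - (q : ℕ))
      = Fintype.card (Lab d) ^ 2 := by
  have : #{z : Lab d × Lab d | Compat (x, z.1) (y, z.2)}
      = ∑ a : Lab d, #{b : Lab d | Compat (x, a) (y, b)} := by
    simp only [card_filter]
    rw [Fintype.sum_prod_type]
  rw [this, sum_mul, sum_congr rfl fun a _ => card_compat_right q hq a, sum_const, card_univ,
    smul_eq_mul, sq]

/-- A uniformly random clique meets a given pair of blocks in a uniformly random compatible
pair. -/
lemma card_cliques_pair {d : ℕ} {x y : Cube d} (q : Fin d) (hq : atLevel ((q : ℕ) + 1) x y)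
    (B : Lab d → Lab d → Prop) (hB : ∀ a b, B a b → Compat (x, a) (y, b)) :
    #{t ∈ cliques d | B (t x) (t y)} * Fintype.card (Lab d) ^ 2
      = #(cliques d) * 2 ^ (d - 1 - (q : ℕ)) * #{z : Lab d × Lab d | B z.1 z.2} := by
  have hxy : x ≠ y := by
    rintro rfl
    exact ((atLevel_succ_iff q).1 hq).1 rfl
  have key : ∀ B : Lab d → Lab d → Prop, (∀ a b, B a b → Compat (x, a) (y, b)) →
      #{t ∈ cliques d | B (t x) (t y)}
        = #{z : Lab d × Lab d | B z.1 z.2} * #{t ∈ cliques d | (t x, t y) = (0, 0)} := by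
    intro B hB
    rw [card_eq_sum_card_fiberwise (f := fun t => (t x, t y))
      (t := {z : Lab d × Lab d | B z.1 z.2})]
    · rw [sum_const_nat]
      rintro ⟨a, b⟩ hz
      simp only [mem_filter, mem_univ, true_and] at hz
      rw [← card_cliques_fiber hxy (hB a b hz), filter_filter]
      congr 1
      refine filter_congr fun t _ => ?_
      simp only [Prod.mk.injEq]
      constructor
      · exact fun h => h.2
      · rintro ⟨rfl, rfl⟩; exact ⟨hz, rfl, rfl⟩
    · intro t ht
      simp at ht ⊢
      exact ht.2
  have h1 := key _ fun a b h => h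
  have h2 : #{t ∈ cliques d | Compat (x, t x) (y, t y)} = #(cliques d) := by
    rw [filter_true_of_mem]
    exact fun t ht => mem_cliques.1 ht x y
  rw [key B hB, ← h2, h1, ← card_compat q hq]
  ring

/-- The number of edges at level `ℓ` of a graph on the labelled cube, the level of an edge being
that of the points below its endpoints. -/
noncomputable def labCount {d : ℕ} (K : SimpleGraph (Cube d × Lab d)) (ℓ : ℕ) : ℕ :=
  ∑ p : Cube d × Cube d with p.1 < p.2 ∧ atLevel ℓ p.1 p.2,
    #{z : Lab d × Lab d | K.Adj (p.1, z.1) (p.2, z.2)}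

/-- Averaging over the cliques: the relative density of a level in the graphs that `K` induces on
cliques is on average proportional to the number of edges of `K` at that level, with the same
factor for all levels. -/
lemma sum_cliques_levelCount {d : ℕ} (q : Fin d) (K : SimpleGraph (Cube d × Lab d))
    (hK : ∀ p p', K.Adj p p' → Compat p p') :
    (∑ t ∈ cliques d, levelCount (K.comap fun x => (x, t x)) ((q : ℕ) + 1))
        * Fintype.card (Lab d) ^ 2 * 2 ^ (d - 1)
      = #(cliques d) * tau d ((q : ℕ) + 1) * labCount K ((q : ℕ) + 1) := by
  have htau : tau d ((q : ℕ) + 1) = 2 ^ (d - 1 - (q : ℕ)) * 2 ^ (d - 1) := by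
    rw [tau, ← pow_add]; congr 1; omega
  have h1 : ∑ t ∈ cliques d, levelCount (K.comap fun x => (x, t x)) ((q : ℕ) + 1)
      = ∑ p : Cube d × Cube d with p.1 < p.2 ∧ atLevel ((q : ℕ) + 1) p.1 p.2,
          #{t ∈ cliques d | K.Adj (p.1, t p.1) (p.2, t p.2)} := by
    simp only [card_filter]
    rw [sum_comm]
    refine sum_congr rfl fun t _ => ?_
    rw [levelCount_eq, card_filter, sum_filter]
    refine sum_congr rfl fun p _ => ?_
    simp only [SimpleGraph.comap_adj]
    by_cases h1 : p.1 < p.2 <;> by_cases h2 : atLevel ((q : ℕ) + 1) p.1 p.2 <;> simp [h1, h2]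
  rw [h1, sum_mul, labCount, htau, mul_sum, sum_mul]
  refine sum_congr rfl fun p hp => ?_
  simp only [mem_filter, mem_univ, true_and] at hp
  rw [card_cliques_pair q hp.2 (fun a b => K.Adj (p.1, a) (p.2, b)) fun a b h => hK _ _ h]
  ring

/-- In a graph with fewer than `C` rich levels, the relative densities of the `d` levels add up to
at most `C + a * d`: a rich level contributes at most `1`, any other at most `a`. -/
lemma sum_levels_le {d : ℕ} (H : SimpleGraph (Cube d)) {a : ℝ} (ha : 0 ≤ a) {C : ℕ}
    (hH : ¬ IsRichGraph H a C) :
    ∑ q : Fin d, (levelCount H ((q : ℕ) + 1) : ℝ) / tau d ((q : ℕ) + 1) ≤ C + a * d := by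
  have hpos : ∀ ℓ, (0 : ℝ) < tau d ℓ := fun ℓ => by simp [tau]
  have h1 : (#{q : Fin d | IsRichLevel H a ((q : ℕ) + 1)} : ℝ) ≤ C := by
    rw [IsRichGraph, not_le] at hH
    refine le_trans ?_ hH.le
    rw [Nat.cast_le, ← Set.ncard_coe_finset]
    refine Set.ncard_le_ncard_of_injOn (fun q : Fin d => (q : ℕ) + 1) ?_ ?_ ?_
    · intro q hq
      simp only [coe_filter, mem_univ, true_and, Set.mem_ofPred_eq, mem_Icc] at hq ⊢
      exact ⟨by omega, hq⟩
    · intro q _ q' _ h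
      exact Fin.ext (by simpa using h)
    · exact (finite_toSet (Icc 1 d)).subset fun ℓ h => h.1
  calc _ ≤ ∑ q : Fin d, ((if IsRichLevel H a ((q : ℕ) + 1) then 1 else 0) + a) := by
        refine sum_le_sum fun q _ => ?_
        rw [div_le_iff₀ (hpos _)]
        split_ifs with h
        · have : (levelCount H ((q : ℕ) + 1) : ℝ) ≤ tau d ((q : ℕ) + 1) := by
            exact_mod_cast levelCount_le_tau H q
          have := mul_nonneg ha (hpos ((q : ℕ) + 1)).le
          linarith
        · rw [IsRichLevel, not_le] at h
          linarith
    _ ≤ C + a * d := by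
        rw [sum_add_distrib, sum_boole]
        simp only [sum_const, card_univ, Fintype.card_fin, nsmul_eq_mul]
        linarith

/-- If `K` induces no rich graph on a clique, then it has few edges. -/
lemma sum_labCount_le {d : ℕ} (K : SimpleGraph (Cube d × Lab d))
    (hK : ∀ p p', K.Adj p p' → Compat p p') {a : ℝ} (ha : 0 ≤ a) {C : ℕ}
    (hfree : ∀ t ∈ cliques d, ¬ IsRichGraph (K.comap fun x => (x, t x)) a C) :
    ((∑ q : Fin d, labCount K ((q : ℕ) + 1) : ℕ) : ℝ)
      ≤ (C + a * d) * (Fintype.card (Lab d) ^ 2 * 2 ^ (d - 1)) := by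
  have hT : (0 : ℝ) < #(cliques d) := by exact_mod_cast (cliques_nonempty d).card_pos
  have hpos : ∀ ℓ, (0 : ℝ) < tau d ℓ := fun ℓ => by simp [tau]
  have key : ∀ q : Fin d, (#(cliques d) : ℝ) * labCount K ((q : ℕ) + 1)
      = (∑ t ∈ cliques d, (levelCount (K.comap fun x => (x, t x)) ((q : ℕ) + 1) : ℝ)
          / tau d ((q : ℕ) + 1)) * (Fintype.card (Lab d) ^ 2 * 2 ^ (d - 1)) := by
    intro q
    have := sum_cliques_levelCount q K hK
    have h : (∑ t ∈ cliques d, (levelCount (K.comap fun x => (x, t x)) ((q : ℕ) + 1) : ℝ))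
        * Fintype.card (Lab d) ^ 2 * 2 ^ (d - 1)
      = #(cliques d) * tau d ((q : ℕ) + 1) * labCount K ((q : ℕ) + 1) := by exact_mod_cast this
    rw [← sum_div, div_mul_eq_mul_div, eq_div_iff (hpos _).ne']
    linarith
  refine le_of_mul_le_mul_left ?_ hT
  have hc : (0 : ℝ) ≤ Fintype.card (Lab d) ^ 2 * 2 ^ (d - 1) := by positivity
  rw [Nat.cast_sum, mul_sum]
  simp only [key]
  rw [← sum_mul, sum_comm, ← mul_assoc (#(cliques d) : ℝ)]
  refine mul_le_mul_of_nonneg_right ?_ hc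
  rw [← nsmul_eq_mul]
  exact sum_le_card_nsmul _ _ _ fun t ht => sum_levels_le _ ha (hfree t ht)

/-- The graph of all compatible pairs in distinct blocks. -/
def fullGraph (d : ℕ) : SimpleGraph (Cube d × Lab d) where
  Adj p p' := p.1 ≠ p'.1 ∧ Compat p p'
  symm := ⟨fun _ _ h => ⟨h.1.symm, h.2.symm⟩⟩
  loopless := ⟨fun _ h => h.1 rfl⟩

/-- All levels of the full graph have the same number of edges. -/
lemma sum_labCount_full (d : ℕ) :
    ∑ q : Fin d, labCount (fullGraph d) ((q : ℕ) + 1)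
      = d * (Fintype.card (Lab d) ^ 2 * 2 ^ (d - 1)) := by
  have hT := (cliques_nonempty d).card_pos
  have : ∀ q : Fin d, labCount (fullGraph d) ((q : ℕ) + 1)
      = Fintype.card (Lab d) ^ 2 * 2 ^ (d - 1) := by
    intro q
    have h := sum_cliques_levelCount q (fullGraph d) fun p p' h => h.2
    have h2 : ∀ t ∈ cliques d,
        levelCount ((fullGraph d).comap fun x => (x, t x)) ((q : ℕ) + 1)
          = tau d ((q : ℕ) + 1) := by
      intro t ht
      rw [← levelCount_top q]
      congr 1
      ext x y
      simp only [SimpleGraph.comap_adj, SimpleGraph.top_adj, fullGraph]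
      exact ⟨fun h => h.1, fun h => ⟨h, mem_cliques.1 ht x y⟩⟩
    rw [sum_congr rfl h2, sum_const, smul_eq_mul, mul_assoc] at h
    exact (Nat.eq_of_mul_eq_mul_left (Nat.mul_pos hT (by simp [tau])) h).symm
  rw [sum_congr rfl fun q _ => this q]
  simp

lemma sum_level_ite {d : ℕ} {x y : Cube d} (m : ℕ) :
    (∑ q : Fin d, if x < y ∧ atLevel ((q : ℕ) + 1) x y then m else 0) = if x < y then m else 0 := by
  split_ifs with h
  · obtain ⟨i, hi, hlt⟩ := cube_lt_iff.1 h
    rw [sum_eq_single i]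
    · rw [if_pos ⟨h, (atLevel_succ_iff i).2 ⟨hlt.ne, hi⟩⟩]
    · intro q _ hq
      rw [if_neg]
      rintro ⟨_, h2⟩
      rw [atLevel_succ_iff] at h2
      rcases lt_or_gt_of_ne hq with h3 | h3
      · exact h2.1 (hi q h3)
      · exact hlt.ne (h2.2 i h3)
    · simp
  · simp [h]

lemma pairCount_eq_labCount {d : ℕ} {W : Type*} [Fintype W] [LinearOrder W]
    (e : Cube d × Lab d ≃ W) (he : ∀ p p', p.1 < p'.1 → e p < e p') (G : SimpleGraph W)
    (hG : ∀ p p', G.Adj (e p) (e p') → p.1 ≠ p'.1) :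
    pairCount G.Adj = ∑ q : Fin d, labCount (G.comap e) ((q : ℕ) + 1) := by
  have hlt : ∀ p p', (e p < e p' ∧ G.Adj (e p) (e p')) ↔ (p.1 < p'.1 ∧ G.Adj (e p) (e p')) := by
    intro p p'
    refine and_congr_left fun h => ⟨fun h1 => ?_, he p p'⟩
    rcases lt_or_gt_of_ne (hG p p' h) with h2 | h2
    · exact h2
    · exact absurd (he p' p h2) h1.not_gt
  have h1 : ∑ q : Fin d, labCount (G.comap e) ((q : ℕ) + 1)
      = ∑ x : Cube d, ∑ y : Cube d, ∑ a : Lab d, ∑ b : Lab d,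
        if x < y ∧ G.Adj (e (x, a)) (e (y, b)) then 1 else 0 := by
    simp only [labCount, sum_filter]
    rw [sum_comm, Fintype.sum_prod_type]
    refine sum_congr rfl fun x _ => sum_congr rfl fun y _ => ?_
    rw [sum_level_ite, card_filter, Fintype.sum_prod_type]
    by_cases h : x < y <;> simp [h]
  rw [h1, pairCount, card_filter, ← Equiv.sum_comp (e.prodCongr e), Fintype.sum_prod_type,
    Fintype.sum_prod_type]
  refine sum_congr rfl fun x _ => ?_
  rw [sum_comm' (t' := univ) (s' := fun _ => univ) (by simp)]
  rw [Fintype.sum_prod_type]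
  refine sum_congr rfl fun y _ => ?_
  rw [sum_comm]
  refine sum_congr rfl fun a _ => sum_congr rfl fun b _ => ?_
  simp only [Equiv.prodCongr_apply, Prod.map_fst, Prod.map_snd, hlt]

/-! ### Central vertices and copies of graphs with isolated vertices -/

/-- The vertex `v` is central in `S` with respect to the blocks `bl` if, for every `u : α`, the
vertices of `S` in the block of `v` contain an increasing copy of `α` in which `v` plays the
role of `u`. -/
def Central (α : Type*) [LinearOrder α] {W X : Type*} [LinearOrder W] (S : Finset W)
    (bl : W → X) (v : W) : Prop :=
  ∀ u : α, ∃ g : α → W, StrictMono g ∧ g u = v ∧ ∀ w, g w ∈ S ∧ bl (g w) = bl v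

lemma exists_strictMono_mem (α : Type*) [Fintype α] [LinearOrder α] {W : Type*} [LinearOrder W]
    (A : Finset W) (h : Fintype.card α ≤ #A) : ∃ g : α → W, StrictMono g ∧ ∀ w, g w ∈ A :=
  ⟨fun w => A.orderEmbOfCardLe h ((Fintype.orderIsoFinOfCardEq α rfl).symm w),
    fun _ _ hw => (A.orderEmbOfCardLe h).strictMono
      ((Fintype.orderIsoFinOfCardEq α rfl).symm.strictMono hw),
    fun w => A.orderEmbOfCardLe_mem h _⟩

lemma central_of_card (α : Type*) [Fintype α] [LinearOrder α] {W X : Type*} [LinearOrder W]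
    (S : Finset W) (bl : W → X) {v : W} (hv : v ∈ S)
    (h1 : Fintype.card α ≤ #{w ∈ S | bl w = bl v ∧ w < v})
    (h2 : Fintype.card α ≤ #{w ∈ S | bl w = bl v ∧ v < w}) : Central α S bl v := by
  intro u
  obtain ⟨g1, hg1, hm1⟩ := exists_strictMono_mem α _ h1
  obtain ⟨g2, hg2, hm2⟩ := exists_strictMono_mem α _ h2
  simp only [mem_filter] at hm1 hm2
  refine ⟨fun w => if w < u then g1 w else if w = u then v else g2 w, ?_, by simp, ?_⟩
  · intro a b hab
    simp only
    rcases lt_trichotomy a u with ha | ha | ha <;> rcases lt_trichotomy b u with hb | hb | hb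
    · simpa [ha, hb] using hg1 hab
    · simpa [ha, hb] using (hm1 a).2.2
    · simpa [ha, hb.not_gt, hb.ne'] using (hm1 a).2.2.trans (hm2 b).2.2
    · exact absurd hab (by rw [ha]; exact hb.not_gt)
    · exact absurd hab (by rw [ha, hb]; exact lt_irrefl _)
    · simpa [ha, hb.not_gt, hb.ne'] using (hm2 b).2.2
    · exact absurd (hab.trans hb) ha.not_gt
    · exact absurd hab (by rw [hb]; exact ha.not_gt)
    · simpa [ha.not_gt, ha.ne', hb.not_gt, hb.ne'] using hg2 hab
  · intro w
    simp only
    split_ifs with ha hb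
    · exact ⟨(hm1 w).1, (hm1 w).2.1⟩
    · exact ⟨hv, rfl⟩
    · exact ⟨(hm2 w).1, (hm2 w).2.1⟩

/-- At most `k` members of a block have fewer than `k` members of the block below them. -/
lemma card_few_below {W : Type*} [LinearOrder W] (Q : Finset W) (k : ℕ) :
    #{v ∈ Q | #{w ∈ Q | w < v} < k} ≤ k := by
  calc _ ≤ #(range k) := by
        refine card_le_card_of_injOn (fun v => #{w ∈ Q | w < v}) ?_ ?_
        · intro v hv
          simpa using (mem_filter.1 hv).2
        · have : ∀ v ∈ Q, ∀ v', v < v' → #{w ∈ Q | w < v} < #{w ∈ Q | w < v'} := by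
            intro v hv v' h
            refine card_lt_card ⟨fun w hw => ?_, fun h' => ?_⟩
            · simp only [mem_filter] at hw ⊢
              exact ⟨hw.1, hw.2.trans h⟩
            · have := @h' v (by simp [hv, h])
              simp at this
          intro v hv v' hv' h
          have hv := (mem_filter.1 hv).1
          have hv' := (mem_filter.1 hv').1
          rcases lt_trichotomy v v' with h1 | h1 | h1
          · exact absurd h (this v hv v' h1).ne
          · exact h1
          · exact absurd h (this v' hv' v h1).ne'
    _ = k := card_range k

lemma card_few_above {W : Type*} [LinearOrder W] (Q : Finset W) (k : ℕ) :
    #{v ∈ Q | #{w ∈ Q | v < w} < k} ≤ k :=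
  card_few_below (W := Wᵒᵈ) Q k

lemma card_not_central (α : Type*) [Fintype α] [LinearOrder α] {W X : Type*} [LinearOrder W]
    [Fintype X] (S : Finset W) (bl : W → X) :
    #{v ∈ S | ¬ Central α S bl v} ≤ Fintype.card X * (2 * Fintype.card α) := by
  have := card_le_mul_card_image_of_maps_to (f := bl) (s := {v ∈ S | ¬ Central α S bl v})
    (t := univ) (fun _ _ => mem_univ _) (2 * Fintype.card α) ?_
  · rwa [card_univ, mul_comm] at this
  intro x _
  set Q : Finset W := {w ∈ S | bl w = x}
  have hsub : ({v ∈ S | ¬ Central α S bl v} : Finset W).filter (fun v => bl v = x)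
      ⊆ {v ∈ Q | #{w ∈ Q | w < v} < Fintype.card α} ∪
        {v ∈ Q | #{w ∈ Q | v < w} < Fintype.card α} := by
    intro v hv
    simp only [mem_filter] at hv
    obtain ⟨⟨hvS, hc⟩, rfl⟩ := hv
    simp only [mem_union, mem_filter, Q, hvS, true_and]
    by_contra! h
    refine hc (central_of_card α S bl hvS ?_ ?_)
    · simpa only [filter_filter] using h.1
    · simpa only [filter_filter] using h.2
  calc _ ≤ _ := card_le_card hsub
    _ ≤ _ := card_union_le _ _
    _ ≤ Fintype.card α + Fintype.card α := add_le_add (card_few_below Q _) (card_few_above Q _)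
    _ = _ := by ring

/-- The graph formed by the edges of `G'` between central vertices. -/
def centralGraph (α : Type*) [LinearOrder α] {W X : Type*} [LinearOrder W] (S : Finset W)
    (bl : W → X) (G' : SimpleGraph W) : SimpleGraph W where
  Adj v w := G'.Adj v w ∧ Central α S bl v ∧ Central α S bl w
  symm := ⟨fun _ _ h => ⟨h.1.symm, h.2.2, h.2.1⟩⟩
  loopless := ⟨fun _ h => h.1.ne rfl⟩

/-- Passing to the edges between central vertices loses few edges. -/
lemma pairCount_centralGraph (α : Type*) [Fintype α] [LinearOrder α] {W X : Type*}
    [Fintype W] [LinearOrder W] [Fintype X] (S : Finset W) (bl : W → X) (G' : SimpleGraph W)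
    (hS : ∀ v w, G'.Adj v w → v ∈ S) :
    pairCount G'.Adj ≤ pairCount (centralGraph α S bl G').Adj
      + Fintype.card X * (4 * Fintype.card α) * Fintype.card W := by
  set N : Finset W := {v ∈ S | ¬ Central α S bl v}
  have hsub : ({p : W × W | p.1 < p.2 ∧ G'.Adj p.1 p.2} : Finset _)
      ⊆ ({p : W × W | p.1 < p.2 ∧ (centralGraph α S bl G').Adj p.1 p.2} : Finset _)
        ∪ (N ×ˢ univ ∪ univ ×ˢ N) := by
    rintro ⟨v, w⟩ h
    simp only [mem_filter, mem_univ, true_and, mem_union, mem_product, and_true, N] at h ⊢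
    have h1 := hS v w h.2
    have h2 := hS w v h.2.symm
    simp only [centralGraph, h, h1, h2, true_and]
    tauto
  have hN := card_not_central α S bl
  have hW := card_union_le (N ×ˢ univ) ((univ : Finset W) ×ˢ N)
  rw [card_product, card_product, card_univ] at hW
  have h1 := (card_le_card hsub).trans (card_union_le _ _)
  have h2 : #N * Fintype.card W ≤ Fintype.card X * (2 * Fintype.card α) * Fintype.card W :=
    Nat.mul_le_mul_right _ hN
  simp only [pairCount]
  nlinarith

/-- A monotone retraction onto a nonempty subset of a finite linear order. -/
lemma exists_retraction {α : Type*} [Fintype α] [LinearOrder α] (S : Finset α)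
    (hS : S.Nonempty) : ∃ p : α → α, Monotone p ∧ (∀ v, p v ∈ S) ∧ ∀ u ∈ S, p u = u := by
  set m := S.min' hS
  have hne : ∀ v, ({u ∈ S | u ≤ max m v} : Finset α).Nonempty := fun v =>
    ⟨m, mem_filter.2 ⟨S.min'_mem hS, le_max_left _ _⟩⟩
  refine ⟨fun v => ({u ∈ S | u ≤ max m v} : Finset α).max' (hne v), ?_, ?_, ?_⟩
  · intro v w hvw
    refine max'_subset _ fun u hu => ?_
    simp only [mem_filter] at hu ⊢
    exact ⟨hu.1, hu.2.trans (max_le_max_left _ hvw)⟩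
  · exact fun v => (mem_filter.1 (max'_mem _ (hne v))).1
  · intro u hu
    refine le_antisymm (max'_le _ _ _ fun w hw => ?_) (le_max' _ _ ?_)
    · have := (mem_filter.1 hw).2
      rwa [max_eq_right (S.min'_le u hu)] at this
    · exact mem_filter.2 ⟨hu, le_max_right _ _⟩

/-- Let `ι` choose one vertex in each block. A copy of `F` on chosen vertices whose edges are edges
of `G'` between central vertices yields a copy of `F` in `G'` with all vertices in `S`: the isolated vertices of `F` are placed in the blocks of
the nearest non-isolated ones. -/
lemma copy_of_central {α : Type*} [Fintype α] [LinearOrder α] (F : SimpleGraph α) {u₀ v₀ : α}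
    (h₀ : F.Adj u₀ v₀) {W X : Type*} [LinearOrder W] [LinearOrder X] (S : Finset W) (bl : W → X)
    (hbl : ∀ v w, bl v < bl w → v < w) (G' : SimpleGraph W) (ι : X → W) (hι : ∀ x, bl (ι x) = x)
    (h : ContainsOrderedCopy F ((centralGraph α S bl G').comap ι)) :
    ∃ φ : α → W, StrictMono φ ∧ (∀ u, φ u ∈ S) ∧ ∀ u v, F.Adj u v → G'.Adj (φ u) (φ v) := by
  obtain ⟨ψ, hψ, hadj⟩ := h
  obtain ⟨p, hp, hpS, hfix⟩ := exists_retraction ({u | ∃ v, F.Adj u v} : Finset α)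
    ⟨u₀, by simp only [mem_filter, mem_univ, true_and]; exact ⟨v₀, h₀⟩⟩
  have hc : ∀ v, Central α S bl (ι (ψ (p v))) := by
    intro v
    have := hpS v
    simp only [mem_filter, mem_univ, true_and] at this
    obtain ⟨w, hw⟩ := this
    exact (hadj _ _ hw).2.1
  have hg : ∀ x, ∃ g : α → W, (∃ v, p v = x) → StrictMono g ∧ g x = ι (ψ x) ∧
      ∀ w, g w ∈ S ∧ bl (g w) = ψ x := by
    intro x
    by_cases hx : ∃ v, p v = x
    · obtain ⟨v, rfl⟩ := hx
      obtain ⟨g, h1, h2, h3⟩ := hc v (p v)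
      exact ⟨g, fun _ => ⟨h1, h2, fun w => ⟨(h3 w).1, by rw [(h3 w).2, hι]⟩⟩⟩
    · exact ⟨fun _ => ι (ψ x), fun h => absurd h hx⟩
  choose g hg using hg
  have hφ : ∀ u v, F.Adj u v → g (p u) u = ι (ψ u) := by
    intro u v huv
    have : p u = u := hfix u (by simp only [mem_filter, mem_univ, true_and]; exact ⟨v, huv⟩)
    have h2 := (hg (p u) ⟨u, rfl⟩).2.1
    rwa [this] at h2 ⊢
  refine ⟨fun v => g (p v) v, ?_, fun v => ((hg _ ⟨v, rfl⟩).2.2 v).1, ?_⟩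
  · intro v w hvw
    rcases (hp hvw.le).eq_or_lt with h | h
    · simp only
      rw [h]
      exact (hg _ ⟨w, rfl⟩).1 hvw
    · refine hbl _ _ ?_
      rw [((hg _ ⟨v, rfl⟩).2.2 v).2, ((hg _ ⟨w, rfl⟩).2.2 w).2]
      exact hψ h
  · intro u v huv
    simp only
    rw [hφ u v huv, hφ v u huv.symm]
    exact (hadj u v huv).1

/-! ### The upper bound -/

/-- The vertices of the labelled cube can be numbered block by block. -/
lemma exists_numbering (d : ℕ) :
    ∃ (n : ℕ) (e : Cube d × Lab d ≃ Fin n), ∀ p p', p.1 < p'.1 → e p < e p' := by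
  refine ⟨_, (Equiv.prodCongr (Fintype.orderIsoFinOfCardEq (Cube d) rfl).symm.toEquiv
    (Fintype.equivFin (Lab d))).trans finProdFinEquiv, ?_⟩
  rintro ⟨x, a⟩ ⟨y, b⟩ hxy
  have hxy : (Fintype.orderIsoFinOfCardEq (Cube d) rfl).symm x
    < (Fintype.orderIsoFinOfCardEq (Cube d) rfl).symm y := OrderIso.strictMono _ hxy
  simp only [Equiv.trans_apply, Equiv.prodCongr_apply, Prod.map_apply]
  rw [Fin.lt_def, finProdFinEquiv_apply_val, finProdFinEquiv_apply_val]
  have h1 : ((Fintype.orderIsoFinOfCardEq (Cube d) rfl).symm x : ℕ) + 1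
    ≤ (Fintype.orderIsoFinOfCardEq (Cube d) rfl).symm y := hxy
  have h2 := Nat.mul_le_mul_left (Fintype.card (Lab d)) h1
  have h3 := (Fintype.equivFin (Lab d) a).2
  have h4 : ∀ z, (RelIso.toEquiv (Fintype.orderIsoFinOfCardEq (Cube d) rfl).symm) z
    = (Fintype.orderIsoFinOfCardEq (Cube d) rfl).symm z := fun _ => rfl
  simp only [h4]
  rw [Nat.mul_add] at h2
  omega

lemma card_cube (d : ℕ) : Fintype.card (Cube d) = 2 ^ d := by
  rw [Fintype.card_congr (ofLex : Lex (Fin d → Bool) ≃ (Fin d → Bool))]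
  simp

lemma two_pow_le_card_lab (d : ℕ) : 2 ^ d ≤ Fintype.card (Lab d) := by
  rw [Fintype.card_fun, ZMod.card, Fintype.card_prod, card_cube, Fintype.card_fin]
  exact Nat.pow_le_pow_right (by norm_num) (Nat.le_mul_of_pos_left _ (by positivity))

/-- The full graph on the labelled cube, numbered block by block, as a host graph for `F`: the term
`C / d` comes from the rich levels of the graphs induced on cliques, the term in `card α` from the
edges at vertices that are not central. -/
lemma host_bound {α : Type*} [Fintype α] [LinearOrder α] (F : SimpleGraph α) {u₀ v₀ : α}
    (h₀ : F.Adj u₀ v₀) {a : ℝ} (ha : 0 ≤ a) {C : ℕ}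
    (hrich : ∀ (d : ℕ) (H : SimpleGraph (Cube d)), IsRichGraph H a C → ContainsOrderedCopy F H)
    {d : ℕ} (hd : 0 < d) :
    ∃ (n : ℕ) (G : SimpleGraph (Fin n)), 1 ≤ edgeCount G ∧
      relTuranDensityIn F G ≤ a + (C + 8 * Fintype.card α) / d := by
  obtain ⟨n, e, he⟩ := exists_numbering d
  set bl : Fin n → Cube d := fun v => (e.symm v).1 with hbl
  have hbl' : ∀ v w, bl v < bl w → v < w := fun v w h => by simpa using he _ _ h
  set R : SimpleGraph (Fin n) := (fullGraph d).comap e.symm with hR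
  set M := Fintype.card (Lab d) with hM
  have hRe : R.comap e = fullGraph d := by
    ext p p'
    simp [hR]
  have hRadj : ∀ p p', R.Adj (e p) (e p') → p.1 ≠ p'.1 ∧ Compat p p' := by
    intro p p' h
    have : (R.comap e).Adj p p' := h
    rw [hRe] at this
    exact this
  have heR : pairCount R.Adj = d * (M ^ 2 * 2 ^ (d - 1)) := by
    rw [pairCount_eq_labCount e he R fun p p' h => (hRadj p p' h).1, hRe, sum_labCount_full]
  have hMpos : 0 < M := Fintype.card_pos
  have hpos : 0 < pairCount R.Adj := by rw [heR]; positivity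
  have hn : n = 2 ^ d * M := by
    have := Fintype.card_congr e
    rw [Fintype.card_prod, card_cube, Fintype.card_fin] at this
    exact this.symm
  refine ⟨n, R, by rw [edgeCount_eq]; exact hpos, ?_⟩
  have hd' : (0 : ℝ) < d := by exact_mod_cast hd
  refine Real.sSup_le ?_ (by positivity)
  rintro r ⟨G', hfree, rfl⟩
  rw [edgeCount_coe, edgeCount_eq, div_le_iff₀ (by exact_mod_cast hpos)]
  set S : Finset (Fin n) := {v | v ∈ G'.verts} with hS
  set K := centralGraph α S bl G'.spanningCoe with hKdef
  have hKadj : ∀ p p', K.Adj (e p) (e p') → p.1 ≠ p'.1 ∧ Compat p p' := fun p p' h =>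
    hRadj p p' (G'.adj_sub h.1)
  -- a copy of `F` in a graph induced on a clique gives a copy of `F` in `G'`
  have hcl : ∀ t ∈ cliques d, ¬ IsRichGraph ((K.comap e).comap fun x => (x, t x)) a C := by
    intro t _ ht
    have hcopy : ContainsOrderedCopy F (K.comap fun x => e (x, t x)) := hrich d _ ht
    obtain ⟨φ, hφ, hmem, hadj⟩ := copy_of_central F h₀ S bl hbl' G'.spanningCoe
      (fun x => e (x, t x)) (fun x => by simp [hbl]) hcopy
    refine hfree ⟨fun u => ⟨φ u, by simpa [hS] using hmem u⟩, fun u v h => hφ h, ?_⟩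
    intro u v h
    exact hadj u v h
  have h1 := sum_labCount_le (K.comap e) (fun p p' h => (hKadj p p' h).2) ha hcl
  rw [← pairCount_eq_labCount e he K fun p p' h => (hKadj p p' h).1] at h1
  have h2 := pairCount_centralGraph α S bl G'.spanningCoe fun v w h => by
    simp only [hS, mem_filter, mem_univ, true_and]
    exact G'.edge_vert h
  rw [card_cube, Fintype.card_fin] at h2
  have h2' : (pairCount G'.Adj : ℝ) ≤ pairCount K.Adj
      + 2 ^ d * (4 * Fintype.card α) * (2 ^ d * M) := by
    have hn' : (2 : ℝ) ^ d * M = n := by exact_mod_cast hn.symm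
    rw [hn']
    exact_mod_cast h2
  have h3 : (2 : ℝ) ^ d * (4 * Fintype.card α) * (2 ^ d * M)
      ≤ 8 * Fintype.card α * (M ^ 2 * 2 ^ (d - 1)) := by
    have e1 : (2 : ℝ) ^ d = 2 * 2 ^ (d - 1) := by
      rw [← pow_succ']; congr 1; omega
    have e2 : (2 : ℝ) ^ d ≤ M := by exact_mod_cast two_pow_le_card_lab d
    calc (2 : ℝ) ^ d * (4 * Fintype.card α) * (2 ^ d * M)
        = (8 * Fintype.card α * 2 ^ (d - 1) * M) * 2 ^ d := by rw [e1]; ring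
      _ ≤ (8 * Fintype.card α * 2 ^ (d - 1) * M) * M :=
        mul_le_mul_of_nonneg_left e2 (by positivity)
      _ = _ := by ring
  rw [heR]
  push_cast
  calc (pairCount G'.Adj : ℝ)
      ≤ (C + a * d) * (M ^ 2 * 2 ^ (d - 1)) + 8 * Fintype.card α * (M ^ 2 * 2 ^ (d - 1)) := by
        linarith
    _ = (a + (C + 8 * Fintype.card α) / d) * (d * (M ^ 2 * 2 ^ (d - 1))) := by
        field_simp
        ring

lemma relTuranDensityIn_nonneg {α β : Type*} [Preorder α] [Preorder β] (F : SimpleGraph α)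
    (G : SimpleGraph β) : 0 ≤ relTuranDensityIn F G :=
  Real.sSup_nonneg (by rintro r ⟨G', _, rfl⟩; positivity)

lemma relTuranDensity_le {α : Type*} [Preorder α] (F : SimpleGraph α) {n : ℕ}
    {G : SimpleGraph (Fin n)} (hG : 1 ≤ edgeCount G) :
    relTuranDensity F ≤ relTuranDensityIn F G :=
  csInf_le ⟨0, by rintro r ⟨n, G, _, rfl⟩; exact relTuranDensityIn_nonneg F G⟩ ⟨n, G, hG, rfl⟩

lemma le_of_forall_div {x a b : ℝ} (h : ∀ d : ℕ, 0 < d → x ≤ a + b / d) : x ≤ a := by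
  have : Filter.Tendsto (fun d : ℕ => a + b / d) Filter.atTop (nhds (a + 0)) :=
    tendsto_const_nhds.add (tendsto_const_div_atTop_nhds_zero_nat b)
  rw [add_zero] at this
  exact ge_of_tendsto this (Filter.eventually_atTop.2 ⟨1, h⟩)

lemma le_pairCount_top (d : ℕ) :
    d ≤ pairCount (⊤ : SimpleGraph (Fin (d + 1))).Adj := by
  calc d = #(univ : Finset (Fin d)) := by simp
    _ ≤ _ := by
      refine card_le_card_of_injOn (fun i => (0, i.succ)) ?_ ?_
      · intro i _
        simp [(Fin.succ_ne_zero i).symm]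
      · intro i _ j _ h
        simpa using h

/-- An edgeless graph is contained in every graph with enough vertices. -/
lemma relTuranDensity_edgeless {α : Type*} [Fintype α] [LinearOrder α] (F : SimpleGraph α)
    (hF : ∀ u v, ¬ F.Adj u v) : relTuranDensity F ≤ 0 := by
  refine le_of_forall_div (b := (Fintype.card α : ℝ) ^ 2) fun d hd => ?_
  have hd' : (0 : ℝ) < d := by exact_mod_cast hd
  have hle := le_pairCount_top d
  have hle' : (d : ℝ) ≤ pairCount (⊤ : SimpleGraph (Fin (d + 1))).Adj := by exact_mod_cast hle
  refine (relTuranDensity_le F (G := (⊤ : SimpleGraph (Fin (d + 1)))) ?_).trans ?_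
  · rw [edgeCount_eq]; omega
  refine Real.sSup_le ?_ (by positivity)
  rintro r ⟨G', hfree, rfl⟩
  rw [edgeCount_coe, edgeCount_eq, zero_add]
  set S : Finset (Fin (d + 1)) := {v | v ∈ G'.verts} with hS
  have hcard : #S ≤ Fintype.card α := by
    by_contra! h
    obtain ⟨g, hg, hm⟩ := exists_strictMono_mem α S h.le
    exact hfree ⟨fun u => ⟨g u, by simpa [hS] using hm u⟩, fun _ _ h => hg h,
      fun u v h => absurd h (hF u v)⟩
  have h1 : pairCount G'.Adj ≤ Fintype.card α ^ 2 := by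
    calc pairCount G'.Adj ≤ #(S ×ˢ S) := by
          refine card_le_card fun p hp => ?_
          simp only [mem_filter, mem_univ, true_and, mem_product, hS] at hp ⊢
          exact ⟨G'.edge_vert hp.2, G'.edge_vert hp.2.symm⟩
      _ = #S ^ 2 := by rw [card_product, sq]
      _ ≤ _ := Nat.pow_le_pow_left hcard 2
  exact div_le_div₀ (by positivity) (by exact_mod_cast h1) hd' hle'

end RhoRich

/-- For every ordered graph `F`,
`ρ_<(F) = inf {α ∈ [0,1] : ∃ C, every (α,C)-rich graph contains an ordered copy of F}`. -/
theorem rho_eq_inf_rich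
    {α : Type*} [Fintype α] [LinearOrder α] (F : SimpleGraph α) :
    relTuranDensity F =
      sInf {a : ℝ | a ∈ Set.Icc (0 : ℝ) 1 ∧ ∃ C : ℕ, ∀ (d : ℕ) (G : SimpleGraph (Cube d)),
        IsRichGraph G a (C : ℝ) → ContainsOrderedCopy F G} := by
  set A := {a : ℝ | a ∈ Set.Icc (0 : ℝ) 1 ∧ ∃ C : ℕ, ∀ (d : ℕ) (G : SimpleGraph (Cube d)),
    IsRichGraph G a (C : ℝ) → ContainsOrderedCopy F G} with hA
  have hbdd : BddBelow A := ⟨0, fun a h => h.1.1⟩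
  -- the set `A` turns out to be nonempty for `F` with an edge, but `sInf ∅ = 0` suffices here
  have hA1 : sInf A ≤ 1 := by
    rcases A.eq_empty_or_nonempty with h | ⟨a, h⟩
    · rw [h, Real.sInf_empty]; exact zero_le_one
    · exact (csInf_le hbdd h).trans h.1.2
  refine le_antisymm ?_ ?_
  · by_cases hF : ∃ u v, F.Adj u v
    · obtain ⟨u, v, huv⟩ := hF
      obtain ⟨C, hC⟩ := RhoRich.one_rich F huv
      refine le_csInf ⟨1, ⟨zero_le_one, le_rfl⟩, C, hC⟩ ?_
      rintro a ⟨⟨ha, _⟩, C, hC⟩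
      refine RhoRich.le_of_forall_div (b := C + 8 * Fintype.card α) fun d hd => ?_
      obtain ⟨n, G, hG, h⟩ := RhoRich.host_bound F huv ha hC hd
      exact (RhoRich.relTuranDensity_le F hG).trans h
    · exact (RhoRich.relTuranDensity_edgeless F fun u v h => hF ⟨u, v, h⟩).trans
        (Real.sInf_nonneg fun a h => h.1.1)
  · refine le_csInf ⟨_, 2, ⊤, ?_, rfl⟩ ?_
    · rw [RhoRich.edgeCount_eq]
      exact RhoRich.le_pairCount_top 1
    · rintro r ⟨n, G, hG, rfl⟩
      refine le_of_forall_gt_imp_ge_of_dense fun a ha => ?_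
      rcases le_or_gt a 1 with h | h
      · exact csInf_le hbdd ⟨⟨(RhoRich.relTuranDensityIn_nonneg F G).trans ha.le, h⟩,
          RhoRich.rich_of_relTuranDensityIn F G hG a ha⟩
      · exact hA1.trans h.le
end
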